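/- arXiv:1903.09357 — 8 statements merged into one kernel-verified Lean document; each statement's English description precedes it below -/
import Mathlib

section
/- Let ℓ, k ≥ 1 and let a_1,…,a_ℓ, n_1,…,n_ℓ, c_1,…,c_k be positive integers such that gcd(a_i, a_j) = 1 for all i ≠ j and for each i ∈ {1,…,ℓ} there exists r ∈ {1,…,k} with gcd(a_i, c_r n_i) = 1. Set α = lcm(a_1,…,a_ℓ), m_i = n_i α / a_i for i = 1,…,ℓ, and β = m_1 + ⋯ + m_ℓ. Then gcd(α, c_1 β, c_2 β, …, c_k β) = 1. -/
/-!
A number is coprime to `α` exactly when it is coprime to each `a i`. As the `a i` are pairwise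
coprime, `α = ∏ a i` and `β = ∑ n j * ∏_{l ≠ j} a l`. Modulo `a i`, every summand of `β` except the
`i`-th vanishes, and in that one `n i` is multiplied by a unit, so `a i` is coprime to `β` exactly
when it is coprime to `n i`.
-/

section

variable {ι : Type*} {s : Finset ι} {a : ι → ℕ}

theorem coprime_lcm_left_iff {m : ℕ} : (s.lcm a).Coprime m ↔ ∀ i ∈ s, (a i).Coprime m :=
  ⟨fun h _ hi => h.of_dvd_left (Finset.dvd_lcm hi),
    fun h => (Nat.Coprime.prod_left h).of_dvd_left (Finset.lcm_dvd_prod s a)⟩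

variable [DecidableEq ι] {i : ι}

theorem mul_lcm_div_eq_mul_prod_erase (hcop : (s : Set ι).Pairwise (Nat.Coprime.onFun a))
    (hi : i ∈ s) (hai : 0 < a i) (m : ℕ) :
    m * s.lcm a / a i = m * ∏ j ∈ s.erase i, a j := by
  rw [Finset.lcm_eq_prod hcop, ← Finset.prod_erase_mul s a hi, ← mul_assoc,
    Nat.mul_div_cancel _ hai]

theorem coprime_prod_erase (hcop : (s : Set ι).Pairwise (Nat.Coprime.onFun a)) (hi : i ∈ s) :
    (a i).Coprime (∏ j ∈ s.erase i, a j) :=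
  Nat.Coprime.prod_right fun _ hj =>
    hcop hi (Finset.mem_of_mem_erase hj) (Finset.ne_of_mem_erase hj).symm

theorem sum_mul_prod_erase_modEq (n : ι → ℕ) (hi : i ∈ s) :
    ∑ j ∈ s, n j * ∏ l ∈ s.erase j, a l ≡ n i * ∏ l ∈ s.erase i, a l [MOD a i] := by
  have other_terms : a i ∣ ∑ j ∈ s.erase i, n j * ∏ l ∈ s.erase j, a l :=
    Finset.dvd_sum fun j hj => Dvd.dvd.mul_left
      (Finset.dvd_prod_of_mem a (Finset.mem_erase.2 ⟨(Finset.ne_of_mem_erase hj).symm, hi⟩)) _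
  rw [← Finset.add_sum_erase s _ hi]
  simpa only [add_zero] using (Nat.modEq_zero_iff_dvd.2 other_terms).add_left _

theorem coprime_sum_mul_prod_erase_iff (hcop : (s : Set ι).Pairwise (Nat.Coprime.onFun a))
    (n : ι → ℕ) (hi : i ∈ s) :
    (a i).Coprime (∑ j ∈ s, n j * ∏ l ∈ s.erase j, a l) ↔ (a i).Coprime (n i) := by
  rw [Nat.coprime_comm, Nat.Coprime, (sum_mul_prod_erase_modEq n hi).gcd_eq, ← Nat.Coprime,
    Nat.coprime_comm, Nat.coprime_mul_iff_right, and_iff_left (coprime_prod_erase hcop hi)]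

end

theorem stmt1_general {ι κ : Type*} (s : Finset ι) (t : Finset κ) (a n : ι → ℕ) (c : κ → ℕ)
    (ha : ∀ i ∈ s, 0 < a i) (hcop : (s : Set ι).Pairwise (Nat.Coprime.onFun a)) :
    (s.lcm a).Coprime (t.gcd fun r => c r * ∑ i ∈ s, n i * s.lcm a / a i) ↔
      ∀ i ∈ s, (a i).Coprime (t.gcd fun r => c r * n i) := by
  classical
  have sum_eq : ∑ i ∈ s, n i * s.lcm a / a i = ∑ i ∈ s, n i * ∏ j ∈ s.erase i, a j :=
    Finset.sum_congr rfl fun i hi => mul_lcm_div_eq_mul_prod_erase hcop hi (ha i hi) (n i)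
  rw [coprime_lcm_left_iff, sum_eq]
  refine forall₂_congr fun i hi => ?_
  simp only [Finset.gcd_mul_right, normalize_eq, Nat.coprime_mul_iff_right,
    coprime_sum_mul_prod_erase_iff hcop n hi]

/-- If the Type II_k weight matrix is faithful, then
`gcd(α, c_1 β, …, c_k β) = 1`, where `α = lcm(a_1,…,a_ℓ)`, `m_i = n_i α / a_i`,
`β = m_1 + ⋯ + m_ℓ`. -/
theorem stmt1 (ℓ k : ℕ) (hℓ : 1 ≤ ℓ) (hk : 1 ≤ k)
    (a n : Fin ℓ → ℕ) (c : Fin k → ℕ)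
    (ha : ∀ i, 0 < a i) (hn : ∀ i, 0 < n i) (hc : ∀ r, 0 < c r)
    (hF1 : ∀ i j, i ≠ j → Nat.gcd (a i) (a j) = 1)
    (hF2 : ∀ i, ∃ r, Nat.gcd (a i) (c r * n i) = 1) :
    Nat.gcd (Finset.univ.lcm a)
      (Finset.univ.gcd fun r : Fin k =>
        c r * ∑ i, n i * Finset.univ.lcm a / a i) = 1 := by
  refine (stmt1_general _ _ a n c (fun i _ => ha i) fun i _ j _ => hF1 i j).2 fun i _ => ?_
  exact (hF2 i).elim fun r => Nat.Coprime.of_dvd_right (Finset.gcd_dvd (Finset.mem_univ r))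
end

section
/- The linear map φ : ℂ^{k+1} → ℂ^{ℓ+k} defined by (φz)_i = √(m_i/β)·z_1 for i = 1,…,ℓ and (φz)_{ℓ+r} = z_{1+r} for r = 1,…,k preserves the standard symplectic form, i.e. Im⟨φz, φz′⟩ = Im⟨z, z′⟩ for all z, z′ (where ⟨x, y⟩ = Σ_j x_j·conj(y_j) is the standard hermitian inner product), and φ maps the shell Z_B into the shell Z_A: if −α|z_1|² + β·Σ_{r=1}^k c_r|z_{1+r}|² = 0, then −a_i|(φz)_i|² + n_i·Σ_{r=1}^k c_r|(φz)_{ℓ+r}|² = 0 for every i = 1,…,ℓ. -/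
open Complex ComplexConjugate

/-- The embedding `φ : ℂ^{k+1} → ℂ^{ℓ+k}`, with `ℂ^{k+1}` represented as
`ℂ × (Fin k → ℂ)` (first coordinate `z_1`) and `ℂ^{ℓ+k}` as
`(Fin ℓ → ℂ) × (Fin k → ℂ)`. -/
noncomputable def phiMap (ℓ k : ℕ) (m : Fin ℓ → ℕ) (β : ℕ)
    (z : ℂ × (Fin k → ℂ)) : (Fin ℓ → ℂ) × (Fin k → ℂ) :=
  (fun i => (Real.sqrt ((m i : ℝ) / (β : ℝ)) : ℂ) * z.1, z.2)

/-! Splitting a complex coordinate `z` into the coordinates `√wᵢ z` with `∑ wᵢ = 1` leaves the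
hermitian form unchanged, since `∑ |√wᵢ|² = 1`. On the shell `α |z|² = β S`, the `i`-th new
coordinate satisfies `aᵢ |√wᵢ z|² = aᵢ wᵢ |z|²`, which is `nᵢ S` as soon as `aᵢ wᵢ β = nᵢ α`.
For `wᵢ = mᵢ / β` this balance is `aᵢ mᵢ = nᵢ α`, that is, the definition of `mᵢ`. -/

section LcmMultiples

variable {ι : Type*} {s : Finset ι} {a : ι → ℕ} {i : ι}

theorem mul_mul_lcm_div_cancel (hi : i ∈ s) (b : ℕ) :
    a i * (b * s.lcm a / a i) = b * s.lcm a :=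
  Nat.mul_div_cancel' ((Finset.dvd_lcm hi).mul_left b)

theorem mul_lcm_div_pos (ha : ∀ j ∈ s, 0 < a j) (hi : i ∈ s) {b : ℕ} (hb : 0 < b) :
    0 < b * s.lcm a / a i := by
  have hlcm : s.lcm a ≠ 0 := Finset.lcm_ne_zero_iff.mpr fun j hj => (ha j hj).ne'
  refine Nat.pos_of_mul_pos_left (a := a i) ?_
  rw [mul_mul_lcm_div_cancel hi]
  exact Nat.mul_pos hb (Nat.pos_of_ne_zero hlcm)

end LcmMultiples

theorem sqrt_mul_mul_conj_sqrt_mul {t : ℝ} (ht : 0 ≤ t) (x y : ℂ) :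
    (√t * x) * conj (√t * y) = t * (x * conj y) := by
  rw [map_mul, conj_ofReal, mul_mul_mul_comm, ← ofReal_mul, Real.mul_self_sqrt ht]

theorem normSq_sqrt_mul {t : ℝ} (ht : 0 ≤ t) (x : ℂ) : normSq (√t * x) = t * normSq x := by
  rw [normSq_mul, normSq_ofReal, Real.mul_self_sqrt ht]

section SqrtWeightEmbedding

variable {ι κ : Type*}

/-- The linear map `ℂ × ℂ^κ → ℂ^ι × ℂ^κ` replacing the first coordinate `z` by the vector
`(√wᵢ z)ᵢ`. The map `phiMap` is the case `wᵢ = mᵢ / β`. -/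
noncomputable def sqrtWeightEmbedding (κ : Type*) (w : ι → ℝ) :
    ℂ × (κ → ℂ) →ₗ[ℂ] (ι → ℂ) × (κ → ℂ) :=
  (LinearMap.pi fun i => LinearMap.mulLeft ℂ (√(w i) : ℂ)).prodMap LinearMap.id

/-- The shell `Z_A` of a Type II weight matrix: the common zeros of the quadratic functions
`-aᵢ |uᵢ|² + nᵢ ∑ᵣ cᵣ |uᵣ|²`, with real data and the two groups of coordinates kept in separate
factors. -/
def multiRowShell [Fintype κ] (a n : ι → ℝ) (c : κ → ℝ) : Set ((ι → ℂ) × (κ → ℂ)) :=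
  {u | ∀ i, -a i * normSq (u.1 i) + n i * ∑ r, c r * normSq (u.2 r) = 0}

/-- The shell `Z_B` of the one-row weight matrix with data `α`, `β`, `c`. -/
def oneRowShell [Fintype κ] (α β : ℝ) (c : κ → ℝ) : Set (ℂ × (κ → ℂ)) :=
  {z | -α * normSq z.1 + β * ∑ r, c r * normSq (z.2 r) = 0}

theorem hermitian_sqrtWeightEmbedding [Fintype ι] [Fintype κ] {w : ι → ℝ} (hw : ∀ i, 0 ≤ w i)
    (hsum : ∑ i, w i = 1) (z z' : ℂ × (κ → ℂ)) :
    ∑ i, (sqrtWeightEmbedding κ w z).1 i * conj ((sqrtWeightEmbedding κ w z').1 i)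
        + ∑ r, (sqrtWeightEmbedding κ w z).2 r * conj ((sqrtWeightEmbedding κ w z').2 r)
      = z.1 * conj z'.1 + ∑ r, z.2 r * conj (z'.2 r) := by
  congr 1
  calc ∑ i, (√(w i) * z.1) * conj (√(w i) * z'.1)
      = ∑ i, (w i : ℂ) * (z.1 * conj z'.1) :=
        Finset.sum_congr rfl fun i _ => sqrt_mul_mul_conj_sqrt_mul (hw i) z.1 z'.1
    _ = ((∑ i, w i : ℝ) : ℂ) * (z.1 * conj z'.1) := by rw [← Finset.sum_mul, ofReal_sum]
    _ = z.1 * conj z'.1 := by rw [hsum, ofReal_one, one_mul]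

theorem mapsTo_sqrtWeightEmbedding [Fintype κ] {w a n : ι → ℝ} {α β : ℝ}
    (hw : ∀ i, 0 ≤ w i) (hβ : β ≠ 0) (hbalance : ∀ i, a i * (w i * β) = n i * α) (c : κ → ℝ) :
    Set.MapsTo (sqrtWeightEmbedding κ w) (oneRowShell α β c) (multiRowShell a n c) := by
  intro z (hz : -α * normSq z.1 + β * ∑ r, c r * normSq (z.2 r) = 0) i
  change -a i * normSq (√(w i) * z.1) + n i * ∑ r, c r * normSq (z.2 r) = 0
  rw [normSq_sqrt_mul (hw i)]
  refine (mul_eq_zero.mp ?_).resolve_left hβ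
  linear_combination n i * hz - normSq z.1 * hbalance i

end SqrtWeightEmbedding

theorem stmt2_general {ι κ : Type*} [Fintype ι] [Fintype κ] {a n m : ι → ℝ} {α β : ℝ}
    (hm : ∀ i, 0 ≤ m i) (hbalance : ∀ i, a i * m i = n i * α)
    (hβ : β = ∑ i, m i) (hβ_pos : 0 < β) (c : κ → ℝ) :
    let φ := sqrtWeightEmbedding κ fun i => m i / β
    (∀ z z', ∑ i, (φ z).1 i * conj ((φ z').1 i) + ∑ r, (φ z).2 r * conj ((φ z').2 r)
        = z.1 * conj z'.1 + ∑ r, z.2 r * conj (z'.2 r))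
      ∧ Set.MapsTo φ (oneRowShell α β c) (multiRowShell a n c) := by
  have hw : ∀ i, 0 ≤ m i / β := fun i => div_nonneg (hm i) hβ_pos.le
  have hsum : ∑ i, m i / β = 1 := by rw [← Finset.sum_div, ← hβ, div_self hβ_pos.ne']
  refine ⟨hermitian_sqrtWeightEmbedding hw hsum, mapsTo_sqrtWeightEmbedding hw hβ_pos.ne' ?_ c⟩
  intro i
  rw [div_mul_cancel₀ _ hβ_pos.ne', hbalance i]

/-- `φ` preserves the imaginary part of the hermitian inner product and
maps the shell `Z_B` into the shell `Z_A`. -/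
theorem stmt2 (ℓ k : ℕ) (hℓ : 1 ≤ ℓ) (hk : 1 ≤ k)
    (a n : Fin ℓ → ℕ) (c : Fin k → ℕ)
    (ha : ∀ i, 0 < a i) (hn : ∀ i, 0 < n i) (hc : ∀ r, 0 < c r) :
    let α : ℕ := Finset.univ.lcm a
    let m : Fin ℓ → ℕ := fun i => n i * α / a i
    let β : ℕ := ∑ i, m i
    -- φ preserves the standard symplectic form Im⟨·,·⟩
    (∀ z z' : ℂ × (Fin k → ℂ),
        (∑ i, (phiMap ℓ k m β z).1 i * conj ((phiMap ℓ k m β z').1 i)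
          + ∑ r, (phiMap ℓ k m β z).2 r * conj ((phiMap ℓ k m β z').2 r)).im
        = (z.1 * conj z'.1 + ∑ r, z.2 r * conj (z'.2 r)).im)
    ∧
    -- φ maps the shell Z_B into the shell Z_A
    (∀ z : ℂ × (Fin k → ℂ),
        -(α : ℝ) * normSq z.1 + (β : ℝ) * ∑ r, (c r : ℝ) * normSq (z.2 r) = 0 →
        ∀ i, -(a i : ℝ) * normSq ((phiMap ℓ k m β z).1 i)
          + (n i : ℝ) * ∑ r, (c r : ℝ) * normSq ((phiMap ℓ k m β z).2 r) = 0) := by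
  intro α m β
  have hbalance : ∀ i, (a i : ℝ) * m i = n i * α := fun i =>
    mod_cast mul_mul_lcm_div_cancel (Finset.mem_univ i) (n i)
  have hβ_pos : 0 < β :=
    Finset.sum_pos (fun i hi => mul_lcm_div_pos (fun j _ => ha j) hi (hn i))
      ⟨⟨0, hℓ⟩, Finset.mem_univ _⟩
  obtain ⟨hermitian, shells⟩ := stmt2_general (fun i => Nat.cast_nonneg (m i)) hbalance
    (Nat.cast_sum _ m) (Nat.cast_pos.mpr hβ_pos) fun r => (c r : ℝ)
  exact ⟨fun z z' => congrArg im (hermitian z z'), fun _ hz => shells hz⟩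
end

section
/- For every t ∈ ℂ with |t| = 1 and every z ∈ ℂ^{k+1}, the map φ intertwines the two circle actions: φ(t·z) = (t^{α/a_1}, t^{α/a_2}, …, t^{α/a_ℓ})·φ(z), where t·z denotes the T^1-action (t·z)_1 = t^{−α} z_1, (t·z)_{1+r} = t^{c_r β} z_{1+r}, and the right-hand side uses the T^ℓ-action on ℂ^{ℓ+k} with weight matrix A. In particular φ maps T^1-orbits into T^ℓ-orbits. -/
open Complex

/-!
Along the one-parameter subgroup `t ↦ (t ^ d i)ᵢ` with `d i * a i = α`, each weight `-a i` pulls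
back to the same weight `-α`, and the weight vector `c r • n` pulls back to
`c r * ∑ i, n i * d i`. Since the first block of `φ z` consists of multiples of the single
coordinate `z.1`, it is the equality of the first `ℓ` pulled-back weights that lets `φ` intertwine
the actions.
-/

theorem pow_zpow_neg_natCast {G : Type*} [DivisionMonoid G] (t : G) (d a : ℕ) :
    (t ^ d) ^ (-(a : ℤ)) = t ^ (-((d * a : ℕ) : ℤ)) := by
  rw [zpow_neg, zpow_neg, zpow_natCast, zpow_natCast, pow_mul]

theorem prod_pow_pow_mul_eq_pow_mul_sum {ι M : Type*} [CommMonoid M] (s : Finset ι) (t : M)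
    (d n : ι → ℕ) (c : ℕ) :
    ∏ i ∈ s, (t ^ d i) ^ (c * n i) = t ^ (c * ∑ i ∈ s, n i * d i) :=
  calc
    ∏ i ∈ s, (t ^ d i) ^ (c * n i) = ∏ i ∈ s, t ^ (c * (n i * d i)) :=
      Finset.prod_congr rfl fun i _ => by rw [← pow_mul, mul_left_comm, mul_comm (d i)]
    _ = t ^ (c * ∑ i ∈ s, n i * d i) := by
      rw [Finset.prod_pow_eq_pow_sum, Finset.mul_sum]

theorem phiMap_mul (ℓ k : ℕ) (m : Fin ℓ → ℕ) (β : ℕ) (w z : ℂ × (Fin k → ℂ)) :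
    phiMap ℓ k m β (w * z) = (Function.const (Fin ℓ) w.1, w.2) * phiMap ℓ k m β z :=
  Prod.ext (funext fun _ => mul_left_comm _ _ _) rfl

theorem stmt6_general (ℓ k : ℕ) (a n d m : Fin ℓ → ℕ) (c : Fin k → ℕ) (α : ℕ)
    (hd : ∀ i, d i * a i = α) (hm : ∀ i, m i = n i * d i) (t : ℂˣ) (z : ℂ × (Fin k → ℂ)) :
    let β : ℕ := ∑ i, m i
    phiMap ℓ k m β ((t : ℂ) ^ (-(α : ℤ)) * z.1, fun r => (t : ℂ) ^ (c r * β) * z.2 r)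
      = (fun i => ((t : ℂ) ^ d i) ^ (-(a i : ℤ)) * (phiMap ℓ k m β z).1 i,
         fun r => (∏ i, ((t : ℂ) ^ d i) ^ (c r * n i)) * (phiMap ℓ k m β z).2 r) := by
  intro β
  have first_weights (i : Fin ℓ) : ((t : ℂ) ^ d i) ^ (-(a i : ℤ)) = (t : ℂ) ^ (-(α : ℤ)) := by
    rw [pow_zpow_neg_natCast, hd]
  have last_weights (r : Fin k) :
      ∏ i, ((t : ℂ) ^ d i) ^ (c r * n i) = (t : ℂ) ^ (c r * β) := by
    simp only [β, hm, prod_pow_pow_mul_eq_pow_mul_sum]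
  simp only [first_weights, last_weights]
  exact phiMap_mul ℓ k m β ((t : ℂ) ^ (-(α : ℤ)), fun r => (t : ℂ) ^ (c r * β)) z

/-- for `t` in the unit circle, `φ(t·z) = (t^{α/a_1},…,t^{α/a_ℓ})·φ(z)`,
where `t·z` is the `T¹`-action `(t^{-α} z_1, t^{c_r β} z_{1+r})` and the right-hand side
is the `T^ℓ`-action on `ℂ^{ℓ+k}` with weight matrix `A`. -/
theorem stmt6 (ℓ k : ℕ) (hℓ : 1 ≤ ℓ) (hk : 1 ≤ k)
    (a n : Fin ℓ → ℕ) (c : Fin k → ℕ)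
    (ha : ∀ i, 0 < a i) (hn : ∀ i, 0 < n i) (hc : ∀ r, 0 < c r) :
    let α : ℕ := Finset.univ.lcm a
    let m : Fin ℓ → ℕ := fun i => n i * α / a i
    let β : ℕ := ∑ i, m i
    ∀ t : ℂ, ‖t‖ = 1 → ∀ z : ℂ × (Fin k → ℂ),
      phiMap ℓ k m β (t ^ (-(α : ℤ)) * z.1, fun r => t ^ (c r * β) * z.2 r)
        = (fun i => (t ^ (α / a i)) ^ (-(a i : ℤ)) * (phiMap ℓ k m β z).1 i,
           fun r => (∏ i, (t ^ (α / a i)) ^ (c r * n i)) * (phiMap ℓ k m β z).2 r) := by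
  intro α m _ t ht z
  have hα (i : Fin ℓ) : a i ∣ α := Finset.dvd_lcm (Finset.mem_univ i)
  have ht₀ : t ≠ 0 := norm_ne_zero_iff.mp (ht ▸ one_ne_zero)
  exact stmt6_general ℓ k a n (fun i => α / a i) m c α (fun i => Nat.div_mul_cancel (hα i))
    (fun i => Nat.mul_div_assoc (n i) (hα i)) (Units.mk0 t ht₀) z
end

section
/- Assume the faithfulness condition (F). Let P_A = ℂ[u_1,…,u_{ℓ+k}, v_1,…,v_{ℓ+k}] and P_B = ℂ[z_1,…,z_{k+1}, w_1,…,w_{k+1}]. Let φ* : P_A → P_B be the ℂ-algebra homomorphism determined by u_i ↦ √(m_i/β)·z_1 and v_i ↦ √(m_i/β)·w_1 for i = 1,…,ℓ, and u_{ℓ+r} ↦ z_{1+r}, v_{ℓ+r} ↦ w_{1+r} for r = 1,…,k. Then: (a) φ* maps (ℂ^×)^ℓ-invariant polynomials to ℂ^×-invariant polynomials; (b) φ* maps each moment polynomial J_{A,i} = −a_i u_i v_i + n_i Σ_{r=1}^k c_r u_{ℓ+r} v_{ℓ+r} to the scalar multiple (n_i/β)·J_B of J_B = −α z_1 w_1 +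 β Σ_{r=1}^k c_r z_{1+r} w_{1+r}; and (c) the induced ℂ-algebra homomorphism from P_A^{inv}/(J_{A,1},…,J_{A,ℓ}) to P_B^{inv}/(J_B) (quotients of the invariant subalgebras by the ideals generated there by the moment polynomials) is a degree-preserving isomorphism of graded ℂ-algebras. -/
/-
The torus acts on each monomial by a character, so the invariants are spanned by the monomials of
weight `0`. Modulo `J_{A,i}` every product `u_i v_i` can be traded for the products
`u_{ℓ+r} v_{ℓ+r}` without changing weight or degree, so the invariants modulo the moment polynomials
are spanned by the standard monomials: the invariant monomials divisible by no `u_i v_i` with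
`i ≤ ℓ`. The same holds for `P_B` with `z_1 w_1` in place of the `u_i v_i`, and there the standard
monomials are also independent, since a nonzero multiple of `J_B` always contains a monomial
divisible by `z_1 w_1`.

Up to nonzero scalars `φ*` maps the standard monomials of `P_A` bijectively to those of `P_B`.
Indeed, for an invariant monomial let `L` be the sum of `c_r (deg u_{ℓ+r} - deg v_{ℓ+r})`.
Invariance means `α (deg u_i - deg v_i) = m_i L` for all `i`; summing gives `α ∣ β L`, and `α` and
`β` are coprime by (F), so `L = α h`. Then `deg u_i - deg v_i = m_i h`, and in a standard monomial
`u_i` or `v_i` is absent, so `h` determines both degrees. In `P_B` the degrees of `z_1` and `w_1`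
are determined by `h` in the same way, with `β` in place of `m_i`.
-/

open Complex MvPolynomial

/-- The polynomial ring `P_A = ℂ[u, v]` with `u, v` each indexed by `Fin ℓ ⊕ Fin k`
(the left summand of the variable type is `u`, the right is `v`). -/
abbrev PA (ℓ k : ℕ) := MvPolynomial ((Fin ℓ ⊕ Fin k) ⊕ (Fin ℓ ⊕ Fin k)) ℂ

/-- The polynomial ring `P_B = ℂ[z, w]` with `z, w` each indexed by `Unit ⊕ Fin k`
(`Sum.inl ()` is the first coordinate `z_1` resp. `w_1`). -/
abbrev PB (k : ℕ) := MvPolynomial ((Unit ⊕ Fin k) ⊕ (Unit ⊕ Fin k)) ℂ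

/-- The substitution action of `t ∈ (ℂ^×)^ℓ` on `P_A`:
`u_i ↦ t_i^{-a_i} u_i`, `v_i ↦ t_i^{a_i} v_i`,
`u_{ℓ+r} ↦ (∏_i t_i^{c_r n_i}) u_{ℓ+r}`, `v_{ℓ+r} ↦ (∏_i t_i^{c_r n_i})⁻¹ v_{ℓ+r}`. -/
noncomputable def actPA (ℓ k : ℕ) (a n : Fin ℓ → ℕ) (c : Fin k → ℕ)
    (t : Fin ℓ → ℂ) : PA ℓ k →ₐ[ℂ] PA ℓ k :=
  aeval fun x => match x with
    | Sum.inl (Sum.inl i) => C (t i ^ (-(a i : ℤ))) * X (Sum.inl (Sum.inl i))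
    | Sum.inl (Sum.inr r) => C (∏ i, t i ^ (c r * n i)) * X (Sum.inl (Sum.inr r))
    | Sum.inr (Sum.inl i) => C (t i ^ (a i : ℤ)) * X (Sum.inr (Sum.inl i))
    | Sum.inr (Sum.inr r) => C ((∏ i, t i ^ (c r * n i))⁻¹) * X (Sum.inr (Sum.inr r))

/-- The substitution action of `t ∈ ℂ^×` on `P_B`:
`z_1 ↦ t^{-α} z_1`, `w_1 ↦ t^{α} w_1`, `z_{1+r} ↦ t^{c_r β} z_{1+r}`,
`w_{1+r} ↦ t^{-c_r β} w_{1+r}`. -/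
noncomputable def actPB (k : ℕ) (α β : ℕ) (c : Fin k → ℕ) (t : ℂ) :
    PB k →ₐ[ℂ] PB k :=
  aeval fun x => match x with
    | Sum.inl (Sum.inl _) => C (t ^ (-(α : ℤ))) * X (Sum.inl (Sum.inl ()))
    | Sum.inl (Sum.inr r) => C (t ^ ((c r * β : ℕ) : ℤ)) * X (Sum.inl (Sum.inr r))
    | Sum.inr (Sum.inl _) => C (t ^ ((α : ℕ) : ℤ)) * X (Sum.inr (Sum.inl ()))
    | Sum.inr (Sum.inr r) => C (t ^ (-((c r * β : ℕ) : ℤ))) * X (Sum.inr (Sum.inr r))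

/-- The subalgebra of `(ℂ^×)^ℓ`-invariant polynomials in `P_A`. -/
noncomputable def invPA (ℓ k : ℕ) (a n : Fin ℓ → ℕ) (c : Fin k → ℕ) :
    Subalgebra ℂ (PA ℓ k) where
  carrier := {f | ∀ t : Fin ℓ → ℂ, (∀ i, t i ≠ 0) → actPA ℓ k a n c t f = f}
  mul_mem' hf hg t ht := by rw [map_mul, hf t ht, hg t ht]
  add_mem' hf hg t ht := by rw [map_add, hf t ht, hg t ht]
  one_mem' t ht := map_one _
  zero_mem' t ht := map_zero _
  algebraMap_mem' r t ht := (actPA ℓ k a n c t).commutes r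

/-- The subalgebra of `ℂ^×`-invariant polynomials in `P_B`. -/
noncomputable def invPB (k : ℕ) (α β : ℕ) (c : Fin k → ℕ) :
    Subalgebra ℂ (PB k) where
  carrier := {f | ∀ t : ℂ, t ≠ 0 → actPB k α β c t f = f}
  mul_mem' hf hg t ht := by rw [map_mul, hf t ht, hg t ht]
  add_mem' hf hg t ht := by rw [map_add, hf t ht, hg t ht]
  one_mem' t ht := map_one _
  zero_mem' t ht := map_zero _
  algebraMap_mem' r t ht := (actPB k α β c t).commutes r

/-- The pullback `φ* : P_A → P_B` of the embedding `φ`: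
`u_i ↦ √(m_i/β) z_1`, `v_i ↦ √(m_i/β) w_1`, `u_{ℓ+r} ↦ z_{1+r}`, `v_{ℓ+r} ↦ w_{1+r}`. -/
noncomputable def phiStar (ℓ k : ℕ) (m : Fin ℓ → ℕ) (β : ℕ) :
    PA ℓ k →ₐ[ℂ] PB k :=
  aeval fun x => match x with
    | Sum.inl (Sum.inl i) =>
        C ((Real.sqrt ((m i : ℝ) / (β : ℝ)) : ℝ) : ℂ) * X (Sum.inl (Sum.inl ()))
    | Sum.inl (Sum.inr r) => X (Sum.inl (Sum.inr r))
    | Sum.inr (Sum.inl i) =>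
        C ((Real.sqrt ((m i : ℝ) / (β : ℝ)) : ℝ) : ℂ) * X (Sum.inr (Sum.inl ()))
    | Sum.inr (Sum.inr r) => X (Sum.inr (Sum.inr r))

/-- The moment map components `J_{A,i} = -a_i u_i v_i + n_i Σ_r c_r u_{ℓ+r} v_{ℓ+r}`. -/
noncomputable def JA (ℓ k : ℕ) (a n : Fin ℓ → ℕ) (c : Fin k → ℕ) (i : Fin ℓ) :
    PA ℓ k :=
  -(C ((a i : ℂ)) * X (Sum.inl (Sum.inl i)) * X (Sum.inr (Sum.inl i)))
    + C ((n i : ℂ)) * ∑ r, C ((c r : ℂ)) * X (Sum.inl (Sum.inr r)) * X (Sum.inr (Sum.inr r))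

/-- The moment polynomial `J_B = -α z_1 w_1 + β Σ_r c_r z_{1+r} w_{1+r}`. -/
noncomputable def JB (k : ℕ) (α β : ℕ) (c : Fin k → ℕ) : PB k :=
  -(C ((α : ℂ)) * X (Sum.inl (Sum.inl ())) * X (Sum.inr (Sum.inl ())))
    + C ((β : ℂ)) * ∑ r, C ((c r : ℂ)) * X (Sum.inl (Sum.inr r)) * X (Sum.inr (Sum.inr r))

/-- The ideal of `P_A^{inv}` generated by the moment map components. -/
noncomputable def idealA (ℓ k : ℕ) (a n : Fin ℓ → ℕ) (c : Fin k → ℕ) :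
    Ideal (invPA ℓ k a n c) :=
  Ideal.span {f : invPA ℓ k a n c | ∃ i, (f : PA ℓ k) = JA ℓ k a n c i}

/-- The ideal of `P_B^{inv}` generated by the moment polynomial. -/
noncomputable def idealB (k : ℕ) (α β : ℕ) (c : Fin k → ℕ) :
    Ideal (invPB k α β c) :=
  Ideal.span {f : invPB k α β c | (f : PB k) = JB k α β c}

section ScaledRename

variable {σ τ R K : Type*} [CommSemiring R] [Field K]

/-- The monomial substitution `X x ↦ s x • X (p x)`: renaming variables along `p` while rescaling
them by `s`. Both the torus actions and `φ*` are of this form. -/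
noncomputable def scaledRename (p : σ → τ) (s : σ → R) : MvPolynomial σ R →ₐ[R] MvPolynomial τ R :=
  aeval fun x => C (s x) * X (p x)

theorem scaledRename_monomial (p : σ → τ) (s : σ → R) (e : σ →₀ ℕ) (b : R) :
    scaledRename p s (monomial e b) =
      monomial (e.mapDomain p) ((e.prod fun x k => s x ^ k) * b) := by
  have h_rename : (e.prod fun x k => (X (p x) : MvPolynomial τ R) ^ k) =
      monomial (e.mapDomain p) 1 := by
    rw [monomial_eq, C_1, one_mul, Finsupp.prod_mapDomain_index (fun _ => pow_zero _)
      (fun _ _ _ => pow_add _ _ _)]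
  rw [scaledRename, aeval_monomial]
  simp only [mul_pow, Finsupp.prod_mul, h_rename, algebraMap_eq, ← map_pow]
  rw [← map_finsuppProd C, C_mul_monomial, C_mul_monomial, mul_one, mul_comm b]

theorem coeff_mapDomain_scaledRename {p : σ → τ} (s : σ → R) {S : Set (σ →₀ ℕ)}
    (hp : S.InjOn (Finsupp.mapDomain p)) {f : MvPolynomial σ R} (hf : f ∈ restrictSupport R S)
    {e : σ →₀ ℕ} (he : e ∈ S) :
    coeff (e.mapDomain p) (scaledRename p s f) = (e.prod fun x k => s x ^ k) * coeff e f := by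
  classical
  conv_lhs => rw [f.as_sum, map_sum, coeff_sum]
  simp only [scaledRename_monomial, coeff_monomial]
  rw [Finset.sum_eq_single e, if_pos rfl]
  · exact fun e' he' hne => if_neg fun h => hne (hp ((mem_restrictSupport_iff _).1 hf he') he h)
  · intro h
    rw [if_pos rfl, notMem_support_iff.1 h, mul_zero]

theorem prod_pow_ne_zero {s : σ → K} (hs : ∀ x, s x ≠ 0) (e : σ →₀ ℕ) :
    (e.prod fun x k => s x ^ k) ≠ 0 :=
  Finset.prod_ne_zero_iff.2 fun x _ => pow_ne_zero _ (hs x)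

theorem eq_zero_of_scaledRename_eq_zero {p : σ → τ} {s : σ → K} (hs : ∀ x, s x ≠ 0)
    {S : Set (σ →₀ ℕ)} (hp : S.InjOn (Finsupp.mapDomain p)) {f : MvPolynomial σ K}
    (hf : f ∈ restrictSupport K S) (h0 : scaledRename p s f = 0) : f = 0 := by
  ext e
  by_cases he : e ∈ f.support
  · refine (mul_eq_zero.1 ?_).resolve_left (prod_pow_ne_zero hs e)
    rw [← coeff_mapDomain_scaledRename s hp hf ((mem_restrictSupport_iff _).1 hf he), h0,
      coeff_zero]
  · exact notMem_support_iff.1 he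

theorem map_scaledRename_restrictSupport (p : σ → τ) {s : σ → K} (hs : ∀ x, s x ≠ 0)
    (S : Set (σ →₀ ℕ)) :
    (restrictSupport K S).map (scaledRename p s).toLinearMap =
      restrictSupport K (Finsupp.mapDomain p '' S) := by
  refine le_antisymm ?_ ?_
  · rw [restrictSupport_eq_span, Submodule.map_span, Submodule.span_le]
    rintro _ ⟨_, ⟨e, he, rfl⟩, rfl⟩
    rw [AlgHom.toLinearMap_apply, scaledRename_monomial]
    exact (monomial_mem_restrictSupport _).2 (.inl (Set.mem_image_of_mem _ he))
  · rw [restrictSupport_eq_span K (_ '' S), Submodule.span_le]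
    rintro _ ⟨_, ⟨e, he, rfl⟩, rfl⟩
    refine ⟨monomial e (e.prod fun x k => s x ^ k)⁻¹,
      (monomial_mem_restrictSupport _).2 (.inl he), ?_⟩
    rw [AlgHom.toLinearMap_apply, scaledRename_monomial, mul_inv_cancel₀ (prod_pow_ne_zero hs e)]

theorem scaledRename_id_eq_self_iff (s : σ → K) (f : MvPolynomial σ K) :
    scaledRename id s f = f ↔ ∀ e ∈ f.support, (e.prod fun x k => s x ^ k) = 1 := by
  have h_coeff (e : σ →₀ ℕ) :
      coeff e (scaledRename id s f) = (e.prod fun x k => s x ^ k) * coeff e f := by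
    simpa only [Finsupp.mapDomain_id] using coeff_mapDomain_scaledRename s (S := Set.univ) (e := e)
      (Finsupp.mapDomain_injective Function.injective_id).injOn
      ((mem_restrictSupport_iff _).2 (Set.subset_univ _)) trivial
  rw [MvPolynomial.ext_iff]
  refine forall_congr' fun e => ?_
  rw [h_coeff, mem_support_iff, mul_left_eq_self₀, or_comm, or_iff_not_imp_left]

end ScaledRename

section TorusInvariants

variable {σ τ K : Type*} [Fintype τ] [Field K]

theorem prod_zpow_weight {t : τ → K} (ht : ∀ i, t i ≠ 0) (w : σ → τ → ℤ) (e : σ →₀ ℕ) :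
    (e.prod fun x k => (∏ i, t i ^ w x i) ^ k) = ∏ i, t i ^ Finsupp.weight w e i := by
  induction e using Finsupp.induction_linear with
  | zero => simp
  | add e e' he he' =>
    rw [Finsupp.prod_add_index' (fun _ => pow_zero _) (fun _ _ _ => pow_add _ _ _), he, he',
      map_add, ← Finset.prod_mul_distrib]
    exact Finset.prod_congr rfl fun i _ => (zpow_add₀ (ht i) _ _).symm
  | single x k =>
    simp [Finsupp.weight_single, ← Finset.prod_pow, mul_comm, zpow_mul]

theorem forall_scaledRename_eq_self_iff [CharZero K] (w : σ → τ → ℤ) (f : MvPolynomial σ K) :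
    (∀ t : τ → K, (∀ i, t i ≠ 0) → scaledRename id (fun x => ∏ i, t i ^ w x i) f = f) ↔
      IsWeightedHomogeneous w f 0 := by
  classical
  have h_iff (t : τ → K) (ht : ∀ i, t i ≠ 0) : scaledRename id (fun x => ∏ i, t i ^ w x i) f = f ↔
      ∀ e ∈ f.support, ∏ i, t i ^ Finsupp.weight w e i = 1 := by
    simp only [scaledRename_id_eq_self_iff, prod_zpow_weight ht]
  constructor
  · intro h e he
    funext i
    have h_ne (j : τ) : Function.update (1 : τ → K) i 2 j ≠ 0 := by
      by_cases hj : j = i <;> simp [hj]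
    have h_two : (2 : K) ^ Finsupp.weight w e i = 1 := by
      have := (h_iff _ h_ne).1 (h _ h_ne) e (mem_support_iff.2 he)
      rwa [Finset.prod_eq_single i (fun j _ hj => by simp [hj]) (by simp),
        Function.update_self] at this
    have h_two_rat : (2 : ℚ) ^ Finsupp.weight w e i = 1 :=
      (Rat.castHom K).injective (by simpa using h_two)
    exact (zpow_eq_one_iff_right₀ zero_le_two (by norm_num)).1 h_two_rat
  · intro h t ht
    rw [h_iff t ht]
    intro e he
    simp only [h (mem_support_iff.1 he), Pi.zero_apply, zpow_zero, Finset.prod_const_one]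

end TorusInvariants

section Contraction

variable {ι R A : Type*} [CommSemiring R] [CommRing A] [Algebra R A] [DecidableEq ι]
  [AddCommMonoid ι]

/- Multiplication by elements of degree `0` commutes with the projection `A → 𝒜 0`, so projecting
the coefficients of a combination of elements of `T` does not change its value. -/
theorem mem_span_preimage_iff_of_mem_gradeZero (𝒜 : ι → Submodule R A) [GradedAlgebra 𝒜]
    (S : Subalgebra R A) (hS : ∀ x, x ∈ S ↔ x ∈ 𝒜 0) {T : Set A} (hT : ∀ x ∈ T, x ∈ 𝒜 0) (f : S) :
    f ∈ Ideal.span {x : S | (x : A) ∈ T} ↔ (f : A) ∈ Ideal.span T := by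
  constructor
  · intro hf
    have h_map := Ideal.mem_map_of_mem S.val hf
    rw [Ideal.map_span] at h_map
    exact Ideal.span_mono (Set.image_preimage_subset _ T) h_map
  · intro hf
    let proj (x : A) : S := ⟨DirectSum.decompose 𝒜 x 0, (hS _).2 (SetLike.coe_mem _)⟩
    have h_proj (x : A) (hx : x ∈ Ideal.span T) : proj x ∈ Ideal.span {x : S | (x : A) ∈ T} := by
      induction hx using Submodule.closure_induction with
      | zero =>
        have h_zero : proj 0 = 0 := Subtype.ext (by simp [proj])
        exact h_zero ▸ zero_mem _
      | add x y _ _ hx hy =>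
        have h_add : proj (x + y) = proj x + proj y := Subtype.ext (by simp [proj])
        exact h_add ▸ add_mem hx hy
      | smul_mem r x hx =>
        let x' : S := ⟨x, (hS x).2 (hT x hx)⟩
        have h_mul : proj (r * x) = proj r * x' :=
          Subtype.ext (DirectSum.coe_decompose_mul_of_right_mem_zero 𝒜 (hT x hx))
        exact h_mul ▸ Ideal.mul_mem_left _ _ (Ideal.subset_span (show (x' : A) ∈ T from hx))
    have h_self : proj f = f :=
      Subtype.ext (DirectSum.decompose_of_mem_same 𝒜 ((hS f).1 f.2))
    exact h_self ▸ h_proj f hf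

end Contraction

/-- The index type of the variables `u` (left summand) and `v` (right summand), each consisting of a
family over `ι` and a family over `κ`. -/
abbrev PairIndex (ι κ : Type*) := (ι ⊕ κ) ⊕ (ι ⊕ κ)

section Weights

variable {ι κ : Type*} (a n : ι → ℕ) (c : κ → ℕ)

open scoped Classical in
/-- The weights `-a_i`, `c_r n_i` of the torus `(K^×)^ι` on the variables `u`, with the opposite
weights on the variables `v`. -/
noncomputable def torusWeight : PairIndex ι κ → ι → ℤ :=
  let ω : ι ⊕ κ → ι → ℤ := Sum.elim (fun i => -Pi.single i (a i : ℤ)) fun r i => c r * n i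
  Sum.elim ω (-ω)

/-- The contribution `∑ r, c_r (deg u_r - deg v_r)` of the `κ`-variables to the weight of a
monomial; the `i`-th weight involves these variables only through `n_i` times this integer. -/
def level [Fintype κ] (e : PairIndex ι κ →₀ ℕ) : ℤ :=
  ∑ r, (c r : ℤ) * (e (.inl (.inr r)) - e (.inr (.inr r)))

theorem weight_torusWeight [Fintype κ] (e : PairIndex ι κ →₀ ℕ)
    (i : ι) : Finsupp.weight (torusWeight a n c) e i =
      a i * ((e (.inr (.inl i)) : ℤ) - e (.inl (.inl i))) + n i * level c e := by
  classical
  induction e using Finsupp.induction_linear with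
  | zero => simp [level]
  | add e e' he he' =>
    have h_level : level c (e + e') = level c e + level c e' := by
      simp only [level, ← Finset.sum_add_distrib, Finsupp.add_apply, Nat.cast_add]
      exact Finset.sum_congr rfl fun r _ => by ring
    rw [map_add, Pi.add_apply, he, he', h_level]
    simp only [Finsupp.add_apply, Nat.cast_add]
    ring
  | single x k =>
    rcases x with (j | r) | (j | r)
    case' inl.inl | inr.inl => rcases eq_or_ne j i with rfl | hj
    all_goals simp_all [Finsupp.weight_single, torusWeight, level, Finsupp.single_apply, mul_comm,
      mul_left_comm, Pi.single_eq_of_ne']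

/-- The exponent of the monomial `u_j v_j`. -/
noncomputable def pairExponent (j : ι ⊕ κ) : PairIndex ι κ →₀ ℕ :=
  Finsupp.single (.inl j) 1 + Finsupp.single (.inr j) 1

theorem weight_pairExponent (j : ι ⊕ κ) :
    Finsupp.weight (torusWeight a n c) (pairExponent j) = 0 := by
  simp [pairExponent, Finsupp.weight_single, torusWeight]

theorem degree_pairExponent (j : ι ⊕ κ) : (pairExponent j).degree = 2 := by
  rw [pairExponent, map_add, Finsupp.degree_single, Finsupp.degree_single]

theorem pairExponent_le_iff {j : ι ⊕ κ} {e : PairIndex ι κ →₀ ℕ} :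
    pairExponent j ≤ e ↔ e (.inl j) ≠ 0 ∧ e (.inr j) ≠ 0 := by
  classical
  constructor
  · intro h
    have h_inl := h (.inl j)
    have h_inr := h (.inr j)
    simp [pairExponent] at h_inl h_inr
    omega
  · rintro ⟨h_inl, h_inr⟩ (x | x) <;> by_cases hx : j = x <;>
      simp_all [pairExponent, Nat.one_le_iff_ne_zero]

end Weights

section Reduction

variable {ι κ : Type*} (K : Type*) [Field K] (a n : ι → ℕ) (c : κ → ℕ) [Fintype κ]

/-- The moment polynomial `-a_i u_i v_i + n_i ∑ r, c_r u_r v_r`; it is `J_{A,i}`, and it is `J_B`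
when `ι` has a single element. -/
noncomputable def momentPoly (i : ι) : MvPolynomial (PairIndex ι κ) K :=
  -(C (a i : K) * X (.inl (.inl i)) * X (.inr (.inl i)))
    + C (n i : K) * ∑ r, C (c r : K) * X (.inl (.inr r)) * X (.inr (.inr r))

/-- The ideal generated by the moment polynomials in the full polynomial ring. -/
noncomputable def momentIdeal : Ideal (MvPolynomial (PairIndex ι κ) K) :=
  Ideal.span (Set.range (momentPoly K a n c))

/-- The exponents of the monomials divisible by no `u_i v_i` with `i : ι`. -/
def reducedExponents (ι κ : Type*) : Set (PairIndex ι κ →₀ ℕ) :=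
  {e | ∀ i : ι, e (.inl (.inl i)) = 0 ∨ e (.inr (.inl i)) = 0}

theorem momentPoly_eq_sum_monomial (i : ι) :
    momentPoly K a n c i = -monomial (pairExponent (.inl i)) (a i : K) +
      ∑ r, monomial (pairExponent (.inr r)) (n i * c r : K) := by
  have h_pair (j : ι ⊕ κ) (b : K) :
      C b * X (.inl j) * X (.inr j) = monomial (pairExponent j) b := by
    rw [pairExponent, mul_assoc, X, X, monomial_mul, C_mul_monomial, mul_one, mul_one]
  simp only [momentPoly, Finset.mul_sum, h_pair, C_mul_monomial]

theorem isWeightedHomogeneous_momentPoly (i : ι) :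
    IsWeightedHomogeneous (torusWeight a n c) (momentPoly K a n c i) 0 := by
  rw [momentPoly_eq_sum_monomial]
  have h_pair (j : ι ⊕ κ) (b : K) : monomial (pairExponent j) b ∈
      weightedHomogeneousSubmodule K (torusWeight a n c) 0 :=
    isWeightedHomogeneous_monomial _ _ _ (weight_pairExponent a n c j)
  exact add_mem (neg_mem (h_pair _ _)) (sum_mem fun r _ => h_pair _ _)

variable {K a} [CharZero K] [Finite ι]

theorem restrictSupport_le_sup_momentIdeal (ha : ∀ i, 0 < a i) {S : Set (PairIndex ι κ →₀ ℕ)}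
    (hS : ∀ e (i : ι) (r : κ), pairExponent (.inl i) + e ∈ S → pairExponent (.inr r) + e ∈ S) :
    restrictSupport K S ≤ restrictSupport K (S ∩ reducedExponents ι κ) ⊔
      (momentIdeal K a n c).restrictScalars K := by
  have := Fintype.ofFinite ι
  set M := restrictSupport K (S ∩ reducedExponents ι κ) ⊔
    (momentIdeal K a n c).restrictScalars K
  rw [restrictSupport_eq_span, Submodule.span_le]
  rintro _ ⟨e, he, rfl⟩
  induction h_deg : ∑ i : ι, e (.inl (.inl i)) using Nat.strong_induction_on generalizing e with
  | _ N ih =>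
  by_cases h_red : e ∈ reducedExponents ι κ
  · exact Submodule.mem_sup_left ((monomial_mem_restrictSupport _).2 (.inl ⟨he, h_red⟩))
  obtain ⟨i, hi⟩ : ∃ i, pairExponent (.inl i) ≤ e := by
    simpa [reducedExponents, pairExponent_le_iff] using h_red
  obtain ⟨e', rfl⟩ := exists_add_of_le hi
  have h_trade (r : κ) : monomial (pairExponent (.inr r) + e') (1 : K) ∈ M := by
    refine ih _ ?_ _ (hS e' i r he) rfl
    rw [← h_deg]
    refine Finset.sum_lt_sum (fun j _ => ?_) ⟨i, Finset.mem_univ i, ?_⟩ <;> simp [pairExponent]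
  have h_moment : momentPoly K a n c i * monomial e' 1 ∈ M :=
    Submodule.mem_sup_right (Ideal.mul_mem_right _ _ (Ideal.subset_span ⟨i, rfl⟩))
  have h_eq : (a i : K) • monomial (pairExponent (.inl i) + e') (1 : K) =
      ∑ r, (n i * c r : K) • monomial (pairExponent (.inr r) + e') (1 : K) -
        momentPoly K a n c i * monomial e' 1 := by
    simp [momentPoly_eq_sum_monomial, add_mul, Finset.sum_mul, monomial_mul, smul_monomial]
  have h_ne : (a i : K) ≠ 0 := Nat.cast_ne_zero.2 (ha i).ne'
  refine (Submodule.smul_mem_iff M h_ne).1 ?_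
  rw [h_eq]
  exact sub_mem (sum_mem fun r _ => Submodule.smul_mem _ _ (h_trade r)) h_moment

end Reduction

section Independence

variable {σ R : Type*} [CommSemiring R] [NoZeroDivisors R]

theorem eq_zero_of_dvd_of_forall_not_le {d : σ →₀ ℕ} {b : R} (hb : b ≠ 0) (x : σ)
    {r g : MvPolynomial σ R} (hr : ∀ e ∈ r.support, e x < d x) (hdvd : monomial d b + r ∣ g)
    (hg : ∀ e ∈ g.support, ¬ d ≤ e) : g = 0 := by
  classical
  obtain ⟨h, rfl⟩ := hdvd
  by_contra hne
  have h_ne : h ≠ 0 := right_ne_zero_of_mul hne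
  obtain ⟨e, he, h_max⟩ := h.support.exists_max_image (fun e => e x) (support_nonempty.2 h_ne)
  have h_rest : coeff (d + e) (r * h) = 0 := by
    by_contra h_coeff
    obtain ⟨e₁, h₁, e₂, h₂, h_add⟩ :=
      Finset.mem_add.1 (support_mul _ _ (mem_support_iff.2 h_coeff))
    have h_add_x := DFunLike.congr_fun h_add x
    have := hr e₁ h₁
    have := h_max e₂ h₂
    simp only [Finsupp.add_apply] at h_add_x
    omega
  refine hg (d + e) (mem_support_iff.2 ?_) le_self_add
  rw [add_mul, coeff_add, h_rest, add_zero, coeff_monomial_mul]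
  exact mul_ne_zero hb (mem_support_iff.1 he)

theorem eq_zero_of_mem_momentIdeal_unit {κ K : Type*} [Fintype κ] [Field K] [CharZero K]
    {α : ℕ} (hα : α ≠ 0) (n : Unit → ℕ) (c : κ → ℕ) {g : MvPolynomial (PairIndex Unit κ) K}
    (hg : g ∈ restrictSupport K (reducedExponents Unit κ))
    (hmem : g ∈ momentIdeal K (fun _ => α) n c) : g = 0 := by
  classical
  rw [momentIdeal, Set.range_unique, Ideal.mem_span_singleton, momentPoly_eq_sum_monomial,
    ← map_neg] at hmem
  refine eq_zero_of_dvd_of_forall_not_le (neg_ne_zero.2 (Nat.cast_ne_zero.2 hα)) (.inl (.inl ()))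
    (fun e he => ?_) hmem fun e he hle => ?_
  · obtain ⟨r, -, hr⟩ := Finset.mem_biUnion.1 (support_sum he)
    rw [Finset.mem_singleton.1 (support_monomial_subset hr)]
    simp [pairExponent]
  · have h_red := (mem_restrictSupport_iff K).1 hg he ()
    have h_dvd := pairExponent_le_iff.1 hle
    tauto

end Independence

section MapDomain

variable {ι κ : Type*}

/-- The map on variables underlying `φ*`: all `u_i` go to `z_1` and all `v_i` to `w_1`. -/
def collapse : PairIndex ι κ → PairIndex Unit κ :=
  Sum.map (Sum.map (fun _ => ()) id) (Sum.map (fun _ => ()) id)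

theorem mapDomain_collapse_inl_inl [Fintype ι] (e : PairIndex ι κ →₀ ℕ) :
    e.mapDomain collapse (.inl (.inl ())) = ∑ i, e (.inl (.inl i)) := by
  classical
  induction e using Finsupp.induction_linear with
  | zero => simp
  | add e e' he he' => simp [Finsupp.mapDomain_add, he, he', Finset.sum_add_distrib]
  | single x k => rcases x with (i | r) | (i | r) <;> simp [collapse, Finsupp.single_apply]

theorem mapDomain_collapse_inr_inl [Fintype ι] (e : PairIndex ι κ →₀ ℕ) :
    e.mapDomain collapse (.inr (.inl ())) = ∑ i, e (.inr (.inl i)) := by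
  classical
  induction e using Finsupp.induction_linear with
  | zero => simp
  | add e e' he he' => simp [Finsupp.mapDomain_add, he, he', Finset.sum_add_distrib]
  | single x k => rcases x with (i | r) | (i | r) <;> simp [collapse, Finsupp.single_apply]

theorem mapDomain_collapse_inl_inr (e : PairIndex ι κ →₀ ℕ) (r : κ) :
    e.mapDomain collapse (.inl (.inr r)) = e (.inl (.inr r)) := by
  classical
  induction e using Finsupp.induction_linear with
  | zero => simp
  | add e e' he he' => simp [Finsupp.mapDomain_add, he, he']
  | single x k => rcases x with (i | r) | (i | r) <;> simp [collapse, Finsupp.single_apply]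

theorem mapDomain_collapse_inr_inr (e : PairIndex ι κ →₀ ℕ) (r : κ) :
    e.mapDomain collapse (.inr (.inr r)) = e (.inr (.inr r)) := by
  classical
  induction e using Finsupp.induction_linear with
  | zero => simp
  | add e e' he he' => simp [Finsupp.mapDomain_add, he, he']
  | single x k => rcases x with (i | r) | (i | r) <;> simp [collapse, Finsupp.single_apply]

theorem level_mapDomain_collapse [Fintype κ] (c : κ → ℕ) (e : PairIndex ι κ →₀ ℕ) :
    level c (e.mapDomain collapse) = level c e := by
  simp only [level, mapDomain_collapse_inl_inr, mapDomain_collapse_inr_inr]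

end MapDomain

theorem eq_mul_toNat_and_iff {x y m : ℕ} {h : ℤ} :
    x = m * h.toNat ∧ y = m * (-h).toNat ↔ (x = 0 ∨ y = 0) ∧ (x : ℤ) - y = m * h := by
  obtain ⟨k, rfl | rfl⟩ := h.eq_nat_or_neg
  all_goals
    simp only [neg_neg, Int.toNat_natCast, Int.toNat_neg_natCast, mul_zero, mul_neg]
    rw [← Nat.cast_mul]
    omega

section StandardExponents

variable {ι κ : Type*}

/-- The exponents of the invariant monomials divisible by no `u_i v_i` with `i : ι`; their classes
form a basis of the invariants modulo the moment polynomials. -/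
def standardExponents (a n : ι → ℕ) (c : κ → ℕ) : Set (PairIndex ι κ →₀ ℕ) :=
  {e | Finsupp.weight (torusWeight a n c) e = 0} ∩ reducedExponents ι κ

variable {a n : ι → ℕ} {c : κ → ℕ}

theorem ne_zero_of_coprime_sum [Fintype ι] {α : ℕ} {m : ι → ℕ} (ha : ∀ i, 0 < a i)
    (hm : ∀ i, m i * a i = n i * α) (hcop : Nat.Coprime α (∑ i, m i)) : α ≠ 0 := by
  rintro rfl
  have h_zero (i : ι) : m i = 0 := by simpa [(ha i).ne'] using hm i
  simp [h_zero] at hcop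

/- The `i`-th condition `a_i (e u_i - e v_i) = n_i level e`, multiplied by `m_i / n_i = α / a_i`. -/
theorem mul_sub_eq_mul_level [Fintype κ] {α : ℕ} {m : ι → ℕ} (ha : ∀ i, 0 < a i)
    (hm : ∀ i, m i * a i = n i * α) {e : PairIndex ι κ →₀ ℕ}
    (he : Finsupp.weight (torusWeight a n c) e = 0) (i : ι) :
    (α : ℤ) * (e (.inl (.inl i)) - e (.inr (.inl i))) = m i * level c e := by
  have h_weight := weight_torusWeight a n c e i
  rw [he, Pi.zero_apply] at h_weight
  have hm_int : (m i : ℤ) * a i = n i * α := by exact_mod_cast hm i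
  have ha_ne : (a i : ℤ) ≠ 0 := by exact_mod_cast (ha i).ne'
  apply mul_left_cancel₀ ha_ne
  linear_combination (α : ℤ) * h_weight - level c e * hm_int

theorem mem_standardExponents_iff [Fintype ι] [Fintype κ] {α : ℕ} {m : ι → ℕ}
    (ha : ∀ i, 0 < a i) (hm : ∀ i, m i * a i = n i * α) (hcop : Nat.Coprime α (∑ i, m i))
    {e : PairIndex ι κ →₀ ℕ} :
    e ∈ standardExponents a n c ↔ ∃ h : ℤ, level c e = α * h ∧
      ∀ i, e (.inl (.inl i)) = m i * h.toNat ∧ e (.inr (.inl i)) = m i * (-h).toNat := by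
  simp only [eq_mul_toNat_and_iff, forall_and]
  constructor
  · rintro ⟨h_weight, h_red⟩
    have h_mul := mul_sub_eq_mul_level ha hm h_weight
    have h_dvd : (α : ℤ) ∣ (∑ i, m i : ℕ) * level c e := by
      rw [Nat.cast_sum, Finset.sum_mul]
      exact Finset.dvd_sum fun i _ => ⟨_, (h_mul i).symm⟩
    obtain ⟨h, h_level⟩ := (Nat.isCoprime_iff_coprime.2 hcop).dvd_of_dvd_mul_left h_dvd
    have hα : (α : ℤ) ≠ 0 := by exact_mod_cast ne_zero_of_coprime_sum ha hm hcop
    refine ⟨h, h_level, h_red, fun i => mul_left_cancel₀ hα ?_⟩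
    rw [h_mul, h_level, mul_left_comm]
  · rintro ⟨h, h_level, h_red, h_diff⟩
    refine ⟨funext fun i => ?_, h_red⟩
    have hm_int : (m i : ℤ) * a i = n i * α := by exact_mod_cast hm i
    rw [weight_torusWeight, Pi.zero_apply, h_level]
    linear_combination (-(a i : ℤ)) * h_diff i - h * hm_int

theorem weight_mapDomain_collapse_eq_zero [Fintype ι] [Finite κ] {α : ℕ} {m : ι → ℕ}
    (ha : ∀ i, 0 < a i) (hm : ∀ i, m i * a i = n i * α) {e : PairIndex ι κ →₀ ℕ}
    (he : Finsupp.weight (torusWeight a n c) e = 0) :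
    Finsupp.weight (torusWeight (fun _ : Unit => α) (fun _ => ∑ i, m i) c)
      (e.mapDomain collapse) = 0 := by
  have := Fintype.ofFinite κ
  funext i
  have h_sum := Finset.sum_congr rfl fun i (_ : i ∈ Finset.univ) => mul_sub_eq_mul_level ha hm he i
  simp only [← Finset.mul_sum, ← Finset.sum_mul, Finset.sum_sub_distrib] at h_sum
  rw [weight_torusWeight, level_mapDomain_collapse, mapDomain_collapse_inl_inl,
    mapDomain_collapse_inr_inl, Pi.zero_apply]
  push_cast
  linear_combination -h_sum

theorem injOn_mapDomain_collapse [Fintype ι] [Finite κ] {α : ℕ} {m : ι → ℕ}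
    (ha : ∀ i, 0 < a i) (hm : ∀ i, m i * a i = n i * α) (hcop : Nat.Coprime α (∑ i, m i)) :
    (standardExponents a n c).InjOn (Finsupp.mapDomain collapse) := by
  have := Fintype.ofFinite κ
  have hα : (α : ℤ) ≠ 0 := by exact_mod_cast ne_zero_of_coprime_sum ha hm hcop
  intro e he e' he' h_eq
  obtain ⟨h, h_level, h_coord⟩ := (mem_standardExponents_iff ha hm hcop).1 he
  obtain ⟨h', h_level', h_coord'⟩ := (mem_standardExponents_iff ha hm hcop).1 he'
  obtain rfl : h = h' := by
    apply mul_left_cancel₀ hα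
    rw [← h_level, ← h_level', ← level_mapDomain_collapse c e, h_eq, level_mapDomain_collapse]
  ext ((i | r) | (i | r))
  · rw [(h_coord i).1, (h_coord' i).1]
  · rw [← mapDomain_collapse_inl_inr, h_eq, mapDomain_collapse_inl_inr]
  · rw [(h_coord i).2, (h_coord' i).2]
  · rw [← mapDomain_collapse_inr_inr, h_eq, mapDomain_collapse_inr_inr]

theorem bijOn_mapDomain_collapse [Fintype ι] [Finite κ] {α : ℕ} {m : ι → ℕ}
    (ha : ∀ i, 0 < a i) (hm : ∀ i, m i * a i = n i * α) (hcop : Nat.Coprime α (∑ i, m i)) :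
    Set.BijOn (Finsupp.mapDomain collapse) (standardExponents a n c)
      (standardExponents (fun _ : Unit => α) (fun _ => ∑ i, m i) c) := by
  have := Fintype.ofFinite κ
  have hA {e : PairIndex ι κ →₀ ℕ} := mem_standardExponents_iff (c := c) (e := e) ha hm hcop
  have hB {e : PairIndex Unit κ →₀ ℕ} :=
    mem_standardExponents_iff (c := c) (e := e) (m := fun _ => ∑ i, m i)
      (fun _ => Nat.pos_of_ne_zero (ne_zero_of_coprime_sum ha hm hcop)) (fun _ => rfl)
      (by simpa using hcop)
  refine ⟨fun e he => ?_, injOn_mapDomain_collapse ha hm hcop, fun e' he' => ?_⟩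
  · obtain ⟨h, h_level, h_coord⟩ := hA.1 he
    refine hB.2 ⟨h, by rw [level_mapDomain_collapse, h_level], fun ⟨⟩ => ⟨?_, ?_⟩⟩
    · simp only [mapDomain_collapse_inl_inl, h_coord, Finset.sum_mul]
    · simp only [mapDomain_collapse_inr_inl, h_coord, Finset.sum_mul]
  · obtain ⟨h, h_level, h_coord⟩ := hB.1 he'
    let e : PairIndex ι κ →₀ ℕ := Finsupp.equivFunOnFinite.symm <| Sum.elim
      (Sum.elim (fun i => m i * h.toNat) fun r => e' (.inl (.inr r)))
      (Sum.elim (fun i => m i * (-h).toNat) fun r => e' (.inr (.inr r)))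
    refine ⟨e, hA.2 ⟨h, h_level, fun i => ⟨rfl, rfl⟩⟩, ?_⟩
    ext ((⟨⟩ | r) | (⟨⟩ | r))
    · rw [mapDomain_collapse_inl_inl, (h_coord ()).1, Finset.sum_mul]; rfl
    · exact mapDomain_collapse_inl_inr e r
    · rw [mapDomain_collapse_inr_inl, (h_coord ()).2, Finset.sum_mul]; rfl
    · exact mapDomain_collapse_inr_inr e r

end StandardExponents

theorem exists_quotient_algEquiv {R A B : Type*} [CommRing R] [CommRing A] [CommRing B]
    [Algebra R A] [Algebra R B] (ψ : A →ₐ[R] B) {I : Ideal A} {J : Ideal B}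
    (h_ker : ∀ f, ψ f ∈ J ↔ f ∈ I) (h_surj : ∀ g, ∃ f, ψ f - g ∈ J) :
    ∃ Φ : (A ⧸ I) ≃ₐ[R] (B ⧸ J), ∀ f, Φ (Ideal.Quotient.mk I f) = Ideal.Quotient.mk J (ψ f) := by
  let π := (Ideal.Quotient.mkₐ R J).comp ψ
  obtain rfl : RingHom.ker π = I := Ideal.ext fun f =>
    Ideal.Quotient.eq_zero_iff_mem.trans (h_ker f)
  have hπ : Function.Surjective π := fun q => by
    obtain ⟨g, rfl⟩ := Ideal.Quotient.mk_surjective q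
    exact (h_surj g).imp fun f hf => Ideal.Quotient.eq.2 hf
  exact ⟨Ideal.quotientKerAlgEquivOfSurjective hπ, fun f => rfl⟩

theorem image_mk_image_eq {R A B : Type*} [CommRing R] [CommRing A] [CommRing B] [Algebra R A]
    [Algebra R B] {ψ : A →ₐ[R] B} {I : Ideal A} {J : Ideal B} {Φ : (A ⧸ I) ≃ₐ[R] (B ⧸ J)}
    (hΦ : ∀ f, Φ (Ideal.Quotient.mk I f) = Ideal.Quotient.mk J (ψ f)) {U : Set A} {V : Set B}
    (h_maps : Set.MapsTo ψ U V) (h_surj : ∀ g ∈ V, ∃ f ∈ U, ψ f - g ∈ J) :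
    Φ '' (Ideal.Quotient.mk I '' U) = Ideal.Quotient.mk J '' V := by
  simp only [Set.image_image, hΦ]
  refine Set.Subset.antisymm ?_ ?_
  · rintro _ ⟨f, hf, rfl⟩
    exact ⟨ψ f, h_maps hf, rfl⟩
  · rintro _ ⟨g, hg, rfl⟩
    exact (h_surj g hg).imp fun f hf => ⟨hf.1, Ideal.Quotient.eq.2 hf.2⟩

section ModuloMoments

variable {ι κ K : Type*} [Field K] {a n m : ι → ℕ} {c : κ → ℕ} {α : ℕ} {s : PairIndex ι κ → K}

/-- The exponents of the invariant monomials whose degree lies in `D`; the choices `D = univ` and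
`D = {d}` treat all invariants and the homogeneous ones at the same time. -/
def invariantExponents (a n : ι → ℕ) (c : κ → ℕ) (D : Set ℕ) : Set (PairIndex ι κ →₀ ℕ) :=
  {e | Finsupp.weight (torusWeight a n c) e = 0 ∧ e.degree ∈ D}

theorem mem_restrictSupport_invariantExponents_univ {f : MvPolynomial (PairIndex ι κ) K} :
    f ∈ restrictSupport K (invariantExponents a n c Set.univ) ↔
      IsWeightedHomogeneous (torusWeight a n c) f 0 := by
  simp only [mem_restrictSupport_iff, invariantExponents, Set.subset_def, IsWeightedHomogeneous]
  simp

theorem mem_restrictSupport_invariantExponents_singleton {f : MvPolynomial (PairIndex ι κ) K}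
    {d : ℕ} : f ∈ restrictSupport K (invariantExponents a n c {d}) ↔
      IsWeightedHomogeneous (torusWeight a n c) f 0 ∧ f.IsHomogeneous d := by
  have h_degree (e : PairIndex ι κ →₀ ℕ) : Finsupp.weight 1 e = e.degree := by
    rw [Finsupp.degree_eq_weight_one]
    rfl
  simp only [mem_restrictSupport_iff, invariantExponents, Set.subset_def, IsWeightedHomogeneous,
    IsHomogeneous, h_degree]
  simp [forall_and]

theorem pairExponent_add_mem_invariantExponents {D : Set ℕ} {e : PairIndex ι κ →₀ ℕ}
    (j j' : ι ⊕ κ) (he : pairExponent j + e ∈ invariantExponents a n c D) :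
    pairExponent j' + e ∈ invariantExponents a n c D := by
  simpa [invariantExponents, weight_pairExponent, degree_pairExponent] using he

theorem isWeightedHomogeneous_scaledRename_collapse [Fintype ι] [Finite κ] (ha : ∀ i, 0 < a i)
    (hm : ∀ i, m i * a i = n i * α) (hs : ∀ x, s x ≠ 0) {f : MvPolynomial (PairIndex ι κ) K}
    (hf : IsWeightedHomogeneous (torusWeight a n c) f 0) :
    IsWeightedHomogeneous (torusWeight (fun _ => α) (fun _ => ∑ i, m i) c)
      (scaledRename collapse s f) 0 := by
  rw [← mem_restrictSupport_invariantExponents_univ] at hf ⊢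
  have h_image := Submodule.mem_map_of_mem (f := (scaledRename collapse s).toLinearMap) hf
  rw [map_scaledRename_restrictSupport _ hs] at h_image
  refine restrictSupport_mono K ?_ h_image
  rintro _ ⟨e, he, rfl⟩
  exact ⟨weight_mapDomain_collapse_eq_zero ha hm he.1, trivial⟩

variable [Fintype ι] [Fintype κ] [CharZero K]

theorem exists_scaledRename_collapse_sub_mem (ha : ∀ i, 0 < a i) (hm : ∀ i, m i * a i = n i * α)
    (hcop : Nat.Coprime α (∑ i, m i)) (hs : ∀ x, s x ≠ 0) {D : Set ℕ}
    {g : MvPolynomial (PairIndex Unit κ) K}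
    (hg : g ∈ restrictSupport K (invariantExponents (fun _ => α) (fun _ => ∑ i, m i) c D)) :
    ∃ f ∈ restrictSupport K (invariantExponents a n c D),
      scaledRename collapse s f - g ∈ momentIdeal K (fun _ => α) (fun _ => ∑ i, m i) c := by
  have hα := Nat.pos_of_ne_zero (ne_zero_of_coprime_sum ha hm hcop)
  obtain ⟨r, hr, j, hj, rfl⟩ := Submodule.mem_sup.1 <|
    restrictSupport_le_sup_momentIdeal (K := K) (fun _ => ∑ i, m i) c (fun _ => hα)
      (fun _ _ _ => pairExponent_add_mem_invariantExponents _ _) hg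
  have h_image : invariantExponents (fun _ => α) (fun _ => ∑ i, m i) c D ∩
      reducedExponents Unit κ ⊆ Finsupp.mapDomain collapse '' invariantExponents a n c D := by
    rintro e ⟨⟨h_weight, h_degree⟩, h_red⟩
    obtain ⟨e, he, rfl⟩ := (bijOn_mapDomain_collapse ha hm hcop).surjOn ⟨h_weight, h_red⟩
    rw [Finsupp.degree_mapDomain] at h_degree
    exact ⟨e, ⟨he.1, h_degree⟩, rfl⟩
  have h_lift := restrictSupport_mono K h_image hr
  rw [← map_scaledRename_restrictSupport _ hs] at h_lift
  obtain ⟨f, hf, rfl⟩ := h_lift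
  exact ⟨f, hf, by simpa using hj⟩

theorem mem_momentIdeal_of_scaledRename_collapse_mem (ha : ∀ i, 0 < a i)
    (hm : ∀ i, m i * a i = n i * α) (hcop : Nat.Coprime α (∑ i, m i)) (hs : ∀ x, s x ≠ 0)
    (h_map : momentIdeal K a n c ≤
      (momentIdeal K (fun _ => α) (fun _ => ∑ i, m i) c).comap (scaledRename collapse s))
    {f : MvPolynomial (PairIndex ι κ) K} (hf : IsWeightedHomogeneous (torusWeight a n c) f 0)
    (hmem : scaledRename collapse s f ∈ momentIdeal K (fun _ => α) (fun _ => ∑ i, m i) c) :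
    f ∈ momentIdeal K a n c := by
  have h_bij := bijOn_mapDomain_collapse (c := c) ha hm hcop
  obtain ⟨r, hr, j, hj, rfl⟩ := Submodule.mem_sup.1 <|
    restrictSupport_le_sup_momentIdeal (K := K) n c ha
      (fun _ _ _ => pairExponent_add_mem_invariantExponents _ _)
      (mem_restrictSupport_invariantExponents_univ.2 hf)
  have h_std : invariantExponents a n c Set.univ ∩ reducedExponents ι κ ⊆
      standardExponents a n c := fun e he => ⟨he.1.1, he.2⟩
  have hr_std := restrictSupport_mono K h_std hr
  have h_image : scaledRename collapse s r ∈ restrictSupport K (reducedExponents Unit κ) := by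
    have := Submodule.mem_map_of_mem (f := (scaledRename collapse s).toLinearMap) hr_std
    rw [map_scaledRename_restrictSupport _ hs] at this
    exact restrictSupport_mono K (h_bij.mapsTo.image_subset.trans Set.inter_subset_right) this
  have h_zero : scaledRename collapse s r = 0 := by
    refine eq_zero_of_mem_momentIdeal_unit (ne_zero_of_coprime_sum ha hm hcop)
      (fun _ => ∑ i, m i) c h_image ?_
    have h_image_j : scaledRename collapse s j ∈
        momentIdeal K (fun _ => α) (fun _ => ∑ i, m i) c := h_map hj
    exact (Ideal.add_mem_iff_left _ h_image_j).1 (map_add (scaledRename collapse s) r j ▸ hmem)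
  rw [eq_zero_of_scaledRename_eq_zero hs h_bij.injOn hr_std h_zero, zero_add]
  exact hj

end ModuloMoments

section InvariantSubalgebras

variable {ℓ k : ℕ} (a n : Fin ℓ → ℕ) (c : Fin k → ℕ)

theorem actPA_eq_scaledRename (t : Fin ℓ → ℂ) :
    actPA ℓ k a n c t = scaledRename id fun x => ∏ i, t i ^ torusWeight a n c x i := by
  refine algHom_ext fun x => ?_
  have h_single {_ : DecidableEq (Fin ℓ)} (i : Fin ℓ) (b : ℤ) :
      ∏ j, t j ^ (Pi.single i b : Fin ℓ → ℤ) j = t i ^ b := by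
    rw [Fintype.prod_eq_single i fun j hj => by rw [Pi.single_eq_of_ne hj, zpow_zero],
      Pi.single_eq_same]
  have h_cast (r : Fin k) : ∏ i, t i ^ (c r * n i) = ∏ i, t i ^ ((c r : ℤ) * n i) :=
    Finset.prod_congr rfl fun i _ => by norm_cast
  rcases x with (i | r) | (i | r) <;>
    simp [actPA, scaledRename, torusWeight, h_single, h_cast, ← Pi.single_neg, -map_prod]

theorem actPB_eq_scaledRename (α β : ℕ) (t : Unit → ℂ) :
    actPB k α β c (t ()) = scaledRename id fun x =>
      ∏ i, t i ^ torusWeight (fun _ => α) (fun _ => β) c x i := by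
  refine algHom_ext fun x => ?_
  rcases x with (i | r) | (i | r) <;> simp [actPB, scaledRename, torusWeight]

variable {a n c}

theorem mem_invPA_iff {f : PA ℓ k} :
    f ∈ invPA ℓ k a n c ↔ IsWeightedHomogeneous (torusWeight a n c) f 0 := by
  simp only [← forall_scaledRename_eq_self_iff, ← actPA_eq_scaledRename]
  rfl

theorem mem_invPB_iff {α β : ℕ} {f : PB k} :
    f ∈ invPB k α β c ↔
      IsWeightedHomogeneous (torusWeight (fun _ => α) (fun _ => β) c) f 0 := by
  simp only [← forall_scaledRename_eq_self_iff, ← actPB_eq_scaledRename]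
  exact ⟨fun h t ht => h (t ()) (ht ()), fun h t ht => h (fun _ => t) fun _ => ht⟩

theorem mem_idealA_iff {f : invPA ℓ k a n c} :
    f ∈ idealA ℓ k a n c ↔ (f : PA ℓ k) ∈ momentIdeal ℂ a n c := by
  classical
  let := weightedGradedAlgebra ℂ (torusWeight a n c)
  have h_gen : {x : invPA ℓ k a n c | ∃ i, (x : PA ℓ k) = JA ℓ k a n c i} =
      {x : invPA ℓ k a n c | (x : PA ℓ k) ∈ Set.range (momentPoly ℂ a n c)} :=
    Set.ext fun _ => exists_congr fun _ => eq_comm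
  rw [idealA, h_gen]
  refine mem_span_preimage_iff_of_mem_gradeZero
    (weightedHomogeneousSubmodule ℂ (torusWeight a n c)) _ (fun x => mem_invPA_iff) ?_ f
  rintro _ ⟨i, rfl⟩
  exact isWeightedHomogeneous_momentPoly ℂ a n c i

theorem mem_idealB_iff {α β : ℕ} {g : invPB k α β c} :
    g ∈ idealB k α β c ↔ (g : PB k) ∈ momentIdeal ℂ (fun _ => α) (fun _ => β) c := by
  classical
  let := weightedGradedAlgebra ℂ (torusWeight (fun _ : Unit => α) (fun _ => β) c)
  have h_gen : {x : invPB k α β c | (x : PB k) = JB k α β c} =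
      {x : invPB k α β c | (x : PB k) ∈ Set.range (momentPoly ℂ (fun _ => α) (fun _ => β) c)} := by
    rw [Set.range_unique]
    rfl
  rw [idealB, h_gen]
  refine mem_span_preimage_iff_of_mem_gradeZero
    (weightedHomogeneousSubmodule ℂ (torusWeight _ _ c)) _ (fun x => mem_invPB_iff) ?_ g
  rintro _ ⟨i, rfl⟩
  exact isWeightedHomogeneous_momentPoly ℂ (fun _ => α) (fun _ => β) c i

end InvariantSubalgebras

section Pullback

variable {ℓ k : ℕ} (m : Fin ℓ → ℕ) (β : ℕ)

/-- The coefficients `√(m_i / β)` (for the variables indexed by `Fin ℓ`) and `1` of `φ*`. -/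
noncomputable def phiScale : PairIndex (Fin ℓ) (Fin k) → ℂ :=
  let s : Fin ℓ ⊕ Fin k → ℂ := Sum.elim (fun i => ((Real.sqrt ((m i : ℝ) / β) : ℝ) : ℂ)) 1
  Sum.elim s s

theorem phiStar_eq_scaledRename :
    phiStar ℓ k m β = scaledRename collapse (phiScale m β) := by
  refine algHom_ext fun x => ?_
  rcases x with (i | r) | (i | r) <;> simp [phiStar, scaledRename, phiScale, collapse]

theorem phiScale_ne_zero {m : Fin ℓ → ℕ} (hm : ∀ i, 0 < m i) (x : PairIndex (Fin ℓ) (Fin k)) :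
    phiScale m (∑ i, m i) x ≠ 0 := by
  have h_sqrt (i : Fin ℓ) : Real.sqrt ((m i : ℝ) / (∑ i, m i : ℕ)) ≠ 0 := by
    have h_sum : 0 < ∑ i, m i := Finset.sum_pos (fun i _ => hm i) ⟨i, Finset.mem_univ i⟩
    exact (Real.sqrt_pos.2 (div_pos (Nat.cast_pos.2 (hm i)) (Nat.cast_pos.2 h_sum))).ne'
  rcases x with (i | r) | (i | r) <;> simp only [phiScale, Sum.elim_inl, Sum.elim_inr]
  exacts [Complex.ofReal_ne_zero.2 (h_sqrt i), one_ne_zero,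
    Complex.ofReal_ne_zero.2 (h_sqrt i), one_ne_zero]

theorem phiStar_JA {m a n : Fin ℓ → ℕ} {α β : ℕ} (c : Fin k → ℕ) {i : Fin ℓ}
    (hm : m i * a i = n i * α) (hβ : β ≠ 0) :
    phiStar ℓ k m β (JA ℓ k a n c i) = C ((n i : ℂ) / β) * JB k α β c := by
  have hβ_ne : (β : ℂ) ≠ 0 := Nat.cast_ne_zero.2 hβ
  set s : ℂ := ((Real.sqrt ((m i : ℝ) / β) : ℝ) : ℂ) with hs
  have h_sq : s * s = m i / β := by
    rw [hs, ← Complex.ofReal_mul, Real.mul_self_sqrt (by positivity)]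
    push_cast
    rfl
  have h_pair : (a i : ℂ) * s * s = n i / β * α := by
    have hm_cast : (m i : ℂ) * a i = n i * α := by exact_mod_cast hm
    rw [mul_assoc, h_sq]
    field_simp
    linear_combination hm_cast
  have h_pair_C : (C (a i : ℂ) * C s * C s : PB k) = C (n i / β : ℂ) * C (α : ℂ) := by
    simp only [← C_mul, h_pair]
  have h_level_C : (C (n i : ℂ) : PB k) = C (n i / β : ℂ) * C (β : ℂ) := by
    rw [← C_mul, div_mul_cancel₀ _ hβ_ne]
  simp only [JA, JB, map_add, map_neg, map_mul, map_sum, algHom_C, algebraMap_eq]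
  simp only [phiStar, aeval_X, ← hs]
  rw [h_level_C]
  linear_combination -h_pair_C * X (.inl (.inl ())) * X (.inr (.inl ()))

end Pullback

theorem coprime_lcm_sum {ι : Type*} [Fintype ι] {a n : ι → ℕ} (ha : ∀ i, 0 < a i)
    (h_pair : Pairwise (Function.onFun Nat.Coprime a)) (h_cop : ∀ i, Nat.Coprime (a i) (n i)) :
    Nat.Coprime (Finset.univ.lcm a) (∑ i, n i * Finset.univ.lcm a / a i) := by
  classical
  have h_lcm : Finset.univ.lcm a = ∏ i, a i := Finset.lcm_eq_prod fun i _ j _ hij => h_pair hij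
  have h_div (i : ι) : n i * (∏ j, a j) / a i = n i * ∏ j ∈ Finset.univ.erase i, a j := by
    rw [← Finset.mul_prod_erase _ a (Finset.mem_univ i), mul_left_comm,
      Nat.mul_div_cancel_left _ (ha i)]
  rw [h_lcm]
  refine Nat.Coprime.prod_left fun i _ => ?_
  simp only [h_div]
  rw [← Finset.add_sum_erase _ _ (Finset.mem_univ i)]
  have h_rest : a i ∣ ∑ j ∈ Finset.univ.erase i, n j * ∏ l ∈ Finset.univ.erase j, a l :=
    Finset.dvd_sum fun j hj => Dvd.dvd.mul_left (Finset.dvd_prod_of_mem a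
      (Finset.mem_erase.2 ⟨(Finset.ne_of_mem_erase hj).symm, Finset.mem_univ i⟩)) _
  obtain ⟨q, hq⟩ := h_rest
  rw [hq, Nat.coprime_add_mul_left_right]
  exact (h_cop i).mul_right <| Nat.Coprime.prod_right fun j hj =>
    h_pair (Finset.ne_of_mem_erase hj).symm

section InducedIsomorphism

variable {ℓ k : ℕ} {a n m : Fin ℓ → ℕ} {c : Fin k → ℕ} {α : ℕ}

theorem phiStar_mem_invPB (ha : ∀ i, 0 < a i) (hm : ∀ i, m i * a i = n i * α)
    (hm_pos : ∀ i, 0 < m i) {f : PA ℓ k} (hf : f ∈ invPA ℓ k a n c) :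
    phiStar ℓ k m (∑ i, m i) f ∈ invPB k α (∑ i, m i) c := by
  rw [mem_invPB_iff, phiStar_eq_scaledRename]
  exact isWeightedHomogeneous_scaledRename_collapse ha hm (phiScale_ne_zero hm_pos)
    (mem_invPA_iff.1 hf)

theorem momentIdeal_le_comap_phiStar (hm : ∀ i, m i * a i = n i * α) (hm_pos : ∀ i, 0 < m i) :
    momentIdeal ℂ a n c ≤ (momentIdeal ℂ (fun _ => α) (fun _ => ∑ i, m i) c).comap
      (phiStar ℓ k m (∑ i, m i)) := by
  rw [momentIdeal, Ideal.span_le]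
  rintro _ ⟨i, rfl⟩
  have hβ : ∑ i, m i ≠ 0 := (Finset.sum_pos (fun i _ => hm_pos i) ⟨i, Finset.mem_univ i⟩).ne'
  have h_phi : phiStar ℓ k m (∑ i, m i) (momentPoly ℂ a n c i) = _ := phiStar_JA c (hm i) hβ
  rw [SetLike.mem_coe, Ideal.mem_comap, h_phi]
  exact Ideal.mul_mem_left _ _ (Ideal.subset_span ⟨(), rfl⟩)

theorem phiStar_mem_momentIdeal_iff (ha : ∀ i, 0 < a i) (hm : ∀ i, m i * a i = n i * α)
    (hm_pos : ∀ i, 0 < m i) (hcop : Nat.Coprime α (∑ i, m i)) {f : PA ℓ k}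
    (hf : f ∈ invPA ℓ k a n c) :
    phiStar ℓ k m (∑ i, m i) f ∈ momentIdeal ℂ (fun _ => α) (fun _ => ∑ i, m i) c ↔
      f ∈ momentIdeal ℂ a n c := by
  have h_map := momentIdeal_le_comap_phiStar (c := c) hm hm_pos
  refine ⟨fun h => ?_, fun h => h_map h⟩
  rw [phiStar_eq_scaledRename] at h h_map
  exact mem_momentIdeal_of_scaledRename_collapse_mem ha hm hcop (phiScale_ne_zero hm_pos) h_map
    (mem_invPA_iff.1 hf) h

theorem isHomogeneous_phiStar (m : Fin ℓ → ℕ) (β : ℕ) {f : PA ℓ k} {d : ℕ}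
    (hf : f.IsHomogeneous d) : (phiStar ℓ k m β f).IsHomogeneous d := by
  rw [phiStar_eq_scaledRename]
  refine (one_mul d) ▸ hf.aeval _ fun x => ?_
  exact (isHomogeneous_C _ _).mul (isHomogeneous_X ℂ _)

theorem exists_phiStar_sub_mem_momentIdeal (ha : ∀ i, 0 < a i) (hm : ∀ i, m i * a i = n i * α)
    (hm_pos : ∀ i, 0 < m i) (hcop : Nat.Coprime α (∑ i, m i)) {D : Set ℕ} {g : PB k}
    (hg : g ∈ restrictSupport ℂ (invariantExponents (fun _ => α) (fun _ => ∑ i, m i) c D)) :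
    ∃ f ∈ restrictSupport ℂ (invariantExponents a n c D),
      phiStar ℓ k m (∑ i, m i) f - g ∈ momentIdeal ℂ (fun _ => α) (fun _ => ∑ i, m i) c := by
  rw [phiStar_eq_scaledRename]
  exact exists_scaledRename_collapse_sub_mem ha hm hcop (phiScale_ne_zero hm_pos) hg

theorem exists_mem_invPA_phiStar_sub_mem (ha : ∀ i, 0 < a i) (hm : ∀ i, m i * a i = n i * α)
    (hm_pos : ∀ i, 0 < m i) (hcop : Nat.Coprime α (∑ i, m i)) {g : PB k}
    (hg : g ∈ invPB k α (∑ i, m i) c) :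
    ∃ f ∈ invPA ℓ k a n c,
      phiStar ℓ k m (∑ i, m i) f - g ∈ momentIdeal ℂ (fun _ => α) (fun _ => ∑ i, m i) c := by
  rw [mem_invPB_iff, ← mem_restrictSupport_invariantExponents_univ] at hg
  simpa only [mem_restrictSupport_invariantExponents_univ, ← mem_invPA_iff] using
    exists_phiStar_sub_mem_momentIdeal ha hm hm_pos hcop hg

theorem exists_isHomogeneous_phiStar_sub_mem (ha : ∀ i, 0 < a i)
    (hm : ∀ i, m i * a i = n i * α) (hm_pos : ∀ i, 0 < m i) (hcop : Nat.Coprime α (∑ i, m i))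
    {g : PB k} (hg : g ∈ invPB k α (∑ i, m i) c) {d : ℕ} (hgd : g.IsHomogeneous d) :
    ∃ f ∈ invPA ℓ k a n c, f.IsHomogeneous d ∧
      phiStar ℓ k m (∑ i, m i) f - g ∈ momentIdeal ℂ (fun _ => α) (fun _ => ∑ i, m i) c := by
  simpa only [mem_restrictSupport_invariantExponents_singleton, ← mem_invPA_iff, and_assoc] using
    exists_phiStar_sub_mem_momentIdeal (D := {d}) ha hm hm_pos hcop
      (mem_restrictSupport_invariantExponents_singleton.2 ⟨mem_invPB_iff.1 hg, hgd⟩)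

end InducedIsomorphism

theorem stmt9_general (ℓ k : ℕ) (a n m : Fin ℓ → ℕ) (c : Fin k → ℕ) (α : ℕ)
    (ha : ∀ i, 0 < a i) (hn : ∀ i, 0 < n i) (hm : ∀ i, m i * a i = n i * α)
    (hcop : Nat.Coprime α (∑ i, m i)) :
    let β : ℕ := ∑ i, m i
    (∀ f : PA ℓ k, f ∈ invPA ℓ k a n c → phiStar ℓ k m β f ∈ invPB k α β c)
    ∧
    (∀ i, phiStar ℓ k m β (JA ℓ k a n c i) = C ((n i : ℂ) / (β : ℂ)) * JB k α β c)
    ∧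
    (∃ Φ : (invPA ℓ k a n c ⧸ idealA ℓ k a n c) ≃ₐ[ℂ]
            (invPB k α β c ⧸ idealB k α β c),
      (∀ (f : invPA ℓ k a n c) (g : invPB k α β c),
          phiStar ℓ k m β (f : PA ℓ k) = (g : PB k) →
          Φ (Ideal.Quotient.mk (idealA ℓ k a n c) f)
            = Ideal.Quotient.mk (idealB k α β c) g)
      ∧
      (∀ d : ℕ,
        Φ '' (Ideal.Quotient.mk (idealA ℓ k a n c) ''
            {f : invPA ℓ k a n c | ((f : PA ℓ k)).IsHomogeneous d})
          = Ideal.Quotient.mk (idealB k α β c) ''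
            {g : invPB k α β c | ((g : PB k)).IsHomogeneous d})) := by
  intro β
  have hm_pos (i : Fin ℓ) : 0 < m i := by
    have h_pos := Nat.mul_pos (hn i) (Nat.pos_of_ne_zero (ne_zero_of_coprime_sum ha hm hcop))
    exact Nat.pos_of_mul_pos_right (hm i ▸ h_pos)
  have h_inv (f : invPA ℓ k a n c) := phiStar_mem_invPB ha hm hm_pos f.2
  let ψ := ((phiStar ℓ k m β).comp (invPA ℓ k a n c).val).codRestrict (invPB k α β c) h_inv
  have h_ker (f : invPA ℓ k a n c) : ψ f ∈ idealB k α β c ↔ f ∈ idealA ℓ k a n c := by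
    rw [mem_idealA_iff, mem_idealB_iff]
    exact phiStar_mem_momentIdeal_iff ha hm hm_pos hcop f.2
  have h_surj (g : invPB k α β c) : ∃ f, ψ f - g ∈ idealB k α β c := by
    obtain ⟨f, hf, h_sub⟩ := exists_mem_invPA_phiStar_sub_mem ha hm hm_pos hcop g.2
    exact ⟨⟨f, hf⟩, mem_idealB_iff.2 h_sub⟩
  obtain ⟨Φ, hΦ⟩ := exists_quotient_algEquiv ψ h_ker h_surj
  refine ⟨fun f hf => h_inv ⟨f, hf⟩, fun i => phiStar_JA c (hm i) ?_, Φ, fun f g hfg => ?_,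
    fun d => image_mk_image_eq hΦ (fun f => isHomogeneous_phiStar m β) fun g hg => ?_⟩
  · exact (Finset.sum_pos (fun i _ => hm_pos i) ⟨i, Finset.mem_univ i⟩).ne'
  · exact (hΦ f).trans (congrArg _ (Subtype.ext hfg))
  · obtain ⟨f, hf, h_hom, h_sub⟩ :=
      exists_isHomogeneous_phiStar_sub_mem ha hm hm_pos hcop g.2 hg
    exact ⟨⟨f, hf⟩, h_hom, mem_idealB_iff.2 h_sub⟩

/-- (a) `φ*` maps invariants to invariants; (b) `φ*(J_{A,i}) = (n_i/β)·J_B`;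
(c) `φ*` induces a degree-preserving isomorphism of graded ℂ-algebras
`P_A^{inv}/(J_{A,1},…,J_{A,ℓ}) → P_B^{inv}/(J_B)`. -/
theorem stmt9 (ℓ k : ℕ) (hℓ : 1 ≤ ℓ) (hk : 1 ≤ k)
    (a n : Fin ℓ → ℕ) (c : Fin k → ℕ)
    (ha : ∀ i, 0 < a i) (hn : ∀ i, 0 < n i) (hc : ∀ r, 0 < c r)
    (hF1 : ∀ i j, i ≠ j → Nat.gcd (a i) (a j) = 1)
    (hF2 : ∀ i, ∃ r, Nat.gcd (a i) (c r * n i) = 1) :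
    let α : ℕ := Finset.univ.lcm a
    let m : Fin ℓ → ℕ := fun i => n i * α / a i
    let β : ℕ := ∑ i, m i
    -- (a)
    (∀ f : PA ℓ k, f ∈ invPA ℓ k a n c → phiStar ℓ k m β f ∈ invPB k α β c)
    ∧
    -- (b)
    (∀ i, phiStar ℓ k m β (JA ℓ k a n c i) = C ((n i : ℂ) / (β : ℂ)) * JB k α β c)
    ∧
    -- (c)
    (∃ Φ : (invPA ℓ k a n c ⧸ idealA ℓ k a n c) ≃ₐ[ℂ]
            (invPB k α β c ⧸ idealB k α β c),
      (∀ (f : invPA ℓ k a n c) (g : invPB k α β c),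
          phiStar ℓ k m β (f : PA ℓ k) = (g : PB k) →
          Φ (Ideal.Quotient.mk (idealA ℓ k a n c) f)
            = Ideal.Quotient.mk (idealB k α β c) g)
      ∧
      (∀ d : ℕ,
        Φ '' (Ideal.Quotient.mk (idealA ℓ k a n c) ''
            {f : invPA ℓ k a n c | ((f : PA ℓ k)).IsHomogeneous d})
          = Ideal.Quotient.mk (idealB k α β c) ''
            {g : invPB k α β c | ((g : PB k)).IsHomogeneous d})) := by
  intro α m _
  exact stmt9_general ℓ k a n m c α ha hn
    (fun i => Nat.div_mul_cancel (Dvd.dvd.mul_left (Finset.dvd_lcm (Finset.mem_univ i)) (n i)))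
    (coprime_lcm_sum ha hF1 fun i => (hF2 i).elim fun r => Nat.Coprime.coprime_mul_left_right)
end

section
/- Assume Type I_k (c_1 = ⋯ = c_k = 1) and the faithfulness condition (F). Let n = ℓ + k and P = ℂ[z_1,…,z_n, w_1,…,w_n]. Then the subalgebra P^{inv} of (ℂ^×)^ℓ-invariant polynomials equals the ℂ-subalgebra of P generated by the following monomials: (1) r_i = z_i w_i for i = 1,…,ℓ; (2) p_{g,h} = z_{ℓ+g} w_{ℓ+h} for 1 ≤ g,h ≤ k; (3) q_s = (∏_{i=1}^ℓ z_i^{m_i})·(∏_{g=1}^k z_{ℓ+g}^{s_g}) for each s = (s_1,…,s_k) ∈ ℕ^k with s_1 + ⋯ + s_k = α; (4) q̄_s = (∏_{i=1}^ℓ w_i^{m_i})·(∏_{g=1}^k w_{ℓ+g}^{s_g}) for each such s. -/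
open Complex MvPolynomial

/-- The polynomial ring `P = ℂ[z, w]` with `z, w` each indexed by `Fin ℓ ⊕ Fin k`
(the left summand of the variable type is `z`, the right is `w`). -/
abbrev PP (ℓ k : ℕ) := MvPolynomial ((Fin ℓ ⊕ Fin k) ⊕ (Fin ℓ ⊕ Fin k)) ℂ

/-- The substitution action of `t ∈ (ℂ^×)^ℓ` on `P` for the Type I_k weight matrix
`A = [diag(-a_1,…,-a_ℓ), n, …, n]`: `z_i ↦ t_i^{-a_i} z_i`, `w_i ↦ t_i^{a_i} w_i`,
`z_{ℓ+g} ↦ (∏_i t_i^{n_i}) z_{ℓ+g}`, `w_{ℓ+g} ↦ (∏_i t_i^{n_i})⁻¹ w_{ℓ+g}`. -/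
noncomputable def actP (ℓ k : ℕ) (a n : Fin ℓ → ℕ) (t : Fin ℓ → ℂ) :
    PP ℓ k →ₐ[ℂ] PP ℓ k :=
  aeval fun x => match x with
    | Sum.inl (Sum.inl i) => C (t i ^ (-(a i : ℤ))) * X (Sum.inl (Sum.inl i))
    | Sum.inl (Sum.inr g) => C (∏ i, t i ^ n i) * X (Sum.inl (Sum.inr g))
    | Sum.inr (Sum.inl i) => C (t i ^ (a i : ℤ)) * X (Sum.inr (Sum.inl i))
    | Sum.inr (Sum.inr g) => C ((∏ i, t i ^ n i)⁻¹) * X (Sum.inr (Sum.inr g))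

/-- The generating monomials: `r_i = z_i w_i`; `p_{g,h} = z_{ℓ+g} w_{ℓ+h}`;
`q_s = (∏_i z_i^{m_i})(∏_g z_{ℓ+g}^{s_g})` and `q̄_s = (∏_i w_i^{m_i})(∏_g w_{ℓ+g}^{s_g})`
for `s ∈ ℕ^k` with `|s| = α`. -/
noncomputable def gens (ℓ k : ℕ) (α : ℕ) (m : Fin ℓ → ℕ) : Set (PP ℓ k) :=
  {f | ∃ i, f = X (Sum.inl (Sum.inl i)) * X (Sum.inr (Sum.inl i))} ∪
  {f | ∃ g h : Fin k, f = X (Sum.inl (Sum.inr g)) * X (Sum.inr (Sum.inr h))} ∪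
  {f | ∃ s : Fin k → ℕ, (∑ g, s g) = α ∧
      f = (∏ i, X (Sum.inl (Sum.inl i)) ^ m i) * ∏ g, X (Sum.inl (Sum.inr g)) ^ s g} ∪
  {f | ∃ s : Fin k → ℕ, (∑ g, s g) = α ∧
      f = (∏ i, X (Sum.inr (Sum.inl i)) ^ m i) * ∏ g, X (Sum.inr (Sum.inr g)) ^ s g}

/-!
Each monomial is an eigenvector of the torus, with character its weighted degree; since there are
infinitely many units, distinct characters are distinct functions, so the invariants are the
polynomials all of whose exponents lie in the monoid of exponents of weight zero. By well-founded
descent, a set of such exponents generates this monoid as soon as every nonzero exponent of weight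
zero has a nonzero member of the set below it. If some `z_{ℓ+g}` and some `w_{ℓ+h}` occur,
`p_{g,h}` is below; if neither occurs, the exponents of `z_i` and `w_i` agree and some `r_i` is
below. If only the `z_{ℓ+g}` occur, with total degree `U > 0`, then the exponents `x_i` of `z_i` and
`y_i` of `w_i` satisfy `a_i x_i = a_i y_i + n_i U`; this forces `a_i ∣ n_i U` for all `i`, that is
`α ∣ U`, whence `α ≤ U` and `m_i ≤ x_i`, and some `q_s` is below. The `q̄_s` play the same role for
the `w_{ℓ+h}`.
-/

section ClosureOfExponents

variable {A M : Type*}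

theorem closure_eq_mker_of_forall_exists_le [AddCommMonoid A] [PartialOrder A]
    [CanonicallyOrderedAdd A] [IsCancelAdd A] [WellFoundedLT A] [AddZeroClass M]
    (φ : A →+ M) {S : Set A} (hS : ∀ g ∈ S, φ g = 0)
    (hle : ∀ d, φ d = 0 → d ≠ 0 → ∃ g ∈ S, g ≠ 0 ∧ g ≤ d) :
    AddSubmonoid.closure S = AddMonoidHom.mker φ := by
  refine le_antisymm (AddSubmonoid.closure_le.mpr hS) fun d hd ↦ ?_
  induction d using WellFoundedLT.induction with
  | ind d ih =>
    rcases eq_or_ne d 0 with rfl | hd0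
    · exact zero_mem _
    obtain ⟨g, hgS, hg0, hgd⟩ := hle d hd hd0
    obtain ⟨c, rfl⟩ := exists_add_of_le hgd
    have hc : φ c = 0 := by simpa [AddMonoidHom.mem_mker, hS g hgS] using hd
    have hlt : c < g + c := lt_of_le_of_ne le_add_self (by simpa using hg0)
    exact add_mem (AddSubmonoid.subset_closure hgS) (ih c hlt hc)

variable {σ R : Type*} [CommSemiring R]

theorem mem_adjoin_monomial_image_iff {S : Set (σ →₀ ℕ)} {f : MvPolynomial σ R} :
    f ∈ Algebra.adjoin R ((fun d ↦ monomial d (1 : R)) '' S) ↔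
      ∀ d ∈ f.support, d ∈ AddSubmonoid.closure S := by
  classical
  constructor
  · intro hf
    induction hf using Algebra.adjoin_induction with
    | mem f hf =>
      obtain ⟨e, he, rfl⟩ := hf
      intro d hd
      obtain rfl := Finset.mem_singleton.mp (support_monomial_subset hd)
      exact AddSubmonoid.subset_closure he
    | algebraMap r =>
      intro d hd
      obtain rfl := Finset.mem_singleton.mp (support_monomial_subset hd)
      exact zero_mem _
    | add f g _ _ hf hg =>
      intro d hd
      exact (Finset.mem_union.mp (support_add hd)).elim (hf d) (hg d)
    | mul f g _ _ hf hg =>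
      intro d hd
      obtain ⟨b, hb, c, hc, rfl⟩ := Finset.mem_add.mp (support_mul f g hd)
      exact add_mem (hf b hb) (hg c hc)
  · have monomial_mem : ∀ d ∈ AddSubmonoid.closure S,
        monomial d (1 : R) ∈ Algebra.adjoin R ((fun d ↦ monomial d (1 : R)) '' S) := by
      intro d hd
      induction hd using AddSubmonoid.closure_induction with
      | mem d hd => exact Algebra.subset_adjoin ⟨d, hd, rfl⟩
      | zero => exact one_mem _
      | add b c _ _ hb hc => simpa [monomial_mul] using mul_mem hb hc
    intro hf
    rw [f.as_sum]
    refine sum_mem fun d hd ↦ ?_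
    rw [← mul_one (coeff d f), ← smul_eq_mul, ← smul_monomial]
    exact Subalgebra.smul_mem _ (monomial_mem d (hf d hd)) _

end ClosureOfExponents

section TorusAction

variable {ι σ R : Type*} [Fintype ι]

/-- The evaluation at the point `t` of the torus `(Rˣ)^ι` of its characters `χ ∈ ℤ^ι`, that is
`χ ↦ ∏ i, t i ^ χ i`. The character group is written multiplicatively. -/
def torusChar [CommMonoid R] (t : ι → Rˣ) : Multiplicative (ι → ℤ) →* Rˣ where
  toFun χ := ∏ i, t i ^ χ.toAdd i
  map_one' := by simp
  map_mul' χ ψ := by simp [zpow_add, Finset.prod_mul_distrib]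

theorem torusChar_ofAdd [CommMonoid R] (t : ι → Rˣ) (χ : ι → ℤ) :
    torusChar t (.ofAdd χ) = ∏ i, t i ^ χ i := rfl

theorem torusChar_ofAdd_single [CommMonoid R] [DecidableEq ι] (t : ι → Rˣ) (i : ι) (e : ℤ) :
    torusChar t (.ofAdd (Pi.single i e)) = t i ^ e := by
  rw [torusChar_ofAdd, Fintype.prod_eq_single i (by simp +contextual), Pi.single_eq_same]

/-- The diagonal action of the torus `(Rˣ)^ι` on polynomials in which the variable `x` has
weight `w x`. -/
noncomputable def torusAction [CommSemiring R] (w : σ → ι → ℤ) (t : ι → Rˣ) :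
    MvPolynomial σ R →ₐ[R] MvPolynomial σ R :=
  aeval fun x ↦ C (torusChar t (.ofAdd (w x)) : R) * X x

theorem torusAction_monomial [CommSemiring R] (w : σ → ι → ℤ) (t : ι → Rˣ) (d : σ →₀ ℕ) (r : R) :
    torusAction w t (monomial d r) =
      monomial d ((torusChar t (.ofAdd (Finsupp.weight w d)) : R) * r) := by
  have char_weight : (torusChar t (.ofAdd (Finsupp.weight w d)) : R) =
      d.prod fun x e ↦ (torusChar t (.ofAdd (w x)) : R) ^ e := by
    simp only [Finsupp.weight_apply, Finsupp.sum, Finsupp.prod, ofAdd_sum, ofAdd_nsmul, map_prod,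
      map_pow, Units.coe_prod, Units.val_pow_eq_pow_val]
  rw [torusAction, aeval_monomial, char_weight, monomial_eq, C_mul, map_finsuppProd]
  simp only [mul_pow, Finsupp.prod_mul, map_pow, algebraMap_eq]
  ring

theorem coeff_torusAction [CommSemiring R] (w : σ → ι → ℤ) (t : ι → Rˣ) (f : MvPolynomial σ R)
    (d : σ →₀ ℕ) :
    coeff d (torusAction w t f) = (torusChar t (.ofAdd (Finsupp.weight w d)) : R) * coeff d f := by
  classical
  induction f using MvPolynomial.induction_on' with
  | monomial e r =>
    rw [torusAction_monomial, coeff_monomial, coeff_monomial]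
    split_ifs with h
    · rw [h]
    · rw [mul_zero]
  | add p q hp hq => rw [map_add, coeff_add, coeff_add, hp, hq, mul_add]

theorem exists_zpow_ne_one [CommRing R] [IsDomain R] [Infinite Rˣ] {e : ℤ} (he : e ≠ 0) :
    ∃ u : Rˣ, u ^ e ≠ 1 := by
  by_contra! h
  have : NeZero e.natAbs := ⟨Int.natAbs_ne_zero.mpr he⟩
  have hroots : rootsOfUnity e.natAbs R = ⊤ :=
    eq_top_iff.mpr fun u _ ↦ by simpa [mem_rootsOfUnity, pow_natAbs_eq_one] using h u
  have : Finite (⊤ : Subgroup Rˣ) := hroots ▸ inferInstance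
  exact not_finite_iff_infinite.mpr ‹Infinite Rˣ› (Finite.of_equiv _ Subgroup.topEquiv.toEquiv)

theorem exists_torusChar_ne_one [CommRing R] [IsDomain R] [Infinite Rˣ] {χ : ι → ℤ} (hχ : χ ≠ 0) :
    ∃ t : ι → Rˣ, torusChar t (.ofAdd χ) ≠ 1 := by
  classical
  obtain ⟨i, hi⟩ := Function.ne_iff.mp hχ
  obtain ⟨u, hu⟩ := exists_zpow_ne_one (R := R) hi
  refine ⟨Pi.mulSingle i u, ?_⟩
  rwa [torusChar_ofAdd, Fintype.prod_eq_single i (by simp +contextual), Pi.mulSingle_eq_same]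

theorem forall_torusAction_eq_self_iff [CommRing R] [IsDomain R] [Infinite Rˣ] {w : σ → ι → ℤ}
    {f : MvPolynomial σ R} :
    (∀ t : ι → Rˣ, torusAction w t f = f) ↔ IsWeightedHomogeneous w f 0 := by
  constructor
  · intro hf d hd
    by_contra hw
    obtain ⟨t, ht⟩ := exists_torusChar_ne_one (R := R) hw
    have hcoeff := coeff_torusAction w t f d
    rw [hf t, eq_comm, mul_eq_right₀ hd] at hcoeff
    exact ht (Units.ext hcoeff)
  · intro hf t
    ext d
    rw [coeff_torusAction]
    by_cases hd : coeff d f = 0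
    · rw [hd, mul_zero]
    · rw [hf hd, ofAdd_zero, map_one, Units.val_one, one_mul]

instance infinite_units {K : Type*} [Field K] [Infinite K] : Infinite Kˣ := by
  have : Infinite {x : K // x ≠ 0} := (Set.finite_singleton (0 : K)).infinite_compl.to_subtype
  exact .of_injective _ (unitsEquivNeZero (G₀ := K)).symm.injective

end TorusAction

section Finsupp

variable {σ τ M : Type*}

theorem sumElim_le_sumElim {d d' : σ →₀ ℕ} {e e' : τ →₀ ℕ} (hd : d ≤ d') (he : e ≤ e') :
    d.sumElim e ≤ d'.sumElim e' :=
  Finsupp.le_def.mpr (Sum.forall.mpr ⟨hd, he⟩)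

theorem weight_sumElim [AddCommMonoid M] (w : σ → M) (w' : τ → M) (d : σ →₀ ℕ) (e : τ →₀ ℕ) :
    Finsupp.weight (Sum.elim w w') (d.sumElim e) = Finsupp.weight w d + Finsupp.weight w' e := by
  simp only [Finsupp.weight_apply, Finsupp.sum_sumElim]
  rfl

theorem weight_neg [AddCommGroup M] (w : σ → M) (d : σ →₀ ℕ) :
    Finsupp.weight (-w) d = -Finsupp.weight w d := by
  simp [Finsupp.weight_apply, Finsupp.sum]

theorem weight_const [AddCommMonoid M] (c : M) (d : σ →₀ ℕ) :
    Finsupp.weight (fun _ ↦ c) d = d.degree • c := by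
  simp [Finsupp.weight_apply, Finsupp.sum, Finsupp.degree_apply, Finset.sum_smul]

end Finsupp

section TypeI

variable {ι κ : Type*}

/-- The weights of the variables `z` under a Type I_k weight matrix: the columns of
`[diag(-a_1,…,-a_ℓ), n, …, n]`, where `κ` indexes the copies of `n`. -/
def typeIWeight [DecidableEq ι] (a n : ι → ℕ) : ι ⊕ κ → ι → ℤ :=
  Sum.elim (fun i ↦ Pi.single i (-(a i : ℤ))) fun _ i ↦ n i

/-- The weights of the variables `z, w` under a Type I_k weight matrix; `w` is dual to `z`. -/
def typeIDoubleWeight [DecidableEq ι] (a n : ι → ℕ) : (ι ⊕ κ) ⊕ (ι ⊕ κ) → ι → ℤ :=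
  Sum.elim (typeIWeight a n) (-typeIWeight a n)

/-- The least positive `U` such that `a_i` divides `n_i U` for all `i`. It is the number
`α = lcm(a_1,…,a_ℓ)` as soon as every `a_i` is prime to `n_i`. -/
def balancingDegree [Fintype ι] (a n : ι → ℕ) : ℕ :=
  Finset.univ.lcm fun i ↦ a i / (a i).gcd (n i)

/-- The exponents `m_i = n_i α / a_i`, with `balancingDegree a n` for `α`. -/
def balancingExponent [Fintype ι] (a n : ι → ℕ) (i : ι) : ℕ :=
  n i * balancingDegree a n / a i

variable (κ) in
/-- The exponents of the monomials `r_i`, `p_{g,h}`, `q_s` and `q̄_s`. An exponent is the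
`Finsupp.sumElim` of its `z`-part and its `w`-part, and each of these the `Finsupp.sumElim` of its
`ι`-part and its `κ`-part. -/
def generatorExponents [Finite ι] (α : ℕ) (m : ι → ℕ) : Set ((ι ⊕ κ) ⊕ (ι ⊕ κ) →₀ ℕ) :=
  {d | ∃ i, d = .sumElim (.single (.inl i) 1) (.single (.inl i) 1)} ∪
  {d | ∃ g h : κ, d = .sumElim (.single (.inr g) 1) (.single (.inr h) 1)} ∪
  {d | ∃ s : κ →₀ ℕ, s.degree = α ∧
    d = .sumElim (.sumElim (Finsupp.equivFunOnFinite.symm m) s) 0} ∪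
  {d | ∃ s : κ →₀ ℕ, s.degree = α ∧
    d = .sumElim 0 (.sumElim (Finsupp.equivFunOnFinite.symm m) s)}

theorem balancingDegree_dvd_iff [Fintype ι] {a n : ι → ℕ} (ha : ∀ i, 0 < a i) {U : ℕ} :
    balancingDegree a n ∣ U ↔ ∀ i, a i ∣ n i * U := by
  simp only [balancingDegree, Finset.lcm_dvd_iff, Finset.mem_univ, true_imp_iff]
  refine forall_congr' fun i ↦ ?_
  rw [Nat.div_dvd_iff_dvd_mul (Nat.gcd_dvd_left _ _) (Nat.gcd_pos_of_pos_left _ (ha i)),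
    Nat.dvd_gcd_mul_iff_dvd_mul]

theorem balancingDegree_ne_zero [Fintype ι] {a n : ι → ℕ} (ha : ∀ i, 0 < a i) :
    balancingDegree a n ≠ 0 := by
  have hdvd : balancingDegree a n ∣ ∏ i, a i :=
    (balancingDegree_dvd_iff ha).mpr fun i ↦
      (Finset.dvd_prod_of_mem a (Finset.mem_univ i)).mul_left _
  exact ne_zero_of_dvd_ne_zero (Finset.prod_pos fun i _ ↦ ha i).ne' hdvd

theorem balancingDegree_eq_lcm [Fintype ι] {a n : ι → ℕ} (h : ∀ i, (a i).gcd (n i) = 1) :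
    balancingDegree a n = Finset.univ.lcm a := by
  simp only [balancingDegree, h, Nat.div_one]

theorem balancingExponent_eq [Fintype ι] {a n : ι → ℕ} (h : ∀ i, (a i).gcd (n i) = 1) :
    balancingExponent a n = fun i ↦ n i * Finset.univ.lcm a / a i := by
  rw [← balancingDegree_eq_lcm h]
  rfl

theorem mul_balancingExponent [Fintype ι] {a n : ι → ℕ} (ha : ∀ i, 0 < a i) (i : ι) :
    a i * balancingExponent a n i = n i * balancingDegree a n :=
  Nat.mul_div_cancel' ((balancingDegree_dvd_iff ha).mp dvd_rfl i)

theorem balancing_le_of_balanced [Fintype ι] {a n : ι → ℕ} (ha : ∀ i, 0 < a i) {p q : ι → ℕ}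
    {U : ℕ} (hU : U ≠ 0) (h : ∀ i, a i * p i = a i * q i + n i * U) :
    balancingDegree a n ≤ U ∧ balancingExponent a n ≤ p := by
  have hdvd : ∀ i, a i ∣ n i * U := fun i ↦
    (Nat.dvd_add_right (dvd_mul_right (a i) (q i))).mp (h i ▸ dvd_mul_right _ _)
  have hle : balancingDegree a n ≤ U :=
    Nat.le_of_dvd (Nat.pos_of_ne_zero hU) ((balancingDegree_dvd_iff ha).mpr hdvd)
  refine ⟨hle, fun i ↦ Nat.le_of_mul_le_mul_left ?_ (ha i)⟩
  calc a i * balancingExponent a n i = n i * balancingDegree a n := mul_balancingExponent ha i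
    _ ≤ n i * U := Nat.mul_le_mul_left _ hle
    _ ≤ a i * p i := h i ▸ Nat.le_add_left _ _

theorem weight_typeIWeight [DecidableEq ι] (a n : ι → ℕ) (p : ι →₀ ℕ) (u : κ →₀ ℕ) (i : ι) :
    Finsupp.weight (typeIWeight a n) (p.sumElim u) i = n i * u.degree - a i * p i := by
  have weight_diag :
      Finsupp.weight (fun j ↦ Pi.single j (-(a j : ℤ))) p i = p i * -(a i : ℤ) := by
    rw [Finsupp.weight_apply, Finsupp.sum, Finset.sum_apply,
      Finset.sum_eq_single i (fun j _ hj ↦ by simp [hj.symm]) (by simp +contextual)]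
    simp
  rw [typeIWeight, weight_sumElim, weight_const, Pi.add_apply, weight_diag, Pi.smul_apply,
    nsmul_eq_mul]
  ring

theorem weight_typeIDoubleWeight_eq_zero_iff [DecidableEq ι] {a n : ι → ℕ}
    {p q : ι →₀ ℕ} {u v : κ →₀ ℕ} :
    Finsupp.weight (typeIDoubleWeight a n) (.sumElim (p.sumElim u) (q.sumElim v)) = 0 ↔
      ∀ i, a i * p i + n i * v.degree = a i * q i + n i * u.degree := by
  rw [typeIDoubleWeight, weight_sumElim, weight_neg, funext_iff]
  refine forall_congr' fun i ↦ ?_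
  rw [Pi.add_apply, Pi.neg_apply, weight_typeIWeight, weight_typeIWeight, Pi.zero_apply]
  zify
  constructor <;> intro h <;> linarith

theorem weight_eq_zero_of_mem_generatorExponents [Fintype ι] [DecidableEq ι] {a n : ι → ℕ}
    (ha : ∀ i, 0 < a i) {d : (ι ⊕ κ) ⊕ (ι ⊕ κ) →₀ ℕ}
    (hd : d ∈ generatorExponents κ (balancingDegree a n) (balancingExponent a n)) :
    Finsupp.weight (typeIDoubleWeight a n) d = 0 := by
  rcases hd with ((⟨i, rfl⟩ | ⟨g, h, rfl⟩) | ⟨s, hs, rfl⟩) | ⟨s, hs, rfl⟩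
  · rw [typeIDoubleWeight, weight_sumElim, weight_neg, add_neg_cancel]
  · rw [typeIDoubleWeight, weight_sumElim, weight_neg, Finsupp.weight_single,
      Finsupp.weight_single, typeIWeight, Sum.elim_inr, Sum.elim_inr, add_neg_cancel]
  · rw [← Finsupp.sumElim_zero_zero, weight_typeIDoubleWeight_eq_zero_iff]
    simp [hs, mul_balancingExponent ha]
  · rw [← Finsupp.sumElim_zero_zero, weight_typeIDoubleWeight_eq_zero_iff]
    simp [hs, mul_balancingExponent ha]

theorem ne_zero_of_mem_generatorExponents [Finite ι] {α : ℕ} (hα : α ≠ 0) {m : ι → ℕ}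
    {d : (ι ⊕ κ) ⊕ (ι ⊕ κ) →₀ ℕ} (hd : d ∈ generatorExponents κ α m) : d ≠ 0 := by
  have exists_ne_zero (s : κ →₀ ℕ) (hs : s.degree = α) : ∃ g, s g ≠ 0 :=
    Finsupp.ne_iff.mp (show s ≠ 0 by rintro rfl; exact hα (by rw [← hs, map_zero]))
  rcases hd with ((⟨i, rfl⟩ | ⟨g, h, rfl⟩) | ⟨s, hs, rfl⟩) | ⟨s, hs, rfl⟩
  · exact Finsupp.ne_iff.mpr ⟨.inl (.inl i), by simp⟩
  · exact Finsupp.ne_iff.mpr ⟨.inl (.inr g), by simp⟩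
  · obtain ⟨g, hg⟩ := exists_ne_zero s hs
    exact Finsupp.ne_iff.mpr ⟨.inl (.inr g), hg⟩
  · obtain ⟨g, hg⟩ := exists_ne_zero s hs
    exact Finsupp.ne_iff.mpr ⟨.inr (.inr g), hg⟩

theorem exists_mem_generatorExponents_le [Fintype ι] [DecidableEq ι] {a n : ι → ℕ}
    (ha : ∀ i, 0 < a i) {d : (ι ⊕ κ) ⊕ (ι ⊕ κ) →₀ ℕ}
    (hd : Finsupp.weight (typeIDoubleWeight a n) d = 0) (hd0 : d ≠ 0) :
    ∃ g ∈ generatorExponents κ (balancingDegree a n) (balancingExponent a n), g ≤ d := by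
  obtain ⟨⟨z, w⟩, rfl⟩ := Finsupp.sumFinsuppEquivProdFinsupp.symm.surjective d
  obtain ⟨⟨p, u⟩, rfl⟩ := Finsupp.sumFinsuppEquivProdFinsupp.symm.surjective z
  obtain ⟨⟨q, v⟩, rfl⟩ := Finsupp.sumFinsuppEquivProdFinsupp.symm.surjective w
  simp only [Finsupp.sumFinsuppEquivProdFinsupp_symm_apply] at hd hd0 ⊢
  rw [weight_typeIDoubleWeight_eq_zero_iff] at hd
  rcases eq_or_ne u 0 with rfl | hu <;> rcases eq_or_ne v 0 with rfl | hv
  · obtain rfl : p = q := by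
      ext i
      simpa [(ha i).ne'] using hd i
    have hp : p ≠ 0 := by
      rintro rfl
      simp at hd0
    obtain ⟨i, hi⟩ := Finsupp.ne_iff.mp hp
    have hle : Finsupp.single (Sum.inl i) 1 ≤ p.sumElim (0 : κ →₀ ℕ) :=
      Finsupp.single_le_iff.mpr (Nat.one_le_iff_ne_zero.mpr hi)
    exact ⟨_, .inl (.inl (.inl ⟨i, rfl⟩)), sumElim_le_sumElim hle hle⟩
  · obtain ⟨hdeg, hexp⟩ := balancing_le_of_balanced ha (p := q) (q := p)
      (mt (Finsupp.degree_eq_zero_iff v).mp hv) fun i ↦ by simpa using (hd i).symm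
    obtain ⟨s, hsv, hs⟩ := Finsupp.exists_le_degree_eq v _ hdeg
    exact ⟨_, .inr ⟨s, hs, rfl⟩, sumElim_le_sumElim zero_le (sumElim_le_sumElim hexp hsv)⟩
  · obtain ⟨hdeg, hexp⟩ := balancing_le_of_balanced ha (p := p) (q := q)
      (mt (Finsupp.degree_eq_zero_iff u).mp hu) fun i ↦ by simpa using hd i
    obtain ⟨s, hsu, hs⟩ := Finsupp.exists_le_degree_eq u _ hdeg
    exact ⟨_, .inl (.inr ⟨s, hs, rfl⟩),
      sumElim_le_sumElim (sumElim_le_sumElim hexp hsu) zero_le⟩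
  · obtain ⟨g, hg⟩ := Finsupp.ne_iff.mp hu
    obtain ⟨h, hh⟩ := Finsupp.ne_iff.mp hv
    exact ⟨_, .inl (.inl (.inr ⟨g, h, rfl⟩)), sumElim_le_sumElim
      (Finsupp.single_le_iff.mpr (Nat.one_le_iff_ne_zero.mpr hg))
      (Finsupp.single_le_iff.mpr (Nat.one_le_iff_ne_zero.mpr hh))⟩

theorem closure_generatorExponents [Fintype ι] [DecidableEq ι] {a n : ι → ℕ}
    (ha : ∀ i, 0 < a i) :
    AddSubmonoid.closure (generatorExponents κ (balancingDegree a n) (balancingExponent a n)) =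
      AddMonoidHom.mker (Finsupp.weight (typeIDoubleWeight a n)) := by
  refine closure_eq_mker_of_forall_exists_le _
    (fun _ ↦ weight_eq_zero_of_mem_generatorExponents ha) fun d hd hd0 ↦ ?_
  obtain ⟨g, hg, hgd⟩ := exists_mem_generatorExponents_le ha hd hd0
  exact ⟨g, hg, ne_zero_of_mem_generatorExponents (balancingDegree_ne_zero ha) hg, hgd⟩

theorem stmt10_general {R : Type*} [CommRing R] [IsDomain R] [Infinite Rˣ] [Fintype ι]
    [DecidableEq ι] {a n : ι → ℕ} (ha : ∀ i, 0 < a i) (f : MvPolynomial ((ι ⊕ κ) ⊕ (ι ⊕ κ)) R) :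
    (∀ t : ι → Rˣ, torusAction (typeIDoubleWeight a n) t f = f) ↔
      f ∈ Algebra.adjoin R ((fun d ↦ monomial d (1 : R)) ''
        generatorExponents κ (balancingDegree a n) (balancingExponent a n)) := by
  rw [forall_torusAction_eq_self_iff, mem_adjoin_monomial_image_iff, closure_generatorExponents ha]
  simp only [IsWeightedHomogeneous, mem_support_iff, AddMonoidHom.mem_mker]

end TypeI

section ComplexPolynomials

variable {ℓ k : ℕ}

theorem actP_units (a n : Fin ℓ → ℕ) (t : Fin ℓ → ℂˣ) :
    actP ℓ k a n (fun i ↦ t i) = torusAction (typeIDoubleWeight a n) t := by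
  refine algHom_ext fun x ↦ ?_
  rcases x with (i | g) | (i | g)
  · simp [actP, torusAction, typeIDoubleWeight, typeIWeight, torusChar_ofAdd_single]
  · simp [actP, torusAction, typeIDoubleWeight, typeIWeight, torusChar_ofAdd]
  · simp [actP, torusAction, typeIDoubleWeight, typeIWeight, torusChar_ofAdd_single]
  · simp [actP, torusAction, typeIDoubleWeight, typeIWeight, torusChar_ofAdd, -map_prod]

theorem forall_actP_eq_self_iff {a n : Fin ℓ → ℕ} {f : PP ℓ k} :
    (∀ t : Fin ℓ → ℂ, (∀ i, t i ≠ 0) → actP ℓ k a n t f = f) ↔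
      ∀ t : Fin ℓ → ℂˣ, torusAction (typeIDoubleWeight a n) t f = f := by
  simp only [← actP_units]
  exact ⟨fun h t ↦ h _ fun i ↦ (t i).ne_zero, fun h t ht ↦ h fun i ↦ .mk0 (t i) (ht i)⟩

theorem gens_eq_monomial_image (α : ℕ) (m : Fin ℓ → ℕ) :
    gens ℓ k α m = (fun d ↦ monomial d (1 : ℂ)) '' generatorExponents (Fin k) α m := by
  simp only [gens, generatorExponents, Set.image_union]
  refine congrArg₂ _ (congrArg₂ _ (congrArg₂ _ ?_ ?_) ?_) ?_ <;> ext f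
  · simp [X, monomial_mul, eq_comm]
  · simp [X, monomial_mul, eq_comm]
  · simp only [Set.mem_image, Set.mem_ofPred_eq, ↓existsAndEq, and_true]
    refine Finsupp.equivFunOnFinite.symm.exists_congr fun s ↦ ?_
    simp [Finsupp.degree_eq_sum, monomial_eq, Finsupp.prod_fintype, eq_comm (a := f)]
  · simp only [Set.mem_image, Set.mem_ofPred_eq, ↓existsAndEq, and_true]
    refine Finsupp.equivFunOnFinite.symm.exists_congr fun s ↦ ?_
    simp [Finsupp.degree_eq_sum, monomial_eq, Finsupp.prod_fintype, eq_comm (a := f)]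

end ComplexPolynomials

/-- for a faithful Type I_k weight matrix, a polynomial is
`(ℂ^×)^ℓ`-invariant if and only if it lies in the subalgebra generated by the monomials
`r_i`, `p_{g,h}`, `q_s`, `q̄_s`. -/
theorem stmt10 (ℓ k : ℕ) (hℓ : 1 ≤ ℓ) (hk : 1 ≤ k)
    (a n : Fin ℓ → ℕ)
    (ha : ∀ i, 0 < a i) (hn : ∀ i, 0 < n i)
    (hF1 : ∀ i j, i ≠ j → Nat.gcd (a i) (a j) = 1)
    (hF2 : ∀ i, Nat.gcd (a i) (n i) = 1) :
    let α : ℕ := Finset.univ.lcm a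
    let m : Fin ℓ → ℕ := fun i => n i * α / a i
    ∀ f : PP ℓ k,
      (∀ t : Fin ℓ → ℂ, (∀ i, t i ≠ 0) → actP ℓ k a n t f = f)
        ↔ f ∈ Algebra.adjoin ℂ (gens ℓ k α m) := by
  intro α m f
  rw [forall_actP_eq_self_iff, stmt10_general ha, gens_eq_monomial_image,
    balancingDegree_eq_lcm hF2, balancingExponent_eq hF2]
end

section
/- Assume Type I_k (c_1 = ⋯ = c_k = 1) and the faithfulness condition (F). Let F be the polynomial ring over ℂ in the variables R_i (i = 1,…,ℓ), P_{g,h} (1 ≤ g,h ≤ k), Q_s and Q̄_s (s ∈ ℕ^k with |s| = α), and let π : F → ℂ[z_1,…,z_n, w_1,…,w_n] (n = ℓ+k) be the ℂ-algebra homomorphism with π(R_i) = z_i w_i, π(P_{g,h}) = z_{ℓ+g} w_{ℓ+h}, π(Q_s) = (∏_{i=1}^ℓ z_i^{m_i})(∏_{g=1}^k z_{ℓ+g}^{s_g}), and π(Q̄_s) = (∏_{i=1}^ℓ w_i^{m_i})(∏_{g=1}^k w_{ℓ+g}^{s_g}). Then the kernel of π is the ideal of F generated by: (1) P_{g,h}P_{i,j}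 − P_{g,j}P_{i,h} for all g ≠ i and h ≠ j; (2) P_{g,h}Q_s − P_{i,h}Q_{s′} for all g, h, i and all s with s_i ≥ 1, where s′ = s + e_g − e_i; (3) P_{g,h}Q̄_s − P_{g,i}Q̄_{s′} for all g, h, i and all s with s_i ≥ 1, where s′ = s + e_h − e_i; (4) Q_sQ_{s′} − Q_tQ_{t′} whenever s + s′ = t + t′; (5) Q̄_sQ̄_{s′} − Q̄_tQ̄_{t′} whenever s + s′ = t + t′; (6) (∏_{i=1}^ℓ R_i^{m_i})(∏_{j=1}^α P_{g_j,h_j}) − Q_sQ̄_{s′} whenever the list (g_1,…,g_α) contains each value g exactly s_g times and the list (h_1,…,h_α) contains each value h exactly s′_h times. -/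
open Complex MvPolynomial

/-- Exponent vectors `s ∈ ℕ^k` with `|s| = α`. -/
abbrev Expo (k α : ℕ) := {s : Fin k → ℕ // ∑ g, s g = α}

/-- The free polynomial ring `F` on the variables `R_i`, `P_{g,h}`, `Q_s`, `Q̄_s`. -/
abbrev FreeP (ℓ k α : ℕ) :=
  MvPolynomial (Fin ℓ ⊕ ((Fin k × Fin k) ⊕ (Expo k α ⊕ Expo k α))) ℂ

/-- The evaluation `π : F → ℂ[z,w]` sending `R_i ↦ z_i w_i`, `P_{g,h} ↦ z_{ℓ+g} w_{ℓ+h}`,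
`Q_s ↦ (∏_i z_i^{m_i})(∏_g z_{ℓ+g}^{s_g})`, `Q̄_s ↦ (∏_i w_i^{m_i})(∏_g w_{ℓ+g}^{s_g})`. -/
noncomputable def piMap (ℓ k α : ℕ) (m : Fin ℓ → ℕ) :
    FreeP ℓ k α →ₐ[ℂ] PP ℓ k :=
  aeval fun x => match x with
    | Sum.inl i => X (Sum.inl (Sum.inl i)) * X (Sum.inr (Sum.inl i))
    | Sum.inr (Sum.inl (g, h)) => X (Sum.inl (Sum.inr g)) * X (Sum.inr (Sum.inr h))
    | Sum.inr (Sum.inr (Sum.inl s)) =>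
        (∏ i, X (Sum.inl (Sum.inl i)) ^ m i) * ∏ g, X (Sum.inl (Sum.inr g)) ^ s.1 g
    | Sum.inr (Sum.inr (Sum.inr s)) =>
        (∏ i, X (Sum.inr (Sum.inl i)) ^ m i) * ∏ g, X (Sum.inr (Sum.inr g)) ^ s.1 g

/-- The variable `R_i` of `F`. -/
noncomputable def Rv (ℓ k α : ℕ) (i : Fin ℓ) : FreeP ℓ k α := X (Sum.inl i)

/-- The variable `P_{g,h}` of `F`. -/
noncomputable def Pv (ℓ k α : ℕ) (g h : Fin k) : FreeP ℓ k α :=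
  X (Sum.inr (Sum.inl (g, h)))

/-- The variable `Q_s` of `F`. -/
noncomputable def Qv (ℓ k α : ℕ) (s : Expo k α) : FreeP ℓ k α :=
  X (Sum.inr (Sum.inr (Sum.inl s)))

/-- The variable `Q̄_s` of `F`. -/
noncomputable def Qbv (ℓ k α : ℕ) (s : Expo k α) : FreeP ℓ k α :=
  X (Sum.inr (Sum.inr (Sum.inr s)))

/-- The six families of off-shell relations. -/
noncomputable def rels (ℓ k α : ℕ) (m : Fin ℓ → ℕ) : Set (FreeP ℓ k α) :=
  -- (1)
  {f | ∃ g h i j : Fin k, g ≠ i ∧ h ≠ j ∧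
      f = Pv ℓ k α g h * Pv ℓ k α i j - Pv ℓ k α g j * Pv ℓ k α i h} ∪
  -- (2)  s' = s + e_g - e_i, s_i ≥ 1
  {f | ∃ (g h i : Fin k) (s s' : Expo k α), 1 ≤ s.1 i ∧
      (∀ j, s'.1 j + (if j = i then 1 else 0) = s.1 j + (if j = g then 1 else 0)) ∧
      f = Pv ℓ k α g h * Qv ℓ k α s - Pv ℓ k α i h * Qv ℓ k α s'} ∪
  -- (3)  s' = s + e_h - e_i, s_i ≥ 1
  {f | ∃ (g h i : Fin k) (s s' : Expo k α), 1 ≤ s.1 i ∧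
      (∀ j, s'.1 j + (if j = i then 1 else 0) = s.1 j + (if j = h then 1 else 0)) ∧
      f = Pv ℓ k α g h * Qbv ℓ k α s - Pv ℓ k α g i * Qbv ℓ k α s'} ∪
  -- (4)
  {f | ∃ s s' t t' : Expo k α, (∀ j, s.1 j + s'.1 j = t.1 j + t'.1 j) ∧
      f = Qv ℓ k α s * Qv ℓ k α s' - Qv ℓ k α t * Qv ℓ k α t'} ∪
  -- (5)
  {f | ∃ s s' t t' : Expo k α, (∀ j, s.1 j + s'.1 j = t.1 j + t'.1 j) ∧
      f = Qbv ℓ k α s * Qbv ℓ k α s' - Qbv ℓ k α t * Qbv ℓ k α t'} ∪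
  -- (6)
  {f | ∃ (s s' : Expo k α) (g h : Fin α → Fin k),
      (∀ x, (Finset.univ.filter fun j => g j = x).card = s.1 x) ∧
      (∀ x, (Finset.univ.filter fun j => h j = x).card = s'.1 x) ∧
      f = (∏ i, Rv ℓ k α i ^ m i) * (∏ j, Pv ℓ k α (g j) (h j))
            - Qv ℓ k α s * Qbv ℓ k α s'}

/-! Since `π` maps variables to monomials, its kernel is spanned by the differences of monomials
with the same image. By (6), every monomial of `F` is congruent to a reduced one, which does not
involve both a `Q` and a `Q̄`. If two reduced monomials have the same image, comparing total degrees
in the `z_{ℓ+g}` and in the `w_{ℓ+g}` shows that they contain equally many `Q`s and equally many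
`Q̄`s, hence the same powers of the `R_i`. What remains, say for a product of `P`s and `Q`s, is that
its class only depends on its multidegrees in the `z_{ℓ+g}` and the `w_{ℓ+h}`: if these allow a
factor `P_{g,h}`, then some `P_{i,h}` occurs, and (1) or (2) trades its letter `i` for a letter `g`
of another factor. Splitting off common factors in this way leaves only `Q`s, for which (4) trades
letters between two factors. -/

theorem ker_le_of_monomial_sub_mem {R σ τ : Type*} [CommRing R]
    {φ : MvPolynomial σ R →ₐ[R] MvPolynomial τ R} (hφ : ∀ i, ∃ e, φ (X i) = monomial e 1)
    {I : Ideal (MvPolynomial σ R)}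
    (hI : ∀ d d', φ (monomial d 1) = φ (monomial d' 1) → monomial d 1 - monomial d' 1 ∈ I) :
    RingHom.ker φ.toRingHom ≤ I := by
  choose e he using hφ
  let E (d : σ →₀ ℕ) : τ →₀ ℕ := d.sum fun i n => n • e i
  have map_monomial (d : σ →₀ ℕ) : φ (monomial d 1) = monomial (E d) 1 := by
    rw [monomial_eq, map_mul, Finsupp.prod, map_prod]
    simp [he, monomial_pow, E, Finsupp.sum, monomial_sum_one]
  -- `ψ` picks a monomial over each monomial in the image, so `ψ ∘ φ` is the quotient map.
  let ψ : MvPolynomial τ R →ₗ[R] MvPolynomial σ R ⧸ I :=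
    (basisMonomials τ R).constr R fun d => Ideal.Quotient.mk I (monomial (Function.invFun E d) 1)
  have ψ_comp : ψ ∘ₗ φ.toLinearMap = (Ideal.Quotient.mkₐ R I).toLinearMap := by
    refine (basisMonomials σ R).ext fun d => ?_
    have lift_eq : E (Function.invFun E (E d)) = E d := Function.invFun_eq ⟨d, rfl⟩
    calc ψ (φ (monomial d 1)) = ψ (basisMonomials τ R (E d)) := by simp [map_monomial]
      _ = Ideal.Quotient.mk I (monomial (Function.invFun E (E d)) 1) :=
        (basisMonomials τ R).constr_basis R _ _
      _ = Ideal.Quotient.mk I (monomial d 1) :=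
        Ideal.Quotient.eq.2 (hI _ _ (by rw [map_monomial, map_monomial, lift_eq]))
  intro f (hf : φ f = 0)
  rw [← Ideal.Quotient.eq_zero_iff_mem]
  simpa [hf] using (LinearMap.congr_fun ψ_comp f).symm

section Exchange

/-- The weak compositions of `α` with parts indexed by `κ`, so that `Expo k α` is
`WeakComposition (Fin k) α`; they are the exponent vectors of the monomials of degree `α`. -/
abbrev WeakComposition (κ : Type*) [Fintype κ] (α : ℕ) := {s : κ → ℕ // ∑ g, s g = α}

theorem exists_mem_apply_pos_of_sum_pos {κ : Type*} {S : Multiset (κ → ℕ)} {g : κ}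
    (hg : 0 < S.sum g) : ∃ s ∈ S, 0 < s g := by
  by_contra! hS
  refine hg.ne' ((map_multiset_sum (Pi.evalAddMonoidHom _ g) S).trans (Multiset.sum_eq_zero ?_))
  simpa using hS

variable {κ κ' M : Type*} [Fintype κ] [CommMonoid M] {α : ℕ}

theorem WeakComposition.exists_apply_lt_of_ne {s t : WeakComposition κ α} (hst : s ≠ t) :
    ∃ g, s.1 g < t.1 g := by
  by_contra! hle
  refine hst (Subtype.ext (funext fun g => Eq.symm ?_))
  exact (Finset.sum_eq_sum_iff_of_le fun g _ => hle g).1 (t.2.trans s.2.symm) g (Finset.mem_univ g)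

theorem WeakComposition.exists_add_single_eq [DecidableEq κ] (s : WeakComposition κ α) {i : κ}
    (hi : 0 < s.1 i) (g : κ) :
    ∃ s' : WeakComposition κ α, s'.1 + Pi.single i 1 = s.1 + Pi.single g 1 := by
  have hle : Pi.single i 1 ≤ s.1 := by
    intro j
    obtain rfl | hj := eq_or_ne j i
    · simpa using Nat.one_le_of_lt hi
    · simp [hj]
  have hs' : s.1 - Pi.single i 1 + Pi.single g 1 + Pi.single i 1 = s.1 + Pi.single g 1 := by
    rw [add_right_comm, tsub_add_cancel_of_le hle]
  refine ⟨⟨s.1 - Pi.single i 1 + Pi.single g 1, ?_⟩, hs'⟩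
  have hsum := congrArg (fun f => ∑ j, f j) hs'
  simpa only [Pi.add_apply, Finset.sum_add_distrib, s.2, Finset.sum_pi_single', Finset.mem_univ,
    if_true, add_left_inj] using hsum

theorem WeakComposition.exists_exchange {s t : WeakComposition κ α}
    {A : Multiset (WeakComposition κ α)} (hst : s ≠ t)
    (ht : t.1 ≤ s.1 + (A.map Subtype.val).sum) :
    ∃ b ∈ A, ∃ s' b' : WeakComposition κ α, s.1 + b.1 = s'.1 + b'.1 ∧
      ∑ g, (t.1 g - s'.1 g) < ∑ g, (t.1 g - s.1 g) := by
  classical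
  -- Trade a surplus letter `i` of `s` for a missing letter `g`, taken from another factor `b`.
  obtain ⟨g, hg⟩ := exists_apply_lt_of_ne hst
  obtain ⟨i, hi⟩ := exists_apply_lt_of_ne hst.symm
  have hAg : 0 < (A.map Subtype.val).sum g := by
    have := ht g
    simp only [Pi.add_apply] at this
    lia
  obtain ⟨_, hb, hbg⟩ := exists_mem_apply_pos_of_sum_pos hAg
  obtain ⟨b, hbA, rfl⟩ := Multiset.mem_map.1 hb
  obtain ⟨s', hs'⟩ := exists_add_single_eq s (Nat.zero_lt_of_lt hi) g
  obtain ⟨b', hb'⟩ := exists_add_single_eq b hbg i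
  have hs'_apply (j : κ) : s'.1 j + Pi.single (M := fun _ => ℕ) i 1 j =
      s.1 j + Pi.single (M := fun _ => ℕ) g 1 j := congrFun hs' j
  refine ⟨b, hbA, s', b', ?_, Finset.sum_lt_sum (fun j _ => ?_) ⟨g, Finset.mem_univ g, ?_⟩⟩
  · funext j
    have := hs'_apply j
    have := congrFun hb' j
    simp only [Pi.add_apply] at *
    lia
  · have := hs'_apply j
    simp only [Pi.single_apply] at this
    split_ifs at this <;> grind
  · have hgi : g ≠ i := by grind
    have := hs'_apply g
    simp only [Pi.single_apply, hgi, if_true, if_false] at this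
    lia

variable [DecidableEq κ]

/-- The exponent vector of `∏_{(g,h) ∈ L} z_g * ∏_{s ∈ A} z^s`, that is, the degrees in the
variables `z_{ℓ+g}` of the image under `π` of a product of `P`s and `Q`s. -/
def leftContent (L : Multiset (κ × κ')) (A : Multiset (WeakComposition κ α)) : κ → ℕ :=
  (L.map fun x => Pi.single x.1 1).sum + (A.map Subtype.val).sum

@[simp]
theorem leftContent_cons_left (x : κ × κ') (L : Multiset (κ × κ'))
    (A : Multiset (WeakComposition κ α)) :
    leftContent (x ::ₘ L) A = Pi.single x.1 1 + leftContent L A := by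
  simp [leftContent, add_assoc]

@[simp]
theorem leftContent_cons_right (L : Multiset (κ × κ')) (s : WeakComposition κ α)
    (A : Multiset (WeakComposition κ α)) : leftContent L (s ::ₘ A) = s.1 + leftContent L A := by
  simp [leftContent, add_left_comm]

/-- The relations (1), (2) and (4) among elements `p g h` and `q s` of a commutative monoid. With
the two indices of `p` swapped they are the relations (1), (3) and (5). -/
structure ExchangeRelations (p : κ → κ' → M) (q : WeakComposition κ α → M) : Prop where
  p_mul_p : ∀ g h i j, p g h * p i j = p g j * p i h
  p_mul_q : ∀ g h i s s', 0 < s.1 i → s'.1 + Pi.single i 1 = s.1 + Pi.single g 1 →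
    p g h * q s = p i h * q s'
  q_mul_q : ∀ s s' t t', s.1 + s'.1 = t.1 + t'.1 → q s * q s' = q t * q t'

namespace ExchangeRelations

variable {p : κ → κ' → M} {q : WeakComposition κ α → M}

theorem exists_prod_map_cons_eq (hpq : ExchangeRelations p q) (t s : WeakComposition κ α)
    (A : Multiset (WeakComposition κ α)) (ht : t.1 ≤ s.1 + (A.map Subtype.val).sum) :
    ∃ A₀ : Multiset (WeakComposition κ α), ((s ::ₘ A).map q).prod = q t * (A₀.map q).prod ∧
      s.1 + (A.map Subtype.val).sum = t.1 + (A₀.map Subtype.val).sum ∧ A.card = A₀.card := by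
  induction hd : ∑ g, (t.1 g - s.1 g) using Nat.strong_induction_on generalizing s A with
  | _ d ih =>
  obtain rfl | hst := eq_or_ne s t
  · exact ⟨A, by simp⟩
  obtain ⟨b, hbA, s', b', hsb, hdecr⟩ := WeakComposition.exists_exchange hst ht
  obtain ⟨A, rfl⟩ := Multiset.exists_cons_of_mem hbA
  have hsum : s.1 + ((b ::ₘ A).map Subtype.val).sum = s'.1 + ((b' ::ₘ A).map Subtype.val).sum := by
    simp [← add_assoc, hsb]
  obtain ⟨A₀, hprod, hsum', hcard⟩ := ih _ (hd ▸ hdecr) s' (b' ::ₘ A) (hsum ▸ ht) rfl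
  refine ⟨A₀, ?_, hsum.trans hsum', by simpa using hcard⟩
  rw [← hprod]
  simp [← mul_assoc, hpq.q_mul_q s b s' b' hsb]

theorem prod_map_eq_of_sum_eq (hpq : ExchangeRelations p q)
    {A B : Multiset (WeakComposition κ α)} (hcard : A.card = B.card)
    (hsum : (A.map Subtype.val).sum = (B.map Subtype.val).sum) :
    (A.map q).prod = (B.map q).prod := by
  induction B using Multiset.induction_on generalizing A with
  | empty => simp [Multiset.card_eq_zero.1 hcard]
  | cons t B ih =>
    obtain ⟨s, A, rfl⟩ := A.card_pos_iff_exists_mem.1 (by simp [hcard]) |>.imp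
      fun s => Multiset.exists_cons_of_mem
    simp only [Multiset.map_cons, Multiset.sum_cons] at hsum
    obtain ⟨A₀, hprod, hsum', hcard'⟩ := hpq.exists_prod_map_cons_eq t s A (hsum ▸ le_self_add)
    rw [hprod, Multiset.map_cons, Multiset.prod_cons, ih]
    · simpa [← hcard'] using hcard
    · rw [hsum'] at hsum
      simpa using hsum

theorem exists_prod_map_eq_mul (hpq : ExchangeRelations p q) {L : Multiset (κ × κ')}
    {A : Multiset (WeakComposition κ α)} {g : κ} {h : κ'} (hg : 0 < leftContent L A g)
    (hh : h ∈ L.map Prod.snd) :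
    ∃ (L₀ : Multiset (κ × κ')) (A₀ : Multiset (WeakComposition κ α)),
      (L.map (Function.uncurry p)).prod * (A.map q).prod =
        p g h * ((L₀.map (Function.uncurry p)).prod * (A₀.map q).prod) ∧
      leftContent L A = Pi.single g 1 + leftContent L₀ A₀ ∧
      L.map Prod.snd = h ::ₘ L₀.map Prod.snd ∧ A.card = A₀.card := by
  obtain ⟨⟨i, h⟩, hx, rfl⟩ := Multiset.mem_map.1 hh
  obtain ⟨L, rfl⟩ := Multiset.exists_cons_of_mem hx
  obtain rfl | hgi := eq_or_ne g i
  · exact ⟨L, A, by simp [mul_assoc]⟩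
  have hg' : 0 < leftContent L A g := by simpa [hgi] using hg
  obtain hgL | hgA := Nat.add_pos_iff_pos_or_pos.1 hg'
  · obtain ⟨_, hy, hgy⟩ := exists_mem_apply_pos_of_sum_pos hgL
    obtain ⟨⟨g', j⟩, hyL, rfl⟩ := Multiset.mem_map.1 hy
    obtain rfl : g = g' := by
      by_contra hne
      simp [hne] at hgy
    obtain ⟨L, rfl⟩ := Multiset.exists_cons_of_mem hyL
    refine ⟨(i, j) ::ₘ L, A, ?_, ?_, by simp, rfl⟩
    · simp only [Multiset.map_cons, Multiset.prod_cons, Function.uncurry_apply_pair]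
      rw [mul_left_comm (p i h), ← mul_assoc (p g j), hpq.p_mul_p g j i h]
      simp only [mul_assoc]
    · simp [add_left_comm]
  · obtain ⟨_, hs, hsg⟩ := exists_mem_apply_pos_of_sum_pos hgA
    obtain ⟨s, hsA, rfl⟩ := Multiset.mem_map.1 hs
    obtain ⟨A, rfl⟩ := Multiset.exists_cons_of_mem hsA
    obtain ⟨s', hs'⟩ := WeakComposition.exists_add_single_eq s hsg i
    refine ⟨L, s' ::ₘ A, ?_, ?_, by simp, by simp⟩
    · simp only [Multiset.map_cons, Multiset.prod_cons, Function.uncurry_apply_pair]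
      rw [mul_mul_mul_comm, hpq.p_mul_q i h g s s' hsg hs', mul_assoc, mul_left_comm (q s')]
    · simp only [leftContent_cons_left, leftContent_cons_right, ← add_assoc]
      rw [← hs', add_comm s'.1]

theorem prod_mul_prod_eq_of_leftContent_eq (hpq : ExchangeRelations p q) {L L' : Multiset (κ × κ')}
    {A A' : Multiset (WeakComposition κ α)} (hleft : leftContent L A = leftContent L' A')
    (hright : L.map Prod.snd = L'.map Prod.snd) (hcard : A.card = A'.card) :
    (L.map (Function.uncurry p)).prod * (A.map q).prod =
      (L'.map (Function.uncurry p)).prod * (A'.map q).prod := by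
  induction L' using Multiset.induction_on generalizing L A with
  | empty =>
    obtain rfl : L = 0 := by simpa using hright
    simp only [hpq.prod_map_eq_of_sum_eq hcard (by simpa [leftContent] using hleft)]
  | cons x L' ih =>
    have hx : 0 < leftContent L A x.1 := by simp [hleft]
    obtain ⟨L₀, A₀, hprod, hleft₀, hright₀, hcard₀⟩ :=
      hpq.exists_prod_map_eq_mul hx (h := x.2) (by simp [hright])
    rw [hprod, ih (L := L₀) (A := A₀), Multiset.map_cons, Multiset.prod_cons, mul_assoc]
    · rfl
    · rw [hleft₀] at hleft
      simpa using hleft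
    · simpa [hright₀] using hright
    · exact hcard₀ ▸ hcard

end ExchangeRelations

theorem leftContent_apply (L : Multiset (κ × κ')) (A : Multiset (WeakComposition κ α)) (g : κ) :
    leftContent L A g = (L.map Prod.fst).count g + (A.map Subtype.val).sum g := by
  induction L using Multiset.induction_on with
  | empty => simp [leftContent]
  | cons x L ih =>
    simp only [leftContent_cons_left, Pi.add_apply, ih, Pi.single_apply, Multiset.map_cons,
      Multiset.count_cons]
    ring

theorem leftContent_map_univ {ι : Type*} [Fintype ι] (f : ι → κ × κ') (x : κ) :
    leftContent (Finset.univ.val.map f) (0 : Multiset (WeakComposition κ α)) x =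
      (Finset.univ.filter fun j => (f j).1 = x).card := by
  rw [leftContent_apply, Multiset.map_map, Multiset.count_map]
  simp [Finset.card, eq_comm]

theorem sum_leftContent (L : Multiset (κ × κ')) (A : Multiset (WeakComposition κ α)) :
    ∑ g, leftContent L A g = L.card + A.card * α := by
  induction L using Multiset.induction_on with
  | empty =>
    induction A using Multiset.induction_on with
    | empty => simp [leftContent]
    | cons s A ih =>
      simp only [leftContent_cons_right, Pi.add_apply, Finset.sum_add_distrib, ih, s.2,
        Multiset.card_cons, Multiset.card_zero]
      ring
  | cons x L ih =>
    simp only [leftContent_cons_left, Pi.add_apply, Finset.sum_add_distrib, ih,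
      Finset.sum_pi_single', Finset.mem_univ, if_true, Multiset.card_cons]
    ring

theorem map_fst_eq_of_leftContent_eq {L L' : Multiset (κ × κ')}
    (h : leftContent L (0 : Multiset (WeakComposition κ α)) =
      leftContent L' (0 : Multiset (WeakComposition κ α))) :
    L.map Prod.fst = L'.map Prod.fst := by
  ext g
  simpa [leftContent_apply] using congrFun h g

theorem WeakComposition.exists_card_filter_eq (s : WeakComposition κ α) :
    ∃ g : Fin α → κ, ∀ x, (Finset.univ.filter fun j => g j = x).card = s.1 x := by
  let e : Fin α ≃ Σ x, Fin (s.1 x) := Fintype.equivOfCardEq (by simp [s.2])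
  refine ⟨fun j => (e j).1, fun x => ?_⟩
  let fiber : {j // (e j).1 = x} ≃ Fin (s.1 x) :=
    (e.subtypeEquiv fun _ => Iff.rfl).trans (Equiv.sigmaSubtype x)
  rw [← Fintype.card_subtype, Fintype.card_congr fiber, Fintype.card_fin]

end Exchange

section ZWMonomial

variable {ℓ k α : ℕ}

/-- The monomial `∏ z_i ^ u_i * ∏ z_{ℓ+g} ^ v_g * ∏ w_i ^ u'_i * ∏ w_{ℓ+g} ^ v'_g` of `ℂ[z, w]`. -/
noncomputable def zwMonomial (u : Fin ℓ → ℕ) (v : Fin k → ℕ) (u' : Fin ℓ → ℕ) (v' : Fin k → ℕ) :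
    PP ℓ k :=
  monomial (Finsupp.equivFunOnFinite.symm (Sum.elim (Sum.elim u v) (Sum.elim u' v'))) 1

theorem zwMonomial_mul (u₁ u₂ : Fin ℓ → ℕ) (v₁ v₂ : Fin k → ℕ) (u₁' u₂' : Fin ℓ → ℕ)
    (v₁' v₂' : Fin k → ℕ) :
    zwMonomial u₁ v₁ u₁' v₁' * zwMonomial u₂ v₂ u₂' v₂' =
      zwMonomial (u₁ + u₂) (v₁ + v₂) (u₁' + u₂') (v₁' + v₂') := by
  rw [zwMonomial, zwMonomial, monomial_mul, mul_one, zwMonomial]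
  refine congrArg (monomial · 1) (Finsupp.ext ?_)
  rintro ((x | x) | (x | x)) <;> rfl

theorem zwMonomial_inj {u₁ u₂ : Fin ℓ → ℕ} {v₁ v₂ : Fin k → ℕ} {u₁' u₂' : Fin ℓ → ℕ}
    {v₁' v₂' : Fin k → ℕ} :
    zwMonomial u₁ v₁ u₁' v₁' = zwMonomial u₂ v₂ u₂' v₂' ↔
      u₁ = u₂ ∧ v₁ = v₂ ∧ u₁' = u₂' ∧ v₁' = v₂' := by
  rw [zwMonomial, zwMonomial, (monomial_left_injective one_ne_zero).eq_iff,
    EmbeddingLike.apply_eq_iff_eq, Sum.elim_eq_iff, Sum.elim_eq_iff, Sum.elim_eq_iff, and_assoc]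

theorem zwMonomial_eq_prod (u : Fin ℓ → ℕ) (v : Fin k → ℕ) (u' : Fin ℓ → ℕ) (v' : Fin k → ℕ) :
    zwMonomial u v u' v' =
      ((∏ i, X (Sum.inl (Sum.inl i)) ^ u i) * ∏ g, X (Sum.inl (Sum.inr g)) ^ v g) *
        ((∏ i, X (Sum.inr (Sum.inl i)) ^ u' i) * ∏ g, X (Sum.inr (Sum.inr g)) ^ v' g) := by
  rw [zwMonomial, monomial_eq, Finsupp.prod_fintype _ _ (by simp)]
  simp [Fintype.prod_sum_type]

variable (m : Fin ℓ → ℕ)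

theorem piMap_Rv (i : Fin ℓ) :
    piMap ℓ k α m (Rv ℓ k α i) = zwMonomial (Pi.single i 1) 0 (Pi.single i 1) 0 := by
  simp [piMap, Rv, zwMonomial_eq_prod, Pi.single_apply]

theorem piMap_Pv (g h : Fin k) :
    piMap ℓ k α m (Pv ℓ k α g h) = zwMonomial 0 (Pi.single g 1) 0 (Pi.single h 1) := by
  simp [piMap, Pv, zwMonomial_eq_prod, Pi.single_apply]

theorem piMap_Qv (s : Expo k α) : piMap ℓ k α m (Qv ℓ k α s) = zwMonomial m s.1 0 0 := by
  simp [piMap, Qv, zwMonomial_eq_prod]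

theorem piMap_Qbv (s : Expo k α) : piMap ℓ k α m (Qbv ℓ k α s) = zwMonomial 0 0 m s.1 := by
  simp [piMap, Qbv, zwMonomial_eq_prod]

theorem exists_piMap_X_eq_monomial (x : Fin ℓ ⊕ ((Fin k × Fin k) ⊕ (Expo k α ⊕ Expo k α))) :
    ∃ e, piMap ℓ k α m (X x) = monomial e 1 := by
  obtain i | ⟨g, h⟩ | s | s := x
  · exact ⟨_, piMap_Rv m i⟩
  · exact ⟨_, piMap_Pv m g h⟩
  · exact ⟨_, piMap_Qv m s⟩
  · exact ⟨_, piMap_Qbv m s⟩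

end ZWMonomial

section Words

variable {ℓ k α : ℕ}

/-- A monomial of the polynomial ring `F`, recorded by the exponents of the `R_i` and the multisets
of indices of its factors `P_{g,h}`, `Q_s` and `Q̄_s`. -/
structure OffShellWord (ℓ k α : ℕ) where
  rDeg : Fin ℓ → ℕ
  p : Multiset (Fin k × Fin k)
  q : Multiset (Expo k α)
  qbar : Multiset (Expo k α)

namespace OffShellWord

/-- The monomial of `F` recorded by a word. -/
noncomputable def toPoly (w : OffShellWord ℓ k α) : FreeP ℓ k α :=
  (∏ i, Rv ℓ k α i ^ w.rDeg i) * (w.p.map (Function.uncurry (Pv ℓ k α))).prod *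
    (w.q.map (Qv ℓ k α)).prod * (w.qbar.map (Qbv ℓ k α)).prod

/-- A word is reduced if it does not involve both a `Q` and a `Q̄`; relation (6) reduces every
word. -/
def IsReduced (w : OffShellWord ℓ k α) : Prop := w.q = 0 ∨ w.qbar = 0

variable (r : Fin ℓ → ℕ) (p : Multiset (Fin k × Fin k)) (q qbar : Multiset (Expo k α))

theorem toPoly_single_add (i : Fin ℓ) :
    toPoly ⟨Pi.single i 1 + r, p, q, qbar⟩ = Rv ℓ k α i * toPoly ⟨r, p, q, qbar⟩ := by
  simp only [toPoly, Pi.add_apply, pow_add, Finset.prod_mul_distrib, Pi.single_apply, pow_ite,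
    pow_one, pow_zero, Finset.prod_ite_eq', Finset.mem_univ, if_true, mul_assoc]

theorem toPoly_cons_p (x : Fin k × Fin k) :
    toPoly ⟨r, x ::ₘ p, q, qbar⟩ = Pv ℓ k α x.1 x.2 * toPoly ⟨r, p, q, qbar⟩ := by
  simp only [toPoly, Multiset.map_cons, Multiset.prod_cons, Function.uncurry]
  ring

theorem toPoly_cons_q (s : Expo k α) :
    toPoly ⟨r, p, s ::ₘ q, qbar⟩ = Qv ℓ k α s * toPoly ⟨r, p, q, qbar⟩ := by
  simp only [toPoly, Multiset.map_cons, Multiset.prod_cons]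
  ring

theorem toPoly_cons_qbar (s : Expo k α) :
    toPoly ⟨r, p, q, s ::ₘ qbar⟩ = Qbv ℓ k α s * toPoly ⟨r, p, q, qbar⟩ := by
  simp only [toPoly, Multiset.map_cons, Multiset.prod_cons]
  ring

theorem toPoly_map_univ {ι : Type*} [Fintype ι] (g h : ι → Fin k) :
    toPoly ⟨r, Finset.univ.val.map fun j => (g j, h j), 0, 0⟩ =
      (∏ i, Rv ℓ k α i ^ r i) * ∏ j, Pv ℓ k α (g j) (h j) := by
  simp only [toPoly, Multiset.map_zero, Multiset.prod_zero, mul_one, Multiset.map_map]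
  rfl

theorem exists_toPoly_eq_monomial (d : Fin ℓ ⊕ ((Fin k × Fin k) ⊕ (Expo k α ⊕ Expo k α)) →₀ ℕ) :
    ∃ w : OffShellWord ℓ k α, w.toPoly = monomial d 1 := by
  classical
  obtain ⟨S, rfl⟩ := Multiset.toFinsupp.surjective d
  induction S using Multiset.induction_on with
  | empty => exact ⟨⟨0, 0, 0, 0⟩, by simp [toPoly]⟩
  | cons x S ih =>
    obtain ⟨⟨r, p, q, qbar⟩, hw⟩ := ih
    have monomial_cons : monomial (Multiset.toFinsupp (x ::ₘ S)) (1 : ℂ) =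
        X x * monomial (Multiset.toFinsupp S) 1 := by
      rw [← Multiset.singleton_add, map_add, Multiset.toFinsupp_singleton, X, monomial_mul, one_mul]
    rw [monomial_cons, ← hw]
    obtain i | x | s | s := x
    · exact ⟨_, toPoly_single_add r p q qbar i⟩
    · exact ⟨_, toPoly_cons_p r p q qbar x⟩
    · exact ⟨_, toPoly_cons_q r p q qbar s⟩
    · exact ⟨_, toPoly_cons_qbar r p q qbar s⟩

theorem piMap_toPoly (m : Fin ℓ → ℕ) :
    piMap ℓ k α m (toPoly ⟨r, p, q, qbar⟩) =
      zwMonomial (r + q.card • m) (leftContent p q)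
        (r + qbar.card • m) (leftContent (p.map Prod.swap) qbar) := by
  induction p using Multiset.induction_on with
  | cons x p ih => simp [toPoly_cons_p, piMap_Pv, ih, zwMonomial_mul]
  | empty =>
  induction q using Multiset.induction_on with
  | cons s q ih =>
    simp [toPoly_cons_q, piMap_Qv, ih, zwMonomial_mul, add_smul, add_left_comm, add_comm]
  | empty =>
  induction qbar using Multiset.induction_on with
  | cons s qbar ih =>
    simp [toPoly_cons_qbar, piMap_Qbv, ih, zwMonomial_mul, add_smul, add_left_comm, add_comm]
  | empty =>
    simp [toPoly, piMap, Rv, zwMonomial_eq_prod, leftContent, mul_pow, Finset.prod_mul_distrib]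

theorem card_eq_of_isReduced {w w' : OffShellWord ℓ k α} (hα : α ≠ 0) (hw : w.IsReduced)
    (hw' : w'.IsReduced) (hleft : leftContent w.p w.q = leftContent w'.p w'.q)
    (hright : leftContent (w.p.map Prod.swap) w.qbar = leftContent (w'.p.map Prod.swap) w'.qbar) :
    w.q.card = w'.q.card ∧ w.qbar.card = w'.qbar.card := by
  have sum_left := congrArg (fun c => ∑ g, c g) hleft
  have sum_right := congrArg (fun c => ∑ g, c g) hright
  simp only [sum_leftContent, Multiset.card_map] at sum_left sum_right
  have cross : (w.q.card + w'.qbar.card) * α = (w'.q.card + w.qbar.card) * α := by lia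
  have cross' := Nat.eq_of_mul_eq_mul_right (Nat.pos_of_ne_zero hα) cross
  obtain hq | hq := hw <;> obtain hq' | hq' := hw' <;>
    simp only [hq, hq', Multiset.card_zero] at cross' ⊢ <;> lia

end OffShellWord

end Words

section Relations

variable {ℓ k α : ℕ} {m : Fin ℓ → ℕ}

theorem rels_subset_ker : rels ℓ k α m ⊆ RingHom.ker (piMap ℓ k α m).toRingHom := by
  have add_single_eq {s s' : Expo k α} {i g : Fin k}
      (hs' : ∀ j, s'.1 j + (if j = i then 1 else 0) = s.1 j + (if j = g then 1 else 0)) :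
      Pi.single g 1 + s.1 = Pi.single i 1 + s'.1 := by
    ext j
    simpa [Pi.single_apply, add_comm] using (hs' j).symm
  rintro f (((((⟨g, h, i, j, -, -, rfl⟩ | ⟨g, h, i, s, s', -, hs', rfl⟩) |
    ⟨g, h, i, s, s', -, hs', rfl⟩) | ⟨s, s', t, t', hst, rfl⟩) | ⟨s, s', t, t', hst, rfl⟩) |
    ⟨s, s', g, h, hg, hh, rfl⟩)
  all_goals
    refine RingHom.sub_mem_ker_iff _ |>.2 ?_
    change piMap ℓ k α m _ = piMap ℓ k α m _
  · simp [piMap_Pv, zwMonomial_mul, add_comm]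
  · simp [piMap_Pv, piMap_Qv, zwMonomial_mul, add_single_eq hs']
  · simp [piMap_Pv, piMap_Qbv, zwMonomial_mul, add_single_eq hs']
  · simp [piMap_Qv, zwMonomial_mul, show s.1 + s'.1 = t.1 + t'.1 from funext hst]
  · simp [piMap_Qbv, zwMonomial_mul, show s.1 + s'.1 = t.1 + t'.1 from funext hst]
  · let p : Multiset (Fin k × Fin k) := Finset.univ.val.map fun j => (g j, h j)
    have left_eq : leftContent p (0 : Multiset (Expo k α)) = s.1 := by
      ext x
      rw [leftContent_map_univ, ← hg]
    have right_eq : leftContent (p.map Prod.swap) (0 : Multiset (Expo k α)) = s'.1 := by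
      ext x
      rw [Multiset.map_map, leftContent_map_univ, ← hh]
      rfl
    rw [← OffShellWord.toPoly_map_univ, OffShellWord.piMap_toPoly, left_eq, right_eq, map_mul,
      piMap_Qv, piMap_Qbv, zwMonomial_mul]
    simp

variable {A : Type*} [CommRing A] {φ : FreeP ℓ k α →+* A}

theorem exchangeRelations_Pv_Qv (hφ : ∀ f ∈ rels ℓ k α m, φ f = 0) :
    ExchangeRelations (fun g h => φ (Pv ℓ k α g h)) (fun s => φ (Qv ℓ k α s)) where
  p_mul_p g h i j := by
    obtain rfl | hgi := eq_or_ne g i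
    · exact mul_comm _ _
    obtain rfl | hhj := eq_or_ne h j
    · rfl
    have := hφ _ (.inl <| .inl <| .inl <| .inl <| .inl ⟨g, h, i, j, hgi, hhj, rfl⟩)
    simpa [sub_eq_zero] using this
  p_mul_q g h i s s' hi hs' := by
    have hs'_apply (j : Fin k) := congrFun hs' j
    simp only [Pi.add_apply, Pi.single_apply] at hs'_apply
    have := hφ _ (.inl <| .inl <| .inl <| .inl <| .inr ⟨g, h, i, s, s', hi, hs'_apply, rfl⟩)
    simpa [sub_eq_zero] using this
  q_mul_q s s' t t' hst := by
    have := hφ _ (.inl <| .inl <| .inr ⟨s, s', t, t', congrFun hst, rfl⟩)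
    simpa [sub_eq_zero] using this

theorem exchangeRelations_Pv_Qbv (hφ : ∀ f ∈ rels ℓ k α m, φ f = 0) :
    ExchangeRelations (fun h g => φ (Pv ℓ k α g h)) (fun s => φ (Qbv ℓ k α s)) where
  p_mul_p h g j i := by
    rw [(exchangeRelations_Pv_Qv hφ).p_mul_p, mul_comm]
  p_mul_q h g i s s' hi hs' := by
    have hs'_apply (j : Fin k) := congrFun hs' j
    simp only [Pi.add_apply, Pi.single_apply] at hs'_apply
    have := hφ _ (.inl <| .inl <| .inl <| .inr ⟨g, h, i, s, s', hi, hs'_apply, rfl⟩)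
    simpa [sub_eq_zero] using this
  q_mul_q s s' t t' hst := by
    have := hφ _ (.inl <| .inr ⟨s, s', t, t', congrFun hst, rfl⟩)
    simpa [sub_eq_zero] using this

theorem exists_map_Qv_mul_Qbv_eq (hφ : ∀ f ∈ rels ℓ k α m, φ f = 0) (s s' : Expo k α) :
    ∃ L, φ (Qv ℓ k α s * Qbv ℓ k α s') = φ (OffShellWord.toPoly ⟨m, L, 0, 0⟩) := by
  obtain ⟨g, hg⟩ := WeakComposition.exists_card_filter_eq s
  obtain ⟨h, hh⟩ := WeakComposition.exists_card_filter_eq s'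
  have hrel := hφ _ (.inr ⟨s, s', g, h, hg, hh, rfl⟩)
  rw [map_sub, sub_eq_zero, ← OffShellWord.toPoly_map_univ] at hrel
  exact ⟨_, hrel.symm⟩

namespace OffShellWord

theorem exists_isReduced_map_toPoly_eq (hφ : ∀ f ∈ rels ℓ k α m, φ f = 0)
    (w : OffShellWord ℓ k α) :
    ∃ w' : OffShellWord ℓ k α, w'.IsReduced ∧ φ w'.toPoly = φ w.toPoly := by
  obtain ⟨r, p, q, qbar⟩ := w
  induction q using Multiset.induction_on generalizing r p qbar with
  | empty => exact ⟨_, Or.inl rfl, rfl⟩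
  | cons s q ih =>
    obtain rfl | ⟨s', hs'⟩ := qbar.empty_or_exists_mem
    · exact ⟨_, Or.inr rfl, rfl⟩
    obtain ⟨qbar, rfl⟩ := Multiset.exists_cons_of_mem hs'
    obtain ⟨L, hL⟩ := exists_map_Qv_mul_Qbv_eq hφ s s'
    obtain ⟨w', hw', hw'_eq⟩ := ih (r + m) (p + L) qbar
    refine ⟨w', hw', hw'_eq.trans ?_⟩
    have toPoly_add : toPoly ⟨r + m, p + L, q, qbar⟩ =
        toPoly ⟨r, p, q, qbar⟩ * toPoly ⟨m, L, 0, 0⟩ := by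
      simp only [toPoly, Pi.add_apply, pow_add, Finset.prod_mul_distrib, Multiset.map_add,
        Multiset.prod_add, Multiset.map_zero, Multiset.prod_zero, mul_one]
      ring
    rw [toPoly_add, map_mul, ← hL, ← map_mul, toPoly_cons_q, toPoly_cons_qbar,
      mul_comm (toPoly _), mul_assoc]

theorem map_toPoly (w : OffShellWord ℓ k α) :
    φ w.toPoly = φ (∏ i, Rv ℓ k α i ^ w.rDeg i) *
      (w.p.map (Function.uncurry fun g h => φ (Pv ℓ k α g h))).prod *
      (w.q.map fun s => φ (Qv ℓ k α s)).prod * (w.qbar.map fun s => φ (Qbv ℓ k α s)).prod := by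
  simp only [toPoly, map_mul, map_multiset_prod, Multiset.map_map]
  rfl

theorem map_toPoly_eq_of_piMap_eq (hα : α ≠ 0) (hφ : ∀ f ∈ rels ℓ k α m, φ f = 0)
    {w w' : OffShellWord ℓ k α} (hw : w.IsReduced) (hw' : w'.IsReduced)
    (hpi : piMap ℓ k α m w.toPoly = piMap ℓ k α m w'.toPoly) : φ w.toPoly = φ w'.toPoly := by
  obtain ⟨hr, hleft, -, hright⟩ := zwMonomial_inj.1
    ((piMap_toPoly _ _ _ _ m).symm.trans (hpi.trans (piMap_toPoly _ _ _ _ m)))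
  obtain ⟨hq_card, hqbar_card⟩ := card_eq_of_isReduced hα hw hw' hleft hright
  have hrDeg : w.rDeg = w'.rDeg := by simpa [hq_card] using hr
  rw [map_toPoly, map_toPoly, hrDeg]
  obtain hq | hqbar := hw
  · have hq' : w'.q = 0 := by simpa [hq] using hq_card.symm
    have hfst : w.p.map Prod.fst = w'.p.map Prod.fst := by
      rw [hq, hq'] at hleft
      exact map_fst_eq_of_leftContent_eq hleft
    have hprod := (exchangeRelations_Pv_Qbv hφ).prod_mul_prod_eq_of_leftContent_eq hright
      (by simpa [Multiset.map_map] using hfst) hqbar_card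
    have uncurry_comp_swap : (Function.uncurry fun h g => φ (Pv ℓ k α g h)) ∘ Prod.swap =
        Function.uncurry fun g h => φ (Pv ℓ k α g h) := rfl
    rw [Multiset.map_map, Multiset.map_map, uncurry_comp_swap] at hprod
    simpa only [hq, hq', Multiset.map_zero, Multiset.prod_zero, mul_one, mul_assoc]
      using congrArg _ hprod
  · have hqbar' : w'.qbar = 0 := by simpa [hqbar] using hqbar_card.symm
    have hsnd : w.p.map Prod.snd = w'.p.map Prod.snd := by
      rw [hqbar, hqbar'] at hright
      simpa [Multiset.map_map] using map_fst_eq_of_leftContent_eq hright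
    have hprod := (exchangeRelations_Pv_Qv hφ).prod_mul_prod_eq_of_leftContent_eq hleft hsnd hq_card
    simp only [hqbar, hqbar', mul_assoc, hprod]

end OffShellWord

end Relations

theorem monomial_sub_monomial_mem_span_rels {ℓ k α : ℕ} {m : Fin ℓ → ℕ} (hα : α ≠ 0)
    {d d' : Fin ℓ ⊕ ((Fin k × Fin k) ⊕ (Expo k α ⊕ Expo k α)) →₀ ℕ}
    (hpi : piMap ℓ k α m (monomial d 1) = piMap ℓ k α m (monomial d' 1)) :
    monomial d 1 - monomial d' 1 ∈ Ideal.span (rels ℓ k α m) := by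
  have rels_eq_zero : ∀ f ∈ rels ℓ k α m, Ideal.Quotient.mk (Ideal.span (rels ℓ k α m)) f = 0 :=
    fun f hf => Ideal.Quotient.eq_zero_iff_mem.2 (Ideal.subset_span hf)
  have piMap_eq {f f' : FreeP ℓ k α} (h : Ideal.Quotient.mk (Ideal.span (rels ℓ k α m)) f =
      Ideal.Quotient.mk (Ideal.span (rels ℓ k α m)) f') : piMap ℓ k α m f = piMap ℓ k α m f' :=
    (RingHom.sub_mem_ker_iff (piMap ℓ k α m).toRingHom).1
      (Ideal.span_le.2 rels_subset_ker (Ideal.Quotient.eq.1 h))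
  obtain ⟨v, hv⟩ := OffShellWord.exists_toPoly_eq_monomial d
  obtain ⟨v', hv'⟩ := OffShellWord.exists_toPoly_eq_monomial d'
  obtain ⟨w, hw, hwv⟩ := v.exists_isReduced_map_toPoly_eq rels_eq_zero
  obtain ⟨w', hw', hwv'⟩ := v'.exists_isReduced_map_toPoly_eq rels_eq_zero
  rw [← hv, ← hv'] at hpi ⊢
  rw [← Ideal.Quotient.eq, ← hwv, ← hwv']
  refine OffShellWord.map_toPoly_eq_of_piMap_eq hα rels_eq_zero hw hw' ?_
  rw [piMap_eq hwv, piMap_eq hwv', hpi]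

theorem stmt11_general (ℓ k α : ℕ) (m : Fin ℓ → ℕ) (hα : α ≠ 0) :
    RingHom.ker (piMap ℓ k α m).toRingHom = Ideal.span (rels ℓ k α m) := by
  refine le_antisymm ?_ (Ideal.span_le.2 rels_subset_ker)
  exact ker_le_of_monomial_sub_mem (exists_piMap_X_eq_monomial m) fun _ _ =>
    monomial_sub_monomial_mem_span_rels hα

/-- for a faithful Type I_k weight matrix, the kernel of `π` is
exactly the ideal generated by the six families of off-shell relations. -/
theorem stmt11 (ℓ k : ℕ) (hℓ : 1 ≤ ℓ) (hk : 1 ≤ k)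
    (a n : Fin ℓ → ℕ)
    (ha : ∀ i, 0 < a i) (hn : ∀ i, 0 < n i)
    (hF1 : ∀ i j, i ≠ j → Nat.gcd (a i) (a j) = 1)
    (hF2 : ∀ i, Nat.gcd (a i) (n i) = 1) :
    let α : ℕ := Finset.univ.lcm a
    let m : Fin ℓ → ℕ := fun i => n i * α / a i
    RingHom.ker (piMap ℓ k α m).toRingHom = Ideal.span (rels ℓ k α m) := by
  have hα : Finset.univ.lcm a ≠ 0 := by simpa [Finset.lcm_eq_zero_iff] using fun i => (ha i).ne'
  exact stmt11_general _ _ _ _ hα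
end

section
/- Assume Type I_k (c_1 = ⋯ = c_k = 1) and the faithfulness condition (F). Suppose given real numbers ρ_i ≥ 0 (i = 1,…,ℓ), complex numbers π_{g,h} (1 ≤ g,h ≤ k) with π_{h,g} = conj(π_{g,h}) and π_{g,g} real and ≥ 0, and complex numbers κ_s (one for each s ∈ ℕ^k with |s| = α), satisfying: (i) a_i ρ_i = n_i Σ_{g=1}^k π_{g,g} for every i; (ii) π_{g,h}π_{i,j} = π_{g,j}π_{i,h} for all g,h,i,j; (iii) π_{g,h}κ_s = π_{i,h}κ_{s+e_g−e_i} whenever s_i ≥ 1; (iv) κ_sκ_{s′} = κ_tκ_{t′} whenever s + s′ = t + t′; (v) (∏_{i=1}^ℓ ρ_i^{m_i})(∏_{j=1}^α π_{g_j,h_j}) = κ_s·conj(κ_{s′}) whenever the list (g_1,…,g_α) contains each g exactly s_g times and (h_1,…,h_α) contains each h exactly s′_h times. Then there exists a point z = (z_1,…,z_n) ∈ Z_A (n = ℓ+k) such that z_i·conj(z_i) = ρ_i for i ≤ ℓ, z_{ℓ+g}·conj(z_{ℓ+h}) = π_{g,h} for all g,h, and (∏_{i=1}^ℓ z_i^{m_i})(∏_{g=1}^k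 z_{ℓ+g}^{s_g}) = κ_s for every s. -/
/-!
A Hermitian matrix with nonnegative diagonal and vanishing `2 × 2` minors has the form
`π g h = w g * conj (w h)`. Put `z₁ i = √(ρ i)` and let `u s` be the value at `(z₁, w)` of the
monomial that is to equal `κ s`. Relation (v) then reads `κ s * conj (κ s') = u s * conj (u s')`,
so `κ = c • u` for a single phase `c`. Since every monomial `u s` has the same degree `α ≠ 0` in
`w`, rotating `w` by an `α`-th root of `c` turns `u` into `κ` and leaves `π` unchanged.
-/

open Complex ComplexConjugate

section RankOne

variable {𝕜 τ : Type*} [RCLike 𝕜]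

theorem eq_zero_of_minors_eq_zero_of_diag_eq_zero {M : τ → τ → 𝕜}
    (hherm : ∀ g h, M h g = conj (M g h))
    (hminor : ∀ g h i j, M g h * M i j = M g j * M i h)
    (hdiag : ∀ g, M g g = 0) (g h : τ) : M g h = 0 := by
  have hnorm : M g h * conj (M g h) = 0 := by
    rw [← hherm, hminor, hdiag, zero_mul]
  simpa using hnorm

theorem exists_mul_conj_eq_of_minors_eq_zero {M : τ → τ → 𝕜}
    (hherm : ∀ g h, M h g = conj (M g h))
    (hdiag : ∀ g, 0 ≤ RCLike.re (M g g))
    (hminor : ∀ g h i j, M g h * M i j = M g j * M i h) :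
    ∃ w : τ → 𝕜, ∀ g h, w g * conj (w h) = M g h := by
  by_cases hzero : ∀ g, M g g = 0
  · exact ⟨0, fun g h => by
      simp [eq_zero_of_minors_eq_zero_of_diag_eq_zero hherm hminor hzero g h]⟩
  obtain ⟨g₀, hg₀⟩ := not_forall.mp hzero
  set r : ℝ := √(RCLike.re (M g₀ g₀))
  have hr : (r : 𝕜) * r = M g₀ g₀ := by
    rw [← RCLike.ofReal_mul, Real.mul_self_sqrt (hdiag g₀)]
    exact RCLike.conj_eq_iff_re.mp (hherm g₀ g₀).symm
  refine ⟨fun g => M g g₀ / r, fun g h => ?_⟩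
  calc M g g₀ / r * conj (M h g₀ / r)
      = M g g₀ * M g₀ h / (r * r) := by
        rw [map_div₀, RCLike.conj_ofReal, ← hherm h g₀, div_mul_div_comm]
    _ = M g h := by
        rw [hr, hminor g g₀ g₀ h, mul_div_cancel_right₀ _ hg₀]

end RankOne

theorem exists_norm_eq_one_forall_eq_mul {𝕜 σ : Type*} [RCLike 𝕜] {κ u : σ → 𝕜}
    (h : ∀ s t, κ s * conj (κ t) = u s * conj (u t)) :
    ∃ c : 𝕜, ‖c‖ = 1 ∧ ∀ s, κ s = c * u s := by
  have hnorm (s : σ) : ‖κ s‖ = ‖u s‖ := by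
    simpa [← sq] using congrArg norm (h s s)
  by_cases hzero : ∀ s, u s = 0
  · exact ⟨1, norm_one, fun s => by simpa [hzero s] using hnorm s⟩
  obtain ⟨t, ht⟩ := not_forall.mp hzero
  have hκt : conj (κ t) ≠ 0 := by
    rwa [map_ne_zero, ← norm_ne_zero_iff, hnorm, norm_ne_zero_iff]
  refine ⟨κ t / u t, by rw [norm_div, hnorm, div_self (norm_ne_zero_iff.mpr ht)], fun s => ?_⟩
  apply mul_right_cancel₀ hκt
  calc κ s * conj (κ t) = u s * (u t * conj (u t)) / u t := by rw [h]; field_simp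
    _ = κ t / u t * u s * conj (κ t) := by rw [← h]; ring

theorem exists_norm_eq_one_pow_eq {c : ℂ} (hc : ‖c‖ = 1) {α : ℕ} (hα : α ≠ 0) :
    ∃ v : ℂ, ‖v‖ = 1 ∧ v ^ α = c := by
  obtain ⟨v, hv⟩ := IsAlgClosed.exists_pow_nat_eq c hα.pos
  refine ⟨v, ?_, hv⟩
  rwa [← pow_eq_one_iff_of_nonneg (norm_nonneg v) hα, ← norm_pow, hv]

section Monomials

variable {ι σ τ : Type*} [Fintype ι] [Fintype σ] [Fintype τ]

theorem prod_mul_pow_eq_pow_mul_prod {R : Type*} [CommMonoid R] {α : ℕ} {s : τ → ℕ}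
    (hs : ∑ x, s x = α) (v : R) (w : τ → R) :
    ∏ x, (v * w x) ^ s x = v ^ α * ∏ x, w x ^ s x := by
  simp only [mul_pow, Finset.prod_mul_distrib, Finset.prod_pow_eq_pow_sum, hs]

variable [DecidableEq τ]

theorem exists_fun_fiber_card_eq {α : ℕ} {s : τ → ℕ} (hs : ∑ x, s x = α) :
    ∃ g : Fin α → τ, ∀ x, (Finset.univ.filter fun j => g j = x).card = s x := by
  let e : Fin α ≃ Σ x, Fin (s x) := (Fintype.equivFinOfCardEq (by simp [hs])).symm
  refine ⟨fun j => (e j).1, fun x => ?_⟩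
  rw [Finset.card_filter, e.sum_comp fun p => if p.1 = x then 1 else 0, Fintype.sum_sigma]
  simp [apply_ite Finset.card]

theorem prod_comp_eq_prod_pow {R : Type*} [CommMonoid R] {g : σ → τ} {s : τ → ℕ}
    (hg : ∀ x, (Finset.univ.filter fun j => g j = x).card = s x) (f : τ → R) :
    ∏ j, f (g j) = ∏ x, f x ^ s x := by
  simp only [← hg, ← Finset.prod_const, Finset.prod_fiberwise']

theorem prod_pow_mul_prod_eq_mul_conj {𝕜 : Type*} [RCLike 𝕜] {m : ι → ℕ} {ρ z : ι → 𝕜}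
    {M : τ → τ → 𝕜} {w : τ → 𝕜}
    (hz : ∀ i, z i * conj (z i) = ρ i) (hw : ∀ g h, w g * conj (w h) = M g h)
    {s t : τ → ℕ} {g h : σ → τ}
    (hg : ∀ x, (Finset.univ.filter fun j => g j = x).card = s x)
    (hh : ∀ x, (Finset.univ.filter fun j => h j = x).card = t x) :
    (∏ i, ρ i ^ m i) * ∏ j, M (g j) (h j) =
      ((∏ i, z i ^ m i) * ∏ x, w x ^ s x) * conj ((∏ i, z i ^ m i) * ∏ x, w x ^ t x) := by
  simp only [← hz, ← hw, mul_pow, Finset.prod_mul_distrib, ← prod_comp_eq_prod_pow hg,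
    ← prod_comp_eq_prod_pow hh, map_mul, map_prod, map_pow]
  ring

end Monomials

theorem shell_equation_of_mul_conj_eq {τ : Type*} [Fintype τ] {a n ρ : ℝ} {z : ℂ}
    {M : τ → τ → ℂ} {w : τ → ℂ} (hz : z * conj z = ρ) (hw : ∀ g h, w g * conj (w h) = M g h)
    (h : (a : ℂ) * ρ = n * ∑ g, M g g) :
    -a * normSq z + n * ∑ g, normSq (w g) = 0 := by
  rw [← hz] at h
  simp only [← hw, mul_conj] at h
  have hreal : a * normSq z = n * ∑ g, normSq (w g) := by exact_mod_cast h
  rw [← hreal]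
  ring

theorem stmt12_general {ι τ : Type*} [Fintype ι] [Fintype τ] [DecidableEq τ]
    {α : ℕ} (hα : α ≠ 0) (m : ι → ℕ) (a n ρ : ι → ℝ) (πm : τ → τ → ℂ)
    (κ : {s : τ → ℕ // ∑ g, s g = α} → ℂ)
    (hρ : ∀ i, 0 ≤ ρ i)
    (hherm : ∀ g h, πm h g = conj (πm g h))
    (hdiag : ∀ g, 0 ≤ (πm g g).re)
    (hshell : ∀ i, (a i : ℂ) * (ρ i : ℂ) = (n i : ℂ) * ∑ g, πm g g)
    (hminor : ∀ g h i j, πm g h * πm i j = πm g j * πm i h)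
    (hκ : ∀ (s s' : {s : τ → ℕ // ∑ g, s g = α}) (g h : Fin α → τ),
      (∀ x, (Finset.univ.filter fun j => g j = x).card = s.1 x) →
      (∀ x, (Finset.univ.filter fun j => h j = x).card = s'.1 x) →
      (∏ i, (ρ i : ℂ) ^ m i) * ∏ j, πm (g j) (h j) = κ s * conj (κ s')) :
    ∃ (z₁ : ι → ℂ) (z₂ : τ → ℂ),
      (∀ i, -a i * normSq (z₁ i) + n i * ∑ g, normSq (z₂ g) = 0) ∧
      (∀ i, z₁ i * conj (z₁ i) = (ρ i : ℂ)) ∧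
      (∀ g h, z₂ g * conj (z₂ h) = πm g h) ∧
      (∀ s : {s : τ → ℕ // ∑ g, s g = α},
        (∏ i, z₁ i ^ m i) * ∏ g, z₂ g ^ s.1 g = κ s) := by
  let z₁ : ι → ℂ := fun i => (√(ρ i) : ℝ)
  have hz₁ (i : ι) : z₁ i * conj (z₁ i) = ρ i := by
    rw [conj_ofReal, ← ofReal_mul, Real.mul_self_sqrt (hρ i)]
  obtain ⟨w, hw⟩ := exists_mul_conj_eq_of_minors_eq_zero hherm hdiag hminor
  let u (s : {s : τ → ℕ // ∑ g, s g = α}) : ℂ := (∏ i, z₁ i ^ m i) * ∏ g, w g ^ s.1 g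
  have hκu (s t) : κ s * conj (κ t) = u s * conj (u t) := by
    obtain ⟨g, hg⟩ := exists_fun_fiber_card_eq s.2
    obtain ⟨h, hh⟩ := exists_fun_fiber_card_eq t.2
    rw [← hκ s t g h hg hh, prod_pow_mul_prod_eq_mul_conj hz₁ hw hg hh]
  obtain ⟨c, hc, hκc⟩ := exists_norm_eq_one_forall_eq_mul hκu
  obtain ⟨v, hv, rfl⟩ := exists_norm_eq_one_pow_eq hc hα
  have hz₂ (g h : τ) : v * w g * conj (v * w h) = πm g h := by
    rw [map_mul, mul_mul_mul_comm, mul_conj', hv, hw, ofReal_one, one_pow, one_mul]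
  refine ⟨z₁, fun g => v * w g,
    fun i => shell_equation_of_mul_conj_eq (hz₁ i) hz₂ (hshell i), hz₁, hz₂, fun s => ?_⟩
  rw [prod_mul_pow_eq_pow_mul_prod s.2, hκc s, mul_left_comm]

/-- surjectivity of the Hilbert map of a faithful Type I_k torus
representation onto the semialgebraic set cut out by the on-shell relations and the
inequalities `ρ_i ≥ 0`, `π_{g,g} ≥ 0`: any values `ρ_i`, `π_{g,h}`, `κ_s` satisfying the
relations (i)–(v) and these conditions come from a point of the shell `Z_A`. -/
theorem stmt12 (ℓ k : ℕ) (hℓ : 1 ≤ ℓ) (hk : 1 ≤ k)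
    (a n : Fin ℓ → ℕ)
    (ha : ∀ i, 0 < a i) (hn : ∀ i, 0 < n i)
    (hF1 : ∀ i j, i ≠ j → Nat.gcd (a i) (a j) = 1)
    (hF2 : ∀ i, Nat.gcd (a i) (n i) = 1) :
    let α : ℕ := Finset.univ.lcm a
    let m : Fin ℓ → ℕ := fun i => n i * α / a i
    ∀ (ρ : Fin ℓ → ℝ) (πm : Fin k → Fin k → ℂ)
      (κ : {s : Fin k → ℕ // ∑ g, s g = α} → ℂ),
      (∀ i, 0 ≤ ρ i) →
      (∀ g h, πm h g = conj (πm g h)) →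
      (∀ g, (πm g g).im = 0 ∧ 0 ≤ (πm g g).re) →
      -- (i)
      (∀ i, (a i : ℂ) * (ρ i : ℂ) = (n i : ℂ) * ∑ g, πm g g) →
      -- (ii)
      (∀ g h i j, πm g h * πm i j = πm g j * πm i h) →
      -- (iii)
      (∀ (g h i : Fin k) (s s' : {s : Fin k → ℕ // ∑ g, s g = α}),
        1 ≤ s.1 i →
        (∀ j, s'.1 j + (if j = i then 1 else 0) = s.1 j + (if j = g then 1 else 0)) →
        πm g h * κ s = πm i h * κ s') →
      -- (iv)
      (∀ s s' t t' : {s : Fin k → ℕ // ∑ g, s g = α},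
        (∀ j, s.1 j + s'.1 j = t.1 j + t'.1 j) →
        κ s * κ s' = κ t * κ t') →
      -- (v)
      (∀ (s s' : {s : Fin k → ℕ // ∑ g, s g = α}) (g h : Fin α → Fin k),
        (∀ x, (Finset.univ.filter fun j => g j = x).card = s.1 x) →
        (∀ x, (Finset.univ.filter fun j => h j = x).card = s'.1 x) →
        (∏ i, (ρ i : ℂ) ^ m i) * ∏ j, πm (g j) (h j) = κ s * conj (κ s')) →
      -- conclusion: a point of the shell realizing the given values
      ∃ (z₁ : Fin ℓ → ℂ) (z₂ : Fin k → ℂ),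
        (∀ i, -(a i : ℝ) * normSq (z₁ i) + (n i : ℝ) * ∑ g, normSq (z₂ g) = 0) ∧
        (∀ i, z₁ i * conj (z₁ i) = (ρ i : ℂ)) ∧
        (∀ g h, z₂ g * conj (z₂ h) = πm g h) ∧
        (∀ s : {s : Fin k → ℕ // ∑ g, s g = α},
          (∏ i, z₁ i ^ m i) * ∏ g, z₂ g ^ s.1 g = κ s) := by
  intro α m ρ πm κ hρ hherm hdiag hshell hminor _ _ hκ
  exact stmt12_general (by simpa [α, Finset.lcm_eq_zero_iff] using fun i => (ha i).ne') m
    (fun i => a i) (fun i => n i) ρ πm κ hρ hherm (fun g => (hdiag g).2) hshell hminor hκ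
end

section
/- Let R_A = ℝ[p_1,…,p_8]/I_A and R_B = ℝ[q_1,…,q_8]/I_B, where I_A is generated by the 14 polynomials p_1²p_2 − p_4p_3; p_4p_6 − p_2p_8; p_3p_5 − p_2p_7; p_1²p_6 − p_3p_8; p_1²p_5 − p_4p_7; 324p_1p_2³ + 216p_2⁴ + 27p_1p_4p_3 + 162p_2p_4p_3 − 8p_5p_6; 27p_1³p_3 + 324p_1p_2²p_3 + 216p_2³p_3 + 162p_4p_3² − 8p_6p_7; 27p_1³p_4 + 324p_1p_2²p_4 + 216p_2³p_4 + 162p_4²p_3 − 8p_5p_8; 432p_2⁵ − 81p_1²p_4p_3 − 432p_1p_2p_4p_3 − 648p_2²p_4p_3 + 24p_1p_5p_6 − 16p_2p_5p_6; 27p_1⁵ + 162p_1²p_4p_3 + 324p_1p_2p_4p_3 + 216p_2²p_4p_3 − 8p_7p_8; 324p_1p_2²p_3p_6 + 216p_2³p_3p_6 − 8p_6²p_7 + 27p_1p_3²p_8 + 162p_2p_3²p_8; 324p_1p_2²p_4p_5 + 216p_2³p_4p_5 + 27p_1p_4²p_7 + 162p_2p_4²p_7 − 8p_5²p_8; 432p_2⁴p_3p_6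 + 24p_1p_6²p_7 − 16p_2p_6²p_7 − 81p_1²p_3²p_8 − 432p_1p_2p_3²p_8 − 648p_2²p_3²p_8; 432p_2⁴p_4p_5 − 81p_1²p_4²p_7 − 432p_1p_2p_4²p_7 − 648p_2²p_4²p_7 + 24p_1p_5²p_8 − 16p_2p_5²p_8; and I_B is generated by the 14 polynomials 4q_1²q_2 + 24q_1q_2² + 36q_2³ − 9q_3q_4; q_4q_6 − q_2q_8; q_3q_5 − q_2q_7; 4q_1²q_6 + 24q_1q_2q_6 + 36q_2²q_6 − 9q_3q_8; 4q_1²q_5 + 24q_1q_2q_5 + 36q_2²q_5 − 9q_4q_7; 108q_1q_2³ + 216q_2⁴ + 9q_1q_3q_4 − 54q_2q_3q_4 − 4q_5q_6; q_1³q_4 − q_5q_8; q_1³q_3 − q_6q_7; 108q_2⁵ − 9q_1²q_3q_4 + 18q_1q_2q_3q_4 − 27q_2²q_3q_4 + 4q_1q_5q_6 + 16q_2q_5q_6; 4q_1⁵ + 24q_1q_5q_6 + 36q_2q_5q_6 − 9q_7q_8; 108q_1q_2²q_3q_6 + 216q_2³q_3q_6 − 4q_6²q_7 + 9q_1q_3²q_8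 − 54q_2q_3²q_8; 108q_1q_2²q_4q_5 + 216q_2³q_4q_5 + 9q_1q_4²q_7 − 54q_2q_4²q_7 − 4q_5²q_8; 108q_2⁴q_3q_6 + 4q_1q_6²q_7 + 16q_2q_6²q_7 − 9q_1²q_3²q_8 + 18q_1q_2q_3²q_8 − 27q_2²q_3²q_8; 108q_2⁴q_4q_5 − 9q_1²q_4²q_7 + 18q_1q_2q_4²q_7 − 27q_2²q_4²q_7 + 4q_1q_5²q_8 + 16q_2q_5²q_8. Then the assignment Ψ(p_1) = q_1 + 3q_2, Ψ(p_2) = −(3/2)q_2, Ψ(p_3) = q_4, Ψ(p_4) = −(27/8)q_3, Ψ(p_5) = q_6, Ψ(p_6) = −(81/16)q_5, Ψ(p_7) = −(2/3)q_8, Ψ(p_8) = −(729/64)q_7 maps I_A into I_B and induces a degree-preserving isomorphism of graded ℝ-algebras R_A → R_B. -/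
/-!
Over `ℂ`, with `z_i` and `conj z_i` treated as independent coordinates, `Ψ` comes from the
substitution that exchanges the first two coordinate pairs,
`z_1³ ↦ -(2/3) conj(u_2)³`, `z_2 ↦ conj u_1`, `z_3 ↦ -(3/2) u_3`,
`conj(z_1)³ ↦ -(81/16) u_2³`, `conj z_2 ↦ (3/2) u_1`, `conj z_3 ↦ conj u_3`,
under which `z_1 conj(z_1) ↦ (3/2) u_2 conj(u_2)` and the moment map of `A` becomes `3/2` times that
of `B`; the formula for `Ψ(p_1)` is `(3/2) u_1 conj(u_1)` on the zero level of the latter. Being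
linear and invertible on the generators, `Ψ` is a weight-preserving automorphism of the polynomial
ring; writing each relation of one presentation as a combination of relations of the other shows
that it carries `I_A` onto `I_B`, and hence descends to the quotients.
-/

open MvPolynomial

/-- The polynomial ring `ℝ[p_1,…,p_8]`, with `p_i` the variable `X (i-1)`. -/
abbrev P8 := MvPolynomial (Fin 8) ℝ

/-- The weights `deg p_1 = deg p_2 = 2`, `deg p_3 = deg p_4 = 3`,
`deg p_5 = deg p_6 = 4`, `deg p_7 = deg p_8 = 5` (same for the `q_i`). -/
def w8 : Fin 8 → ℕ := ![2, 2, 3, 3, 4, 4, 5, 5]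

set_option maxHeartbeats 2000000 in
/-- The ideal `I_A` of on-shell relations for the weight row `A = (-2,3,6)`,
in the generators `p_1,…,p_8` (as `X 0,…,X 7`). -/
noncomputable def IA : Ideal P8 := Ideal.span
  { X 0 ^ 2 * X 1 - X 3 * X 2,
    X 3 * X 5 - X 1 * X 7,
    X 2 * X 4 - X 1 * X 6,
    X 0 ^ 2 * X 5 - X 2 * X 7,
    X 0 ^ 2 * X 4 - X 3 * X 6,
    324 * X 0 * X 1 ^ 3 + 216 * X 1 ^ 4 + 27 * X 0 * X 3 * X 2
      + 162 * X 1 * X 3 * X 2 - 8 * X 4 * X 5,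
    27 * X 0 ^ 3 * X 2 + 324 * X 0 * X 1 ^ 2 * X 2 + 216 * X 1 ^ 3 * X 2
      + 162 * X 3 * X 2 ^ 2 - 8 * X 5 * X 6,
    27 * X 0 ^ 3 * X 3 + 324 * X 0 * X 1 ^ 2 * X 3 + 216 * X 1 ^ 3 * X 3
      + 162 * X 3 ^ 2 * X 2 - 8 * X 4 * X 7,
    432 * X 1 ^ 5 - 81 * X 0 ^ 2 * X 3 * X 2 - 432 * X 0 * X 1 * X 3 * X 2
      - 648 * X 1 ^ 2 * X 3 * X 2 + 24 * X 0 * X 4 * X 5 - 16 * X 1 * X 4 * X 5,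
    27 * X 0 ^ 5 + 162 * X 0 ^ 2 * X 3 * X 2 + 324 * X 0 * X 1 * X 3 * X 2
      + 216 * X 1 ^ 2 * X 3 * X 2 - 8 * X 6 * X 7,
    324 * X 0 * X 1 ^ 2 * X 2 * X 5 + 216 * X 1 ^ 3 * X 2 * X 5 - 8 * X 5 ^ 2 * X 6
      + 27 * X 0 * X 2 ^ 2 * X 7 + 162 * X 1 * X 2 ^ 2 * X 7,
    324 * X 0 * X 1 ^ 2 * X 3 * X 4 + 216 * X 1 ^ 3 * X 3 * X 4
      + 27 * X 0 * X 3 ^ 2 * X 6 + 162 * X 1 * X 3 ^ 2 * X 6 - 8 * X 4 ^ 2 * X 7,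
    432 * X 1 ^ 4 * X 2 * X 5 + 24 * X 0 * X 5 ^ 2 * X 6 - 16 * X 1 * X 5 ^ 2 * X 6
      - 81 * X 0 ^ 2 * X 2 ^ 2 * X 7 - 432 * X 0 * X 1 * X 2 ^ 2 * X 7
      - 648 * X 1 ^ 2 * X 2 ^ 2 * X 7,
    432 * X 1 ^ 4 * X 3 * X 4 - 81 * X 0 ^ 2 * X 3 ^ 2 * X 6
      - 432 * X 0 * X 1 * X 3 ^ 2 * X 6 - 648 * X 1 ^ 2 * X 3 ^ 2 * X 6
      + 24 * X 0 * X 4 ^ 2 * X 7 - 16 * X 1 * X 4 ^ 2 * X 7 }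

set_option maxHeartbeats 2000000 in
/-- The ideal `I_B` of on-shell relations for the weight row `B = (-3,2,6)`,
in the generators `q_1,…,q_8` (as `X 0,…,X 7`). -/
noncomputable def IB : Ideal P8 := Ideal.span
  { 4 * X 0 ^ 2 * X 1 + 24 * X 0 * X 1 ^ 2 + 36 * X 1 ^ 3 - 9 * X 2 * X 3,
    X 3 * X 5 - X 1 * X 7,
    X 2 * X 4 - X 1 * X 6,
    4 * X 0 ^ 2 * X 5 + 24 * X 0 * X 1 * X 5 + 36 * X 1 ^ 2 * X 5 - 9 * X 2 * X 7,
    4 * X 0 ^ 2 * X 4 + 24 * X 0 * X 1 * X 4 + 36 * X 1 ^ 2 * X 4 - 9 * X 3 * X 6,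
    108 * X 0 * X 1 ^ 3 + 216 * X 1 ^ 4 + 9 * X 0 * X 2 * X 3
      - 54 * X 1 * X 2 * X 3 - 4 * X 4 * X 5,
    X 0 ^ 3 * X 3 - X 4 * X 7,
    X 0 ^ 3 * X 2 - X 5 * X 6,
    108 * X 1 ^ 5 - 9 * X 0 ^ 2 * X 2 * X 3 + 18 * X 0 * X 1 * X 2 * X 3
      - 27 * X 1 ^ 2 * X 2 * X 3 + 4 * X 0 * X 4 * X 5 + 16 * X 1 * X 4 * X 5,
    4 * X 0 ^ 5 + 24 * X 0 * X 4 * X 5 + 36 * X 1 * X 4 * X 5 - 9 * X 6 * X 7,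
    108 * X 0 * X 1 ^ 2 * X 2 * X 5 + 216 * X 1 ^ 3 * X 2 * X 5 - 4 * X 5 ^ 2 * X 6
      + 9 * X 0 * X 2 ^ 2 * X 7 - 54 * X 1 * X 2 ^ 2 * X 7,
    108 * X 0 * X 1 ^ 2 * X 3 * X 4 + 216 * X 1 ^ 3 * X 3 * X 4
      + 9 * X 0 * X 3 ^ 2 * X 6 - 54 * X 1 * X 3 ^ 2 * X 6 - 4 * X 4 ^ 2 * X 7,
    108 * X 1 ^ 4 * X 2 * X 5 + 4 * X 0 * X 5 ^ 2 * X 6 + 16 * X 1 * X 5 ^ 2 * X 6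
      - 9 * X 0 ^ 2 * X 2 ^ 2 * X 7 + 18 * X 0 * X 1 * X 2 ^ 2 * X 7
      - 27 * X 1 ^ 2 * X 2 ^ 2 * X 7,
    108 * X 1 ^ 4 * X 3 * X 4 - 9 * X 0 ^ 2 * X 3 ^ 2 * X 6
      + 18 * X 0 * X 1 * X 3 ^ 2 * X 6 - 27 * X 1 ^ 2 * X 3 ^ 2 * X 6
      + 4 * X 0 * X 4 ^ 2 * X 7 + 16 * X 1 * X 4 ^ 2 * X 7 }

/-- The substitution `Ψ : p_1 ↦ q_1 + 3q_2, p_2 ↦ -(3/2)q_2, p_3 ↦ q_4, p_4 ↦ -(27/8)q_3,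
p_5 ↦ q_6, p_6 ↦ -(81/16)q_5, p_7 ↦ -(2/3)q_8, p_8 ↦ -(729/64)q_7`. -/
noncomputable def PsiMap : P8 →ₐ[ℝ] P8 :=
  aeval ![X 0 + C (3 : ℝ) * X 1, C (-(3 / 2) : ℝ) * X 1, X 3, C (-(27 / 8) : ℝ) * X 2,
          X 5, C (-(81 / 16) : ℝ) * X 4, C (-(2 / 3) : ℝ) * X 7, C (-(729 / 64) : ℝ) * X 6]

section WeightedHomogeneous

variable {σ τ R S M : Type*} [CommSemiring R] [CommSemiring S] [Algebra R S] [AddCommMonoid M]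
  {w : σ → M} {w' : τ → M}

theorem isWeightedHomogeneous_algHom_apply (φ : MvPolynomial σ R →ₐ[R] MvPolynomial τ S)
    (hφ : ∀ i, (φ (X i)).IsWeightedHomogeneous w' (w i)) {f : MvPolynomial σ R} {d : M}
    (hf : f.IsWeightedHomogeneous w d) : (φ f).IsWeightedHomogeneous w' d := by
  rw [aeval_unique φ, aeval_def, eval₂_eq]
  refine .sum _ _ _ fun m hm ↦ .C_mul ?_ _
  rw [← hf (mem_support_iff.mp hm), Finsupp.weight_apply]
  exact .prod _ _ _ fun i _ ↦ (hφ i).pow (m i)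

theorem image_setOf_isWeightedHomogeneous (e : MvPolynomial σ R ≃ₐ[R] MvPolynomial τ R)
    (he : ∀ i, (e (X i)).IsWeightedHomogeneous w' (w i))
    (he_symm : ∀ j, (e.symm (X j)).IsWeightedHomogeneous w (w' j)) (d : M) :
    e '' {f | f.IsWeightedHomogeneous w d} = {f | f.IsWeightedHomogeneous w' d} := by
  refine Set.Subset.antisymm ?_ fun f hf ↦ ⟨e.symm f, ?_, e.apply_symm_apply f⟩
  · rintro _ ⟨f, hf, rfl⟩
    exact isWeightedHomogeneous_algHom_apply e.toAlgHom he hf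
  · exact isWeightedHomogeneous_algHom_apply e.symm.toAlgHom he_symm hf

end WeightedHomogeneous

section Quotient

variable {R A B : Type*} [CommSemiring R] [CommRing A] [CommRing B] [Algebra R A] [Algebra R B]
  {I : Ideal A} {J : Ideal B}

theorem eq_map_of_le_comap_of_le_comap_symm (e : A ≃ₐ[R] B) (h : I ≤ J.comap e)
    (h_symm : J ≤ I.comap e.symm) : J = I.map (e : A →+* B) :=
  le_antisymm (h_symm.trans_eq (Ideal.comap_symm (e : A ≃+* B))) (Ideal.map_le_iff_le_comap.mpr h)

theorem image_quotientEquivAlg_image_mk (e : A ≃ₐ[R] B) (h : J = I.map (e : A →+* B))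
    (s : Set A) :
    Ideal.quotientEquivAlg I J e h '' (Ideal.Quotient.mk I '' s) =
      Ideal.Quotient.mk J '' (e '' s) := by
  simp only [Set.image_image, Ideal.quotientEquivAlg_mk]

end Quotient

section PsiEquiv

/-- The substitution inverse to `PsiMap`: `q_1 ↦ p_1 + 2p_2, q_2 ↦ -(2/3)p_2, q_3 ↦ -(8/27)p_4,
q_4 ↦ p_3, q_5 ↦ -(16/81)p_6, q_6 ↦ p_5, q_7 ↦ -(64/729)p_8, q_8 ↦ -(3/2)p_7`. -/
noncomputable def PsiInvMap : P8 →ₐ[ℝ] P8 :=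
  aeval ![X 0 + C (2 : ℝ) * X 1, C (-(2 / 3) : ℝ) * X 1, C (-(8 / 27) : ℝ) * X 3, X 2,
          C (-(16 / 81) : ℝ) * X 5, X 4, C (-(64 / 729) : ℝ) * X 7, C (-(3 / 2) : ℝ) * X 6]

theorem PsiMap_comp_PsiInvMap : PsiMap.comp PsiInvMap = AlgHom.id ℝ P8 := by
  refine algHom_ext fun i ↦ ?_
  fin_cases i <;>
    simp only [PsiMap, PsiInvMap, AlgHom.comp_apply, AlgHom.id_apply, aeval_X, map_add, map_smul,
      ← smul_eq_C_mul, Fin.zero_eta, Fin.mk_one, Fin.reduceFinMk, Matrix.cons_val] <;>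
    module

theorem PsiInvMap_comp_PsiMap : PsiInvMap.comp PsiMap = AlgHom.id ℝ P8 := by
  refine algHom_ext fun i ↦ ?_
  fin_cases i <;>
    simp only [PsiMap, PsiInvMap, AlgHom.comp_apply, AlgHom.id_apply, aeval_X, map_add, map_smul,
      ← smul_eq_C_mul, Fin.zero_eta, Fin.mk_one, Fin.reduceFinMk, Matrix.cons_val] <;>
    module

/-- `Ψ` as an automorphism of the polynomial ring, before passing to the quotients. -/
noncomputable def psiEquiv : P8 ≃ₐ[ℝ] P8 :=
  AlgEquiv.ofAlgHom PsiMap PsiInvMap PsiMap_comp_PsiInvMap PsiInvMap_comp_PsiMap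

theorem isWeightedHomogeneous_PsiMap_X (i : Fin 8) :
    (PsiMap (X i)).IsWeightedHomogeneous w8 (w8 i) := by
  have hX := isWeightedHomogeneous_X ℝ w8
  rw [PsiMap, aeval_X]
  fin_cases i
  exacts [(hX 0).add ((hX 1).C_mul _), (hX 1).C_mul _, hX 3, (hX 2).C_mul _, hX 5, (hX 4).C_mul _,
    (hX 7).C_mul _, (hX 6).C_mul _]

theorem isWeightedHomogeneous_PsiInvMap_X (i : Fin 8) :
    (PsiInvMap (X i)).IsWeightedHomogeneous w8 (w8 i) := by
  have hX := isWeightedHomogeneous_X ℝ w8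
  rw [PsiInvMap, aeval_X]
  fin_cases i
  exacts [(hX 0).add ((hX 1).C_mul _), (hX 1).C_mul _, (hX 3).C_mul _, hX 2, (hX 5).C_mul _, hX 4,
    (hX 7).C_mul _, (hX 6).C_mul _]

theorem psiEquiv_image_setOf_isWeightedHomogeneous (d : ℕ) :
    psiEquiv '' {f : P8 | f.IsWeightedHomogeneous w8 d} =
      {f : P8 | f.IsWeightedHomogeneous w8 d} :=
  image_setOf_isWeightedHomogeneous psiEquiv isWeightedHomogeneous_PsiMap_X
    isWeightedHomogeneous_PsiInvMap_X d

end PsiEquiv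

section Relations

variable {S : Type*} [CommRing S] [Algebra ℝ S] {φ : P8 →ₐ[ℝ] S}

theorem IA_le_ker_comp_PsiMap (h : IB ≤ RingHom.ker φ) : IA ≤ RingHom.ker (φ.comp PsiMap) := by
  simp only [IA, IB, Ideal.span_le, Set.insert_subset_iff, Set.singleton_subset_iff,
    SetLike.mem_coe, RingHom.mem_ker, AlgHom.comp_apply, PsiMap, map_add, map_sub, map_mul,
    map_pow, map_ofNat, aeval_X, ← smul_eq_C_mul, map_smul, Matrix.cons_val] at h ⊢
  obtain ⟨h₁, h₂, h₃, h₄, h₅, h₆, h₇, h₈, h₉, h₁₀, h₁₁, h₁₂, h₁₃, h₁₄⟩ := h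
  -- As `Ψ` swaps the conjugate pairs `(3, 4), …, (7, 8)` of generators, relations 2 and 3, 4 and 5,
  -- 11 and 12, 13 and 14 trade places; only 7, 8 and 10 need further relations as corrections.
  refine ⟨?_, ?_, ?_, ?_, ?_, ?_, ?_, ?_, ?_, ?_, ?_, ?_, ?_, ?_⟩
  · linear_combination (norm := algebra) (-(3 / 8) : ℝ) • h₁
  · linear_combination (norm := algebra) (2187 / 128 : ℝ) • h₃
  · linear_combination (norm := algebra) h₂
  · linear_combination (norm := algebra) (-(81 / 64) : ℝ) • h₅
  · linear_combination (norm := algebra) (1 / 4 : ℝ) • h₄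
  · linear_combination (norm := algebra) (-(81 / 8) : ℝ) • h₆
  · linear_combination (norm := algebra) 27 * h₇ + (243 / 4 : ℝ) • φ (X 3) * h₁
  · linear_combination (norm := algebra)
      (-(729 / 8) : ℝ) • h₈ - (6561 / 32 : ℝ) • φ (X 2) * h₁
  · linear_combination (norm := algebra) (-(243 / 8) : ℝ) • h₉
  · linear_combination (norm := algebra)
      (27 / 4 : ℝ) • h₁₀ + (405 / 4 : ℝ) • φ (X 0) ^ 2 * h₁
        + (135 / 4 : ℝ) • (φ (X 0) + φ (X 1)) * h₆ - (27 / 4 : ℝ) • h₉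
  · linear_combination (norm := algebra) (-(2187 / 64) : ℝ) • h₁₂
  · linear_combination (norm := algebra) (-(729 / 32) : ℝ) • h₁₁
  · linear_combination (norm := algebra) (-(6561 / 64) : ℝ) • h₁₄
  · linear_combination (norm := algebra) (-(2187 / 32) : ℝ) • h₁₃

theorem IB_le_ker_comp_PsiInvMap (h : IA ≤ RingHom.ker φ) :
    IB ≤ RingHom.ker (φ.comp PsiInvMap) := by
  simp only [IA, IB, Ideal.span_le, Set.insert_subset_iff, Set.singleton_subset_iff,
    SetLike.mem_coe, RingHom.mem_ker, AlgHom.comp_apply, PsiInvMap, map_add, map_sub, map_mul,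
    map_pow, map_ofNat, aeval_X, ← smul_eq_C_mul, map_smul, Matrix.cons_val] at h ⊢
  obtain ⟨h₁, h₂, h₃, h₄, h₅, h₆, h₇, h₈, h₉, h₁₀, h₁₁, h₁₂, h₁₃, h₁₄⟩ := h
  refine ⟨?_, ?_, ?_, ?_, ?_, ?_, ?_, ?_, ?_, ?_, ?_, ?_, ?_, ?_⟩
  · linear_combination (norm := algebra) (-(8 / 3) : ℝ) • h₁
  · linear_combination (norm := algebra) h₃
  · linear_combination (norm := algebra) (128 / 2187 : ℝ) • h₂
  · linear_combination (norm := algebra) 4 * h₅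
  · linear_combination (norm := algebra) (-(64 / 81) : ℝ) • h₄
  · linear_combination (norm := algebra) (-(8 / 81) : ℝ) • h₆
  · linear_combination (norm := algebra) (1 / 27 : ℝ) • h₇ + 6 * φ (X 2) * h₁
  · linear_combination (norm := algebra) (-(8 / 729) : ℝ) • h₈ - (16 / 9 : ℝ) • φ (X 3) * h₁
  · linear_combination (norm := algebra) (-(8 / 243) : ℝ) • h₉
  · linear_combination (norm := algebra)
      (4 / 27 : ℝ) • h₁₀ + (32 / 243 : ℝ) • h₉ + 40 * φ (X 0) * (φ (X 0) + 4 * φ (X 1)) * h₁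
        + (80 / 243 : ℝ) • (3 * φ (X 0) + φ (X 1)) * h₆
  · linear_combination (norm := algebra) (-(32 / 729) : ℝ) • h₁₂
  · linear_combination (norm := algebra) (-(64 / 2187) : ℝ) • h₁₁
  · linear_combination (norm := algebra) (-(32 / 2187) : ℝ) • h₁₄
  · linear_combination (norm := algebra) (-(64 / 6561) : ℝ) • h₁₃

theorem IA_le_comap_PsiMap : IA ≤ IB.comap PsiMap := fun _ hf ↦
  (Ideal.Quotient.eq_zero_iff_mem (I := IB)).mp <|
    IA_le_ker_comp_PsiMap (Ideal.Quotient.mkₐ_ker ℝ IB).ge hf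

theorem IB_le_comap_PsiInvMap : IB ≤ IA.comap PsiInvMap := fun _ hf ↦
  (Ideal.Quotient.eq_zero_iff_mem (I := IA)).mp <|
    IB_le_ker_comp_PsiInvMap (Ideal.Quotient.mkₐ_ker ℝ IA).ge hf

theorem IB_eq_map_psiEquiv : IB = IA.map (psiEquiv : P8 →+* P8) :=
  eq_map_of_le_comap_of_le_comap_symm psiEquiv IA_le_comap_PsiMap IB_le_comap_PsiInvMap

end Relations

/-- `Ψ` maps `I_A` into `I_B` and induces a degree-preserving isomorphism
of graded ℝ-algebras `R_A = ℝ[p]/I_A → R_B = ℝ[q]/I_B`. -/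
theorem stmt16 :
    (∀ f ∈ IA, PsiMap f ∈ IB)
    ∧
    (∃ Φ : (P8 ⧸ IA) ≃ₐ[ℝ] (P8 ⧸ IB),
      (∀ f : P8, Φ (Ideal.Quotient.mk IA f) = Ideal.Quotient.mk IB (PsiMap f))
      ∧
      (∀ d : ℕ,
        Φ '' (Ideal.Quotient.mk IA '' {f : P8 | f.IsWeightedHomogeneous w8 d})
          = Ideal.Quotient.mk IB '' {f : P8 | f.IsWeightedHomogeneous w8 d})) := by
  refine ⟨IA_le_comap_PsiMap, Ideal.quotientEquivAlg IA IB psiEquiv IB_eq_map_psiEquiv,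
    fun _ ↦ rfl, fun d ↦ ?_⟩
  rw [image_quotientEquivAlg_image_mk, psiEquiv_image_setOf_isWeightedHomogeneous]
end
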